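/- Let 𝔐 be an R-regular weight matrix of R-moderate growth containing at least one non-quasianalytic weight sequence, and let d ≥ 1. Then the ring of germs at 0 ∈ ℝ^d of complex-valued E^{𝔐}-functions (Roumieu) has property (D): for every function f defined on an open neighborhood of 0 in ℝ^d and every integer j ≥ 1, if f^j and f^{j+1} are of class E^{𝔐} on some open neighborhood of 0, then f is of class E^{𝔐} on some open neighborhood of 0. -/

import Mathlib

open Filter Set Asymptotics MeasureTheory

noncomputable section

/-- `M` is a weight sequence: `M 0 = 1`, positive, `M 1 ≥ 1`, log-convex and
`M k ^ (1/k) → ∞`. -/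
def IsWeightSeq (M : ℕ → ℝ) : Prop :=
  M 0 = 1 ∧ (∀ k, 0 < M k) ∧ 1 ≤ M 1 ∧
    (∀ k : ℕ, 1 ≤ k → M k ^ 2 ≤ M (k - 1) * M (k + 1)) ∧
    Tendsto (fun k : ℕ => M k ^ (1 / (k : ℝ))) atTop atTop

/-- The sequence `m k = M k / k!`. -/
def mseq (M : ℕ → ℝ) : ℕ → ℝ := fun k => M k / (Nat.factorial k : ℝ)

/-- Log-convexity of a sequence. -/
def LogConvexSeq (m : ℕ → ℝ) : Prop := ∀ k : ℕ, 1 ≤ k → m k ^ 2 ≤ m (k - 1) * m (k + 1)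

/-- `m k ^ (1/k) → ∞`. -/
def RootTendsToInfty (m : ℕ → ℝ) : Prop :=
  Tendsto (fun k : ℕ => m k ^ (1 / (k : ℝ))) atTop atTop

/-- Moderate growth of a sequence. -/
def ModerateGrowth (M : ℕ → ℝ) : Prop :=
  ∃ C : ℝ, 0 < C ∧ ∀ j k : ℕ, M (j + k) ≤ C ^ (j + k) * M j * M k

/-- Derivation closedness of a sequence. -/
def DerivClosed (M : ℕ → ℝ) : Prop :=
  ∃ C : ℝ, 0 < C ∧ ∀ k : ℕ, M (k + 1) ≤ C ^ (k + 1) * M k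

/-- Non-quasianalyticity: `∑_{k≥1} M (k-1) / M k = ∑_{k≥1} 1/μ_k < ∞`. -/
def NonQuasianalytic (M : ℕ → ℝ) : Prop := Summable fun k : ℕ => M k / M (k + 1)

/-- Quasianalyticity: `∑_{k≥1} 1/μ_k = ∞`. -/
def Quasianalytic (M : ℕ → ℝ) : Prop := ¬ NonQuasianalytic M

/-- The associated function `h_m (t) = inf_k m k * t ^ k`. -/
def hFun (m : ℕ → ℝ) (t : ℝ) : ℝ := ⨅ k : ℕ, m k * t ^ k

/-- `Γ̄_m (t) = min {k | h_m t = m k * t ^ k}`. -/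
def GammaBar (m : ℕ → ℝ) (t : ℝ) : ℕ := sInf {k : ℕ | hFun m t = m k * t ^ k}

/-- `Γ̲_m (t) = min {k | m (k+1) / m k ≥ 1 / t}`. -/
def GammaLow (m : ℕ → ℝ) (t : ℝ) : ℕ := sInf {k : ℕ | 1 / t ≤ m (k + 1) / m k}

/-- The set whose supremum is `mg (M, N)`. -/
def mgSet (M N : ℕ → ℝ) : Set ℝ :=
  {x | ∃ j k : ℕ, 1 ≤ j + k ∧ x = (M (j + k) / (N j * N k)) ^ (1 / (j + k : ℝ))}

/-- `mg (M, N) = sup_{j+k ≥ 1} (M (j+k) / (N j * N k)) ^ (1/(j+k))`. -/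
def mg (M N : ℕ → ℝ) : ℝ := sSup (mgSet M N)

/-- `mg (M, N) < ∞`. -/
def MgFinite (M N : ℕ → ℝ) : Prop := BddAbove (mgSet M N)

/-- A weight sequence is regular: `m k ^ (1/k) → ∞`, derivation closed, and
`Γ̄_m (C t) ≤ Γ̲_m t` for some `C ≥ 1`. -/
def RegularWS (M : ℕ → ℝ) : Prop :=
  RootTendsToInfty (mseq M) ∧ DerivClosed M ∧
    ∃ C : ℝ, 1 ≤ C ∧ ∀ t : ℝ, 0 < t → GammaBar (mseq M) (C * t) ≤ GammaLow (mseq M) t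

/-- `f` is of class `E^{M}` (Roumieu) on the open set `U`. -/
def RoumieuOn {E : Type*} [NormedAddCommGroup E] [NormedSpace ℝ E]
    (M : ℕ → ℝ) (f : E → ℂ) (U : Set E) : Prop :=
  ContDiffOn ℝ (⊤ : ℕ∞) f U ∧
    ∀ V : Set E, IsOpen V → IsCompact (closure V) → closure V ⊆ U →
      ∃ C σ : ℝ, 0 < C ∧ 0 < σ ∧
        ∀ x ∈ V, ∀ k : ℕ, ‖iteratedFDerivWithin ℝ k f U x‖ ≤ C * σ ^ k * M k

/-- `f` is of class `E^{(M)}` (Beurling) on the open set `U`. -/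
def BeurlingOn {E : Type*} [NormedAddCommGroup E] [NormedSpace ℝ E]
    (M : ℕ → ℝ) (f : E → ℂ) (U : Set E) : Prop :=
  ContDiffOn ℝ (⊤ : ℕ∞) f U ∧
    ∀ V : Set E, IsOpen V → IsCompact (closure V) → closure V ⊆ U →
      ∀ σ : ℝ, 0 < σ → ∃ C : ℝ, 0 < C ∧
        ∀ x ∈ V, ∀ k : ℕ, ‖iteratedFDerivWithin ℝ k f U x‖ ≤ C * σ ^ k * M k

/-- A weight matrix: a nonempty, pointwise totally ordered family of weight sequences. -/
def IsWeightMatrix (W : Set (ℕ → ℝ)) : Prop :=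
  W.Nonempty ∧ (∀ M ∈ W, IsWeightSeq M) ∧
    ∀ M ∈ W, ∀ N ∈ W, (∀ k, M k ≤ N k) ∨ (∀ k, N k ≤ M k)

/-- R-regularity of a weight matrix. -/
def RRegular (W : Set (ℕ → ℝ)) : Prop :=
  (∀ M ∈ W, RootTendsToInfty (mseq M)) ∧
    (∀ M ∈ W, ∃ N ∈ W, ∃ C : ℝ, 1 ≤ C ∧ ∀ j : ℕ, M (j + 1) ≤ C ^ (j + 1) * N j) ∧
    (∀ M ∈ W, ∃ N ∈ W, ∃ C : ℝ, 1 ≤ C ∧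
      ∀ t : ℝ, 0 < t → GammaBar (mseq N) (C * t) ≤ GammaLow (mseq M) t)

/-- B-regularity of a weight matrix. -/
def BRegular (W : Set (ℕ → ℝ)) : Prop :=
  (∀ M ∈ W, RootTendsToInfty (mseq M)) ∧
    (∀ M ∈ W, ∃ N ∈ W, ∃ C : ℝ, 1 ≤ C ∧ ∀ j : ℕ, N (j + 1) ≤ C ^ j * M j) ∧
    (∀ M ∈ W, ∃ N ∈ W, ∃ C : ℝ, 1 ≤ C ∧
      ∀ t : ℝ, 0 < t → GammaBar (mseq M) (C * t) ≤ GammaLow (mseq N) t)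

/-- R-moderate growth of a weight matrix. -/
def RModerateGrowth (W : Set (ℕ → ℝ)) : Prop := ∀ M ∈ W, ∃ N ∈ W, MgFinite M N

/-- B-moderate growth of a weight matrix. -/
def BModerateGrowth (W : Set (ℕ → ℝ)) : Prop := ∀ M ∈ W, ∃ N ∈ W, MgFinite N M

/-- `f` is of class `E^{W}` (Roumieu, weight matrix) on the open set `U`. -/
def MatrixRoumieuOn {E : Type*} [NormedAddCommGroup E] [NormedSpace ℝ E]
    (W : Set (ℕ → ℝ)) (f : E → ℂ) (U : Set E) : Prop :=
  ContDiffOn ℝ (⊤ : ℕ∞) f U ∧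
    ∀ V : Set E, IsOpen V → IsCompact (closure V) → closure V ⊆ U →
      ∃ M ∈ W, ∃ C σ : ℝ, 0 < C ∧ 0 < σ ∧
        ∀ x ∈ V, ∀ k : ℕ, ‖iteratedFDerivWithin ℝ k f U x‖ ≤ C * σ ^ k * M k

/-- `f` is of class `E^{(W)}` (Beurling, weight matrix) on the open set `U`. -/
def MatrixBeurlingOn {E : Type*} [NormedAddCommGroup E] [NormedSpace ℝ E]
    (W : Set (ℕ → ℝ)) (f : E → ℂ) (U : Set E) : Prop :=
  ContDiffOn ℝ (⊤ : ℕ∞) f U ∧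
    ∀ V : Set E, IsOpen V → IsCompact (closure V) → closure V ⊆ U →
      ∀ M ∈ W, ∀ σ : ℝ, 0 < σ → ∃ C : ℝ, 0 < C ∧
        ∀ x ∈ V, ∀ k : ℕ, ‖iteratedFDerivWithin ℝ k f U x‖ ≤ C * σ ^ k * M k

/-- `ω` is a weight function. -/
def IsWeightFunction (ω : ℝ → ℝ) : Prop :=
  ContinuousOn ω (Ici 0) ∧ MonotoneOn ω (Ici 0) ∧ (∀ t ∈ Ici (0 : ℝ), 0 ≤ ω t) ∧
    ((fun t => ω (2 * t)) =O[atTop] ω) ∧ (ω =o[atTop] fun t : ℝ => t) ∧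
    ((fun t => Real.log t) =o[atTop] ω) ∧ ConvexOn ℝ (Ici 0) fun t => ω (Real.exp t)

/-- The Young conjugate `φ*_ω (s) = sup_{t ≥ 0} (s t - ω (e^t))`. -/
def phiStar (ω : ℝ → ℝ) (s : ℝ) : ℝ := sSup ((fun t => s * t - ω (Real.exp t)) '' Ici 0)

/-- Non-quasianalyticity of a weight function. -/
def NonQuasianalyticW (ω : ℝ → ℝ) : Prop := IntegrableOn (fun t => ω t / t ^ 2) (Ici 1)

/-- `f` is of class `E^{ω}` (Roumieu) on the open set `U`. -/
def OmegaRoumieuOn {E : Type*} [NormedAddCommGroup E] [NormedSpace ℝ E]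
    (ω : ℝ → ℝ) (f : E → ℂ) (U : Set E) : Prop :=
  ContDiffOn ℝ (⊤ : ℕ∞) f U ∧
    ∀ V : Set E, IsOpen V → IsCompact (closure V) → closure V ⊆ U →
      ∃ C ρ : ℝ, 0 < C ∧ 0 < ρ ∧
        ∀ x ∈ V, ∀ k : ℕ,
          ‖iteratedFDerivWithin ℝ k f U x‖ ≤ C * Real.exp (phiStar ω (ρ * k) / ρ)

/-- `f` is of class `E^{(ω)}` (Beurling) on the open set `U`. -/
def OmegaBeurlingOn {E : Type*} [NormedAddCommGroup E] [NormedSpace ℝ E]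
    (ω : ℝ → ℝ) (f : E → ℂ) (U : Set E) : Prop :=
  ContDiffOn ℝ (⊤ : ℕ∞) f U ∧
    ∀ V : Set E, IsOpen V → IsCompact (closure V) → closure V ⊆ U →
      ∀ ρ : ℝ, 0 < ρ → ∃ C : ℝ, 0 < C ∧
        ∀ x ∈ V, ∀ k : ℕ,
          ‖iteratedFDerivWithin ℝ k f U x‖ ≤ C * Real.exp (phiStar ω (ρ * k) / ρ)

/-- The open ellipse `Ω_ε` with vertices `± cosh ε` and co-vertices `± i sinh ε`. -/
def OmegaE (ε : ℝ) : Set ℂ :=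
  {z : ℂ | (z.re / Real.cosh ε) ^ 2 + (z.im / Real.sinh ε) ^ 2 < 1}

/-- The sequence space `Λ^{M}`. -/
def Lambda (M : ℕ → ℝ) : Set (ℕ → ℂ) :=
  {c | ∃ ρ : ℝ, 0 < ρ ∧ ∃ C : ℝ, ∀ k, ‖c k‖ ≤ C * ρ ^ k * M k}

/-- `L(M)`: all non-quasianalytic weight sequences `N ≥ M` with `n = N/k!` log-convex. -/
def LM (M : ℕ → ℝ) : Set (ℕ → ℝ) :=
  {N | IsWeightSeq N ∧ NonQuasianalytic N ∧ (∀ k, M k ≤ N k) ∧ LogConvexSeq (mseq N)}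

/-- A quasianalytic weight sequence `M` is intersectable if `Λ^{M} = ⋂_{N ∈ L(M)} Λ^{N}`. -/
def Intersectable (M : ℕ → ℝ) : Prop := Lambda M = ⋂ N ∈ LM M, Lambda N


/-! ### Sequences -/

lemma seq_tendsto {n : ℕ → ℝ} (hn : ∀ k, 0 < n k) (hr : RootTendsToInfty n) {T : ℝ} (hT : 0 < T) :
    Tendsto (fun k => n k * T ^ k) atTop atTop := by
  have h1 := hr.eventually_ge_atTop (2 / T)
  have h2 : Tendsto (fun k : ℕ => (2 : ℝ) ^ k) atTop atTop :=
    tendsto_pow_atTop_atTop_of_one_lt (by norm_num)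
  refine tendsto_atTop_mono' _ ?_ h2
  filter_upwards [h1, eventually_gt_atTop 0] with k hk hk0
  have h3 : (2 / T) ^ k ≤ n k := by
    have := pow_le_pow_left₀ (by positivity) hk k
    rwa [← Real.rpow_natCast, ← Real.rpow_natCast (n k ^ (1 / (k : ℝ))), ← Real.rpow_mul (hn k).le,
      one_div, inv_mul_cancel₀ (by positivity), Real.rpow_one, Real.rpow_natCast] at this
  calc (2 : ℝ) ^ k = (2 / T) ^ k * T ^ k := by rw [← mul_pow]; field_simp
    _ ≤ _ := by gcongr

lemma hFun_le {n : ℕ → ℝ} (hn : ∀ k, 0 < n k) {T : ℝ} (hT : 0 < T) (k : ℕ) :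
    hFun n T ≤ n k * T ^ k := by
  apply ciInf_le
  refine ⟨0, ?_⟩
  rintro _ ⟨k, rfl⟩
  have := hn k
  positivity

lemma exists_min {n : ℕ → ℝ} (hn : ∀ k, 0 < n k) (hr : RootTendsToInfty n) {T : ℝ} (hT : 0 < T) :
    ∃ k, hFun n T = n k * T ^ k := by
  have h := seq_tendsto hn hr hT
  obtain ⟨N, hN⟩ := eventually_atTop.1 (h.eventually_ge_atTop (n 0 * T ^ 0))
  obtain ⟨p, -, hp⟩ := Finset.exists_min_image (Finset.range (N + 1)) (fun k => n k * T ^ k)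
    ⟨0, by simp⟩
  refine ⟨p, le_antisymm (hFun_le hn hT p) (le_ciInf fun k => ?_)⟩
  by_cases hk : k < N + 1
  · exact hp k (by simpa using hk)
  · exact (hp 0 (by simp)).trans (hN k (by omega))

lemma gammaBar_spec {n : ℕ → ℝ} (hn : ∀ k, 0 < n k) (hr : RootTendsToInfty n) {T : ℝ} (hT : 0 < T) :
    hFun n T = n (GammaBar n T) * T ^ (GammaBar n T) :=
  Nat.sInf_mem (s := {k : ℕ | hFun n T = n k * T ^ k}) (exists_min hn hr hT)

lemma gammaBar_lt {n : ℕ → ℝ} (hn : ∀ k, 0 < n k) {T : ℝ} (hT : 0 < T)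
    {k : ℕ} (hk : k < GammaBar n T) : hFun n T < n k * T ^ k := by
  refine lt_of_le_of_ne (hFun_le hn hT k) ?_
  exact Nat.notMem_of_lt_sInf hk

lemma gammaBar_eq {n : ℕ → ℝ} {T : ℝ} {p : ℕ}
    (h1 : ∀ k, n p * T ^ p ≤ n k * T ^ k) (h2 : ∀ k < p, n p * T ^ p < n k * T ^ k) :
    GammaBar n T = p := by
  have hb : BddBelow (Set.range fun k => n k * T ^ k) := ⟨n p * T ^ p, by
    rintro _ ⟨k, rfl⟩; exact h1 k⟩
  have h : hFun n T = n p * T ^ p := le_antisymm (ciInf_le hb p) (le_ciInf h1)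
  refine le_antisymm (Nat.sInf_le h) ?_
  by_contra hlt
  push Not at hlt
  have h3 := Nat.sInf_mem (s := {k : ℕ | hFun n T = n k * T ^ k}) ⟨p, h⟩
  have h4 := h2 _ hlt
  rw [← h] at h4
  exact h4.ne h3

lemma gammaLow_lt {m : ℕ → ℝ} (hm : ∀ k, 0 < m k) {t : ℝ} (ht : 0 < t) {k : ℕ}
    (hk : k < GammaLow m t) : m (k + 1) * t < m k := by
  have h : ¬ (1 / t ≤ m (k + 1) / m k) := Nat.notMem_of_lt_sInf hk
  push Not at h
  rw [div_lt_div_iff₀ (hm k) ht] at h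
  linarith

lemma gammaBar_anti {n : ℕ → ℝ} (hn : ∀ k, 0 < n k) (hr : RootTendsToInfty n) {S T : ℝ}
    (hS : 0 < S) (hST : S ≤ T) : GammaBar n T ≤ GammaBar n S := by
  by_contra hlt
  push Not at hlt
  have hT := hS.trans_le hST
  have h1 := gammaBar_lt hn hT hlt
  rw [gammaBar_spec hn hr hT] at h1
  set p := GammaBar n T
  set q := GammaBar n S with hq
  have h2 : n q * S ^ q ≤ n p * S ^ p := by
    rw [← gammaBar_spec hn hr hS]; exact hFun_le hn hS p
  obtain ⟨e, he⟩ := Nat.exists_eq_add_of_lt hlt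
  rw [he, add_assoc, pow_add] at h1 h2
  have h3 : n (q + (e + 1)) * T ^ (e + 1) < n q := by
    have : 0 < T ^ q := by positivity
    nlinarith
  have h4 : n q ≤ n (q + (e + 1)) * S ^ (e + 1) := by
    have : 0 < S ^ q := by positivity
    by_contra h; push Not at h; nlinarith
  have h5 : S ^ (e + 1) ≤ T ^ (e + 1) := pow_le_pow_left₀ hS.le hST _
  have := hn (q + (e + 1))
  nlinarith

lemma hFun_pos {n : ℕ → ℝ} (hn : ∀ k, 0 < n k) (hr : RootTendsToInfty n) {T : ℝ} (hT : 0 < T) :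
    0 < hFun n T := by
  rw [gammaBar_spec hn hr hT]; have := hn (GammaBar n T); positivity

lemma hFun_mono {n : ℕ → ℝ} (hn : ∀ k, 0 < n k) {S T : ℝ}
    (hS : 0 < S) (hST : S ≤ T) : hFun n S ≤ hFun n T := by
  refine le_ciInf fun k => (hFun_le hn hS k).trans ?_
  have := (hn k).le
  gcongr

/-- The vertex lemma. -/
lemma vertex {m n : ℕ → ℝ} (hm : ∀ k, 0 < m k) (hn : ∀ k, 0 < n k) (h0 : m 0 ≤ n 0)
    (hr : RootTendsToInfty n) {C : ℝ} (hC : 1 ≤ C)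
    (h : ∀ t : ℝ, 0 < t → GammaBar n (C * t) ≤ GammaLow m t) :
    ∀ p : ℕ, ∀ S : ℝ, 0 < S → GammaBar n S = p → m p ≤ C ^ p * n p := by
  intro p
  induction p using Nat.strong_induction_on with
  | _ p ih =>
  intro S hS hp
  rcases Nat.eq_zero_or_pos p with rfl | hp0
  · simpa using h0
  have hlt : ∀ k < p, n p * S ^ p < n k * S ^ k := by
    intro k hk
    have := gammaBar_lt hn hS (hp ▸ hk)
    rwa [gammaBar_spec hn hr hS, hp] at this
  have hle : ∀ k, n p * S ^ p ≤ n k * S ^ k := by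
    intro k
    have := hFun_le hn hS k
    rwa [gammaBar_spec hn hr hS, hp] at this
  let s : ℕ → ℝ := fun k => (n k / n p) ^ (1 / ((p - k : ℕ) : ℝ))
  have hspos : ∀ k, 0 < s k := fun k => Real.rpow_pos_of_pos (div_pos (hn k) (hn p)) _
  have hs : ∀ k < p, n p * (s k) ^ (p - k) = n k := by
    intro k hk
    have : (s k) ^ (p - k) = n k / n p := by
      simp only [s]
      rw [← Real.rpow_natCast, ← Real.rpow_mul (div_pos (hn k) (hn p)).le, one_div,
        inv_mul_cancel₀, Real.rpow_one]
      have : 0 < p - k := by omega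
      positivity
    rw [this]; have := (hn p).ne'; field_simp
  obtain ⟨w, hw, hwmin⟩ := Finset.exists_min_image (Finset.range p) s ⟨0, by simpa using hp0⟩
  have hwp : w < p := by simpa using hw
  set s0 := s w with hs0
  have hs0pos : 0 < s0 := hspos w
  have key : ∀ k < p, ∀ x : ℝ, 0 < x → (x < s k → n p * x ^ p < n k * x ^ k) ∧
      (x ≤ s k → n p * x ^ p ≤ n k * x ^ k) ∧ (s k < x → n k * x ^ k < n p * x ^ p) := by
    intro k hk x hx
    have e : x ^ p = x ^ (p - k) * x ^ k := by rw [← pow_add]; congr 1; omega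
    have hne : p - k ≠ 0 := by omega
    have hxk : 0 < x ^ k := by positivity
    have := hn p
    rw [e, ← hs k hk, ← mul_assoc]
    refine ⟨fun hh => ?_, fun hh => ?_, fun hh => ?_⟩
    · have := pow_lt_pow_left₀ hh hx.le hne
      gcongr
    · have := pow_le_pow_left₀ hx.le hh (p - k)
      gcongr
    · have := pow_lt_pow_left₀ hh (hspos k).le hne
      gcongr
  have hSs0 : S < s0 := by
    by_contra hc
    push Not at hc
    rcases hc.lt_or_eq with hc | hc
    · exact absurd ((key w hwp S hS).2.2 hc) (not_lt.2 (hlt w hwp).le)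
    · have h1 := hlt w hwp
      rw [← hc] at h1
      have := hs w hwp
      have e : s0 ^ p = s0 ^ (p - w) * s0 ^ w := by rw [← pow_add]; congr 1; omega
      rw [e, ← mul_assoc, this] at h1
      exact lt_irrefl _ h1
  have hbig : ∀ x, S ≤ x → ∀ k, p ≤ k → n p * x ^ p ≤ n k * x ^ k := by
    intro x hx k hk
    obtain ⟨e, rfl⟩ := Nat.exists_eq_add_of_le hk
    have hxpos := hS.trans_le hx
    have h1 := hle (p + e)
    rw [pow_add] at h1 ⊢
    have h2 : n p ≤ n (p + e) * S ^ e := by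
      have : 0 < S ^ p := by positivity
      by_contra h; push Not at h; nlinarith
    have h3 : S ^ e ≤ x ^ e := pow_le_pow_left₀ hS.le hx _
    have h4 : n p ≤ n (p + e) * x ^ e := h2.trans (by have := (hn (p+e)).le; gcongr)
    have : 0 < x ^ p := by positivity
    nlinarith
  have hatt : hFun n s0 = n p * s0 ^ p := by
    refine le_antisymm (hFun_le hn hs0pos p) (le_ciInf fun k => ?_)
    rcases lt_or_ge k p with hk | hk
    · exact (key k hk s0 hs0pos).2.1 (hwmin k (by simpa using hk))
    · exact hbig s0 hSs0.le k hk
  have hw' : hFun n s0 = n w * s0 ^ w := by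
    rw [hatt]
    have e : s0 ^ p = s0 ^ (p - w) * s0 ^ w := by rw [← pow_add]; congr 1; omega
    rw [e, ← mul_assoc, hs w hwp]
  have hvw : GammaBar n s0 ≤ w := Nat.sInf_le hw'
  set v := GammaBar n s0 with hv
  have hvp : v < p := by omega
  have ihv := ih v hvp s0 hs0pos hv.symm
  have hvatt : n v * s0 ^ v = n p * s0 ^ p := by rw [← hatt, hv, ← gammaBar_spec hn hr hs0pos]
  have hratio : ∀ k < p, m (k + 1) * s0 ≤ C * m k := by
    intro k hk
    have hx : ∀ x, S ≤ x → x < s0 → m (k + 1) * x ≤ C * m k := by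
      intro x hSx hxs
      have hxpos := hS.trans_le hSx
      have hC0 : 0 < C := by linarith
      have hG : GammaBar n x = p := by
        refine gammaBar_eq ?_ ?_
        · intro i
          rcases lt_or_ge i p with hi | hi
          · exact ((key i hi x hxpos).1 (hxs.trans_le (hwmin i (by simpa using hi)))).le
          · exact hbig x hSx i hi
        · intro i hi
          exact (key i hi x hxpos).1 (hxs.trans_le (hwmin i (by simpa using hi)))
      have := h (x / C) (by positivity)
      rw [mul_div_cancel₀ _ hC0.ne', hG] at this
      have := gammaLow_lt hm (t := x / C) (by positivity) (hk.trans_le this)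
      rw [mul_div_assoc', div_lt_iff₀ hC0] at this
      linarith
    have hcont : ContinuousWithinAt (fun x => m (k + 1) * x) (Ioo S s0) s0 := by fun_prop
    have hcl : s0 ∈ closure (Ioo S s0) := by
      rw [closure_Ioo hSs0.ne]; exact ⟨hSs0.le, le_rfl⟩
    have := mem_closure_iff_nhdsWithin_neBot.1 hcl
    refine le_of_tendsto hcont ?_
    filter_upwards [self_mem_nhdsWithin] with x hx'
    exact hx x hx'.1.le hx'.2
  have hchain : ∀ e, v + e ≤ p → m (v + e) * s0 ^ e ≤ C ^ e * m v := by
    intro e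
    induction e with
    | zero => intro _; simp
    | succ e ihe =>
      intro he
      have h1 := ihe (by omega)
      have h2 := hratio (v + e) (by omega)
      calc m (v + (e + 1)) * s0 ^ (e + 1) = (m (v + e + 1) * s0) * s0 ^ e := by rw [pow_succ]; ring_nf
        _ ≤ (C * m (v + e)) * s0 ^ e := by gcongr
        _ = C * (m (v + e) * s0 ^ e) := by ring
        _ ≤ C * (C ^ e * m v) := by gcongr
        _ = _ := by rw [pow_succ]; ring
  obtain ⟨e, he⟩ := Nat.exists_eq_add_of_le hvp.le
  have h1 := hchain e he.ge
  rw [he] at hvatt ⊢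
  have h2 : n v = n (v + e) * s0 ^ e := by
    rw [pow_add, ← mul_assoc] at hvatt
    have : s0 ^ v ≠ 0 := by positivity
    apply mul_right_cancel₀ this
    rw [hvatt]; ring
  have h3 : m (v + e) * s0 ^ e ≤ (C ^ (v + e) * n (v + e)) * s0 ^ e := by
    calc m (v + e) * s0 ^ e ≤ C ^ e * m v := h1
      _ ≤ C ^ e * (C ^ v * n v) := by gcongr
      _ = _ := by rw [h2, pow_add]; ring
  exact le_of_mul_le_mul_right h3 (by positivity)

lemma mseq_pos {M : ℕ → ℝ} (hM : IsWeightSeq M) (k : ℕ) : 0 < mseq M k :=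
  div_pos (hM.2.1 k) (by positivity)

lemma mseq_zero {M : ℕ → ℝ} (hM : IsWeightSeq M) : mseq M 0 = 1 := by
  simp [mseq, hM.1]

/-- Summary for a regular pair. -/
lemma pair_spec {M N : ℕ → ℝ} (hM : IsWeightSeq M) (hN : IsWeightSeq N)
    (hr : RootTendsToInfty (mseq N)) {C : ℝ} (hC : 1 ≤ C)
    (h : ∀ t : ℝ, 0 < t → GammaBar (mseq N) (C * t) ≤ GammaLow (mseq M) t) {t : ℝ} (ht : 0 < t) :
    (∀ k < GammaBar (mseq N) (C * t), mseq M (k + 1) * t ≤ mseq M k) ∧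
    mseq M (GammaBar (mseq N) (C * t)) * t ^ (GammaBar (mseq N) (C * t)) ≤ hFun (mseq N) (C * t) := by
  have hCt : 0 < C * t := by positivity
  refine ⟨fun k hk => (gammaLow_lt (mseq_pos hM) ht (hk.trans_le (h t ht))).le, ?_⟩
  have := vertex (mseq_pos hM) (mseq_pos hN) (by rw [mseq_zero hM, mseq_zero hN]) hr hC h
    _ _ hCt rfl
  rw [gammaBar_spec (mseq_pos hN) hr hCt, mul_pow]
  calc _ ≤ C ^ _ * mseq N _ * t ^ _ := by gcongr
    _ = _ := by ring

lemma hFun_le_one {N : ℕ → ℝ} (hN : IsWeightSeq N) {T : ℝ} (hT : 0 < T) :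
    hFun (mseq N) T ≤ 1 := by
  have := hFun_le (mseq_pos hN) hT 0
  simpa [mseq_zero hN] using this

lemma hFun_mg {M N : ℕ → ℝ} (hM : IsWeightSeq M) (hN : IsWeightSeq N) (h : MgFinite M N) :
    ∃ C : ℝ, 0 < C ∧ ∀ t, 0 < t → hFun (mseq M) t ≤ hFun (mseq N) (C * t) ^ 2 := by
  obtain ⟨B, hB⟩ := h
  set C := max B 1 with hCdef
  have hC : 0 < C := lt_max_of_lt_right one_pos
  refine ⟨C, hC, fun t ht => ?_⟩
  have hCt : 0 < C * t := by positivity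
  have key : ∀ k, hFun (mseq M) t ≤ (mseq N k * (C * t) ^ k) ^ 2 := by
    intro k
    refine (hFun_le (mseq_pos hM) ht (k + k)).trans ?_
    have h1 : M (k + k) ≤ C ^ (k + k) * (N k * N k) := by
      rcases Nat.eq_zero_or_pos k with rfl | hk
      · simp [hM.1, hN.1]
      have h2 : (M (k + k) / (N k * N k)) ^ (1 / (k + k : ℝ)) ≤ C :=
        (hB ⟨k, k, by omega, rfl⟩).trans (le_max_left _ _)
      have hpos : 0 < M (k + k) / (N k * N k) :=
        div_pos (hM.2.1 _) (mul_pos (hN.2.1 _) (hN.2.1 _))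
      have h3 := pow_le_pow_left₀ (Real.rpow_nonneg hpos.le _) h2 (k + k)
      rw [← Real.rpow_natCast, ← Real.rpow_mul hpos.le, Nat.cast_add, one_div,
        inv_mul_cancel₀ (by positivity), Real.rpow_one,
        div_le_iff₀ (mul_pos (hN.2.1 _) (hN.2.1 _))] at h3
      exact h3
    have h4 : (Nat.factorial k : ℝ) * Nat.factorial k ≤ Nat.factorial (k + k) := by
      exact_mod_cast Nat.le_of_dvd (Nat.factorial_pos _) (Nat.factorial_mul_factorial_dvd_factorial_add k k)
    have hNk := hN.2.1 k
    have : mseq M (k + k) ≤ C ^ (k + k) * (mseq N k * mseq N k) := by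
      simp only [mseq]
      rw [div_mul_div_comm, ← mul_div_assoc]
      refine div_le_div₀ (by positivity) h1 (by positivity) h4
    calc mseq M (k + k) * t ^ (k + k) ≤ C ^ (k + k) * (mseq N k * mseq N k) * t ^ (k + k) := by gcongr
      _ = _ := by rw [mul_pow, mul_pow, mul_pow, pow_add, pow_add]; ring
  by_cases hex : ∃ k, hFun (mseq N) (C * t) = mseq N k * (C * t) ^ k
  · obtain ⟨k, hk⟩ := hex
    rw [hk]; exact key k
  · have hnn : 0 ≤ hFun (mseq M) t := by
      apply le_ciInf; intro k; have := mseq_pos hM k; positivity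
    rw [← Real.sqrt_le_left (by
      apply le_ciInf; intro k; have := mseq_pos hN k; positivity)]
    apply le_ciInf
    intro k
    have := mseq_pos hN k
    rw [Real.sqrt_le_left (by positivity)]
    exact key k

lemma hFun_mg_iter {W : Set (ℕ → ℝ)} (hW : IsWeightMatrix W) (hmg : RModerateGrowth W) :
    ∀ q : ℕ, ∀ M ∈ W, ∃ N ∈ W, ∃ C : ℝ, 0 < C ∧
      ∀ t, 0 < t → hFun (mseq M) t ≤ hFun (mseq N) (C * t) ^ (2 ^ q) := by
  intro q
  induction q with
  | zero => exact fun M hM => ⟨M, hM, 1, one_pos, fun t ht => by simp⟩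
  | succ q ih =>
    intro M hM
    obtain ⟨N, hN, C, hC, h⟩ := ih M hM
    obtain ⟨L, hL, hNL⟩ := hmg N hN
    obtain ⟨D, hD, h'⟩ := hFun_mg (hW.2.1 N hN) (hW.2.1 L hL) hNL
    refine ⟨L, hL, D * C, by positivity, fun t ht => (h t ht).trans ?_⟩
    have h1 := h' (C * t) (by positivity)
    have hnn : 0 ≤ hFun (mseq N) (C * t) := by
      apply le_ciInf; intro k; have := mseq_pos (hW.2.1 N hN) k; positivity
    calc _ ≤ (hFun (mseq L) (D * (C * t)) ^ 2) ^ (2 ^ q) := by gcongr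
      _ = _ := by rw [← pow_mul, mul_assoc, pow_succ 2 q, mul_comm 2]

/-- For every exponent `θ > 0`, `h_M(t)^θ ≤ h_N(C t)`. -/
lemma hFun_rpow {W : Set (ℕ → ℝ)} (hW : IsWeightMatrix W) (hmg : RModerateGrowth W)
    {θ : ℝ} (hθ : 0 < θ) {M : ℕ → ℝ} (hM : M ∈ W) : ∃ N ∈ W, ∃ C : ℝ, 0 < C ∧
      ∀ t, 0 < t → hFun (mseq M) t ^ θ ≤ hFun (mseq N) (C * t) := by
  obtain ⟨q, hq⟩ := exists_pow_lt_of_lt_one hθ (by norm_num : (1 / 2 : ℝ) < 1)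
  obtain ⟨N, hN, C, hC, h⟩ := hFun_mg_iter hW hmg q M hM
  refine ⟨N, hN, C, hC, fun t ht => ?_⟩
  have hCt : 0 < C * t := by positivity
  have hMn : 0 ≤ hFun (mseq M) t := by
    apply le_ciInf; intro k; have := mseq_pos (hW.2.1 M hM) k; positivity
  have hnn : 0 ≤ hFun (mseq N) (C * t) := by
    apply le_ciInf; intro k; have := mseq_pos (hW.2.1 N hN) k; positivity
  have h1 := hFun_le_one (hW.2.1 N hN) hCt
  have h2 : (1 : ℝ) ≤ 2 ^ q * θ := by
    have : (1 / 2 : ℝ) ^ q * 2 ^ q = 1 := by rw [← mul_pow]; norm_num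
    nlinarith [pow_pos (by norm_num : (0 : ℝ) < 2) q]
  calc hFun (mseq M) t ^ θ ≤ (hFun (mseq N) (C * t) ^ (2 ^ q)) ^ θ :=
        Real.rpow_le_rpow hMn (h t ht) hθ.le
    _ = hFun (mseq N) (C * t) ^ (2 ^ q * θ) := by
        rw [← Real.rpow_natCast, ← Real.rpow_mul hnn]; norm_num
    _ ≤ hFun (mseq N) (C * t) := by
        rcases hnn.eq_or_lt with h0 | h0
        · rw [← h0, Real.zero_rpow (by positivity)]
        · simpa using Real.rpow_le_rpow_of_exponent_ge h0 h1 h2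

/-! ### Coefficient estimates -/

lemma logconv_ratio {M : ℕ → ℝ} (hM : IsWeightSeq M) {a b : ℕ} (hab : a ≤ b) :
    M (a + 1) * M b ≤ M a * M (b + 1) := by
  obtain ⟨e, rfl⟩ := Nat.exists_eq_add_of_le hab
  have hpos := hM.2.1
  induction e with
  | zero => rw [add_zero, mul_comm]
  | succ e ih =>
    have h1 := ih (by omega)
    have h2 := hM.2.2.2.1 (a + e + 1) (by omega)
    simp only [Nat.add_sub_cancel] at h2
    have p1 := hpos (a + e + 1)
    have p2 := hpos (a + e)
    have p3 := hpos a
    have p4 := hpos (a + 1)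
    have p5 := hpos (a + e + 1 + 1)
    rw [← add_assoc]
    have h3 : M (a + 1) * M (a + e + 1) * (M (a + e) * M (a + e + 1))
        ≤ M a * M (a + e + 1 + 1) * (M (a + e) * M (a + e + 1)) := by
      calc _ = (M (a + 1) * M (a + e)) * M (a + e + 1) ^ 2 := by ring
        _ ≤ (M a * M (a + e + 1)) * (M (a + e) * M (a + e + 1 + 1)) := by gcongr
        _ = _ := by ring
    exact le_of_mul_le_mul_right h3 (by positivity)

lemma logconv_shift {M : ℕ → ℝ} (hM : IsWeightSeq M) {a b : ℕ} (hab : a ≤ b) (e : ℕ) :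
    M (a + e) * M b ≤ M a * M (b + e) := by
  have hpos := hM.2.1
  induction e with
  | zero => simp
  | succ e ih =>
    have h2 := logconv_ratio hM (a := a + e) (b := b + e) (by omega)
    have p1 := hpos (a + e)
    have p2 := hpos (b + e)
    have p3 := hpos a
    have p4 := hpos b
    have p5 := hpos (b + e + 1)
    rw [← add_assoc, ← add_assoc]
    have h3 : M (a + e + 1) * M b * (M (a + e) * M (b + e))
        ≤ M a * M (b + e + 1) * (M (a + e) * M (b + e)) := by
      calc _ = (M (a + e + 1) * M (b + e)) * (M (a + e) * M b) := by ring
        _ ≤ (M (a + e) * M (b + e + 1)) * (M a * M (b + e)) := by gcongr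
        _ = _ := by ring
    exact le_of_mul_le_mul_right h3 (by positivity)

/-- truncated weights -/
def wtr (m : ℕ → ℝ) (t : ℝ) (p k : ℕ) : ℝ := m (min k p) * t ^ (min k p)

lemma wtr_pos {M : ℕ → ℝ} (hM : IsWeightSeq M) {t : ℝ} (ht : 0 < t) (p k : ℕ) :
    0 < wtr (mseq M) t p k := by
  have := mseq_pos hM (min k p)
  unfold wtr; positivity

lemma wtr_anti {M : ℕ → ℝ} {t : ℝ} (ht : 0 < t) {p : ℕ}
    (h : ∀ k < p, mseq M (k + 1) * t ≤ mseq M k) : Antitone (wtr (mseq M) t p) := by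
  refine antitone_nat_of_succ_le fun k => ?_
  unfold wtr
  rcases lt_or_ge k p with hk | hk
  · rw [min_eq_left hk, min_eq_left hk.le, pow_succ]
    calc mseq M (k + 1) * (t ^ k * t) = (mseq M (k + 1) * t) * t ^ k := by ring
      _ ≤ _ := by have := h k hk; gcongr
  · rw [min_eq_right hk, min_eq_right (by omega)]

lemma wtr_le_one {M : ℕ → ℝ} (hM : IsWeightSeq M) {t : ℝ} (ht : 0 < t) {p : ℕ}
    (h : ∀ k < p, mseq M (k + 1) * t ≤ mseq M k) (k : ℕ) : wtr (mseq M) t p k ≤ 1 := by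
  have := wtr_anti ht h (Nat.zero_le k)
  simpa [wtr, mseq_zero hM] using this

lemma choose_real {n k l : ℕ} (h : k + l = n) :
    (n.factorial : ℝ) = n.choose k * (k.factorial * l.factorial) := by
  subst h
  have := Nat.choose_mul_factorial_mul_factorial (n := k + l) (k := k) (by omega)
  rw [Nat.add_sub_cancel_left] at this
  rw [← this]; push_cast; ring

lemma choose_le_two_pow' (n k : ℕ) : (n.choose k : ℝ) ≤ 2 ^ n := by
  exact_mod_cast Nat.choose_le_two_pow n k

lemma wtr_mul {M : ℕ → ℝ} (hM : IsWeightSeq M) {t : ℝ} (ht : 0 < t) {p : ℕ}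
    (h : ∀ k < p, mseq M (k + 1) * t ≤ mseq M k) (i l : ℕ) :
    wtr (mseq M) t p i * wtr (mseq M) t p l ≤ 2 ^ (i + l) * wtr (mseq M) t p (i + l) := by
  have hone : (1 : ℝ) ≤ 2 ^ (i + l) := one_le_pow₀ (by norm_num)
  have wp := wtr_pos hM ht p
  have w1 := wtr_le_one hM ht h
  have w2 := wtr_anti ht h
  have hpos := hM.2.1
  rcases le_or_gt (i + l) p with hil | hil
  · unfold wtr
    rw [min_eq_left (by omega), min_eq_left (by omega), min_eq_left hil]
    have h1 := logconv_shift hM (Nat.zero_le l) i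
    rw [hM.1, zero_add, one_mul, add_comm l i] at h1
    have h2 := choose_real (n := i + l) (k := i) (l := l) rfl
    have h3 := choose_le_two_pow' (i + l) i
    have h4 : mseq M i * mseq M l ≤ 2 ^ (i + l) * mseq M (i + l) := by
      unfold mseq
      have hc : (0 : ℝ) < (i + l).choose i := by
        exact_mod_cast Nat.choose_pos (by omega)
      calc M i / i.factorial * (M l / l.factorial) = (M i * M l) / (i.factorial * l.factorial) := by
            field_simp
        _ ≤ M (i + l) / (i.factorial * l.factorial) := by gcongr
        _ = (i + l).choose i * (M (i + l) / (i + l).factorial) := by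
            rw [h2]; field_simp
        _ ≤ _ := by have := hpos (i + l); gcongr
    calc mseq M i * t ^ i * (mseq M l * t ^ l) = (mseq M i * mseq M l) * t ^ (i + l) := by
          rw [pow_add]; ring
      _ ≤ (2 ^ (i + l) * mseq M (i + l)) * t ^ (i + l) := by gcongr
      _ = _ := by ring
  have hwp : wtr (mseq M) t p (i + l) = wtr (mseq M) t p p := by
    unfold wtr; rw [min_eq_right hil.le, min_self]
  rcases le_or_gt p i with hi | hi
  · calc _ ≤ wtr (mseq M) t p i * 1 := by have := wp i; have := w1 l; gcongr
      _ ≤ wtr (mseq M) t p p := by rw [mul_one]; exact w2 hi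
      _ ≤ _ := by rw [hwp]; have := wp p; nlinarith
  rcases le_or_gt p l with hl | hl
  · calc _ ≤ 1 * wtr (mseq M) t p l := by have := wp l; have := w1 i; gcongr
      _ ≤ wtr (mseq M) t p p := by rw [one_mul]; exact w2 hl
      _ ≤ _ := by rw [hwp]; have := wp p; nlinarith
  obtain ⟨q, hq⟩ := Nat.exists_eq_add_of_lt hil
  set q' := q + 1 with hq'
  have hq2 : i + l = p + q' := by omega
  have h1 := logconv_shift hM (a := q') (b := i) (by omega) (p - i)
  rw [show q' + (p - i) = l by omega, show i + (p - i) = p by omega] at h1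
  have c1 := choose_real (n := i + l) (k := i) (l := l) rfl
  have c2 := choose_real (n := i + l) (k := p) (l := q') hq2.symm
  have c3 := choose_le_two_pow' (i + l) i
  have c4 : (1 : ℝ) ≤ (i + l).choose p := by exact_mod_cast Nat.choose_pos (by omega)
  have h5 : mseq M i * mseq M l ≤ 2 ^ (i + l) * (mseq M p * mseq M q') := by
    unfold mseq
    have e1 : M i / i.factorial * (M l / l.factorial)
       = (M i * M l) * (((i + l).choose i) / (i + l).factorial) := by
      have hc : (0 : ℝ) < (i + l).choose i := by
        exact_mod_cast Nat.choose_pos (by omega)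
      rw [c1]; field_simp
    have e2 : M p / p.factorial * (M q' / q'.factorial)
       = (M q' * M p) * (((i + l).choose p) / (i + l).factorial) := by rw [c2]; field_simp
    rw [e1, e2]
    have a1 := hpos i
    have a2 := hpos l
    have a3 := hpos p
    have a4 := hpos q'
    have h6 : ((i + l).choose i : ℝ) ≤ 2 ^ (i + l) * (i + l).choose p := by nlinarith
    calc M i * M l * ((i + l).choose i / (i + l).factorial)
        ≤ (M q' * M p) * ((2 ^ (i + l) * (i + l).choose p) / (i + l).factorial) := by
          rw [mul_comm (M i)]; gcongr
      _ = _ := by ring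
  have hwq : wtr (mseq M) t p q' = mseq M q' * t ^ q' := by
    unfold wtr; rw [min_eq_left (by omega)]
  have hwp' : wtr (mseq M) t p p = mseq M p * t ^ p := by unfold wtr; rw [min_self]
  calc wtr (mseq M) t p i * wtr (mseq M) t p l = (mseq M i * mseq M l) * t ^ (i + l) := by
        unfold wtr; rw [min_eq_left hi.le, min_eq_left hl.le, pow_add]; ring
    _ ≤ (2 ^ (i + l) * (mseq M p * mseq M q')) * t ^ (i + l) := by gcongr
    _ = 2 ^ (i + l) * (wtr (mseq M) t p p * wtr (mseq M) t p q') := by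
        rw [hwq, hwp', hq2, pow_add t]; ring
    _ ≤ 2 ^ (i + l) * (wtr (mseq M) t p p * 1) := by
        have := wp p; have := w1 q'; gcongr
    _ = _ := by rw [hwp, mul_one]

open Polynomial in
lemma coeff_mul_bound {w : ℕ → ℝ} (hw0 : ∀ k, 0 ≤ w k)
    (hw : ∀ i l, w i * w l ≤ 2 ^ (i + l) * w (i + l))
    {K₁ K₂ β : ℝ} (hK₁ : 0 ≤ K₁) (hK₂ : 0 ≤ K₂) (hβ : 0 ≤ β) {P Q : ℂ[X]}
    (hP : ∀ k, ‖P.coeff k‖ ≤ K₁ * β ^ k * w k) (hQ : ∀ k, ‖Q.coeff k‖ ≤ K₂ * β ^ k * w k) :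
    ∀ k, ‖(P * Q).coeff k‖ ≤ K₁ * K₂ * (4 * β) ^ k * w k := by
  intro k
  rw [coeff_mul]
  calc _ ≤ ∑ x ∈ Finset.HasAntidiagonal.antidiagonal k, ‖P.coeff x.1 * Q.coeff x.2‖ := norm_sum_le _ _
    _ ≤ ∑ x ∈ Finset.HasAntidiagonal.antidiagonal k, K₁ * K₂ * (2 * β) ^ k * w k := by
        refine Finset.sum_le_sum fun x hx => ?_
        have hx' : x.1 + x.2 = k := by simpa using hx
        rw [norm_mul]
        have a1 := hw0 x.1
        have a2 := hw0 x.2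
        calc _ ≤ (K₁ * β ^ x.1 * w x.1) * (K₂ * β ^ x.2 * w x.2) := by
              gcongr; exacts [hP _, hQ _]
          _ = K₁ * K₂ * β ^ k * (w x.1 * w x.2) := by rw [← hx', pow_add]; ring
          _ ≤ K₁ * K₂ * β ^ k * (2 ^ (x.1 + x.2) * w (x.1 + x.2)) := by
              have := hw x.1 x.2; gcongr
          _ = _ := by rw [hx', mul_pow]; ring
    _ = (k + 1) * (K₁ * K₂ * (2 * β) ^ k * w k) := by
        rw [Finset.sum_const, Finset.Nat.card_antidiagonal, nsmul_eq_mul]; push_cast; ring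
    _ ≤ 2 ^ k * (K₁ * K₂ * (2 * β) ^ k * w k) := by
        have := hw0 k
        have h2 : ((k : ℝ) + 1) ≤ 2 ^ k := by exact_mod_cast Nat.lt_two_pow_self (n := k)
        gcongr
    _ = _ := by rw [mul_pow, mul_pow, show (4 : ℝ) = 2 * 2 by norm_num, mul_pow]; ring

open Polynomial in
lemma coeff_pow_bound {w : ℕ → ℝ} (hw0 : ∀ k, 0 ≤ w k) (hw1 : w 0 = 1)
    (hw : ∀ i l, w i * w l ≤ 2 ^ (i + l) * w (i + l))
    {K : ℝ} (hK : 0 ≤ K) {P : ℂ[X]} (hP : ∀ k, ‖P.coeff k‖ ≤ K * w k) (n : ℕ) :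
    ∀ k, ‖(P ^ n).coeff k‖ ≤ K ^ n * (4 ^ n) ^ k * w k := by
  induction n with
  | zero =>
    intro k
    rw [pow_zero, coeff_one]
    split_ifs with h
    · subst h; simp [hw1]
    · have := hw0 k; simp [this]
  | succ n ih =>
    intro k
    have := coeff_mul_bound hw0 hw (K₁ := K ^ n) (K₂ := K) (β := 4 ^ n) (by positivity) hK
      (by positivity) ih (Q := P) (fun k => (hP k).trans ?_) k
    · rw [pow_succ]
      convert this using 2
      rw [pow_succ, pow_succ]; ring
    · have h1 : (1 : ℝ) ≤ (4 ^ n) ^ k := one_le_pow₀ (one_le_pow₀ (by norm_num))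
      have := hw0 k
      have : K * 1 ≤ K * (4 ^ n) ^ k := by gcongr
      have h3 : K * 1 * w k ≤ K * (4 ^ n) ^ k * w k := by gcongr
      simpa using h3

lemma pow_sub_pow_bound {K : ℝ} (hK : 0 ≤ K) {A B : ℂ} (hA : ‖A‖ ≤ K) (hB : ‖B‖ ≤ K) (n : ℕ) :
    ‖A ^ n - B ^ n‖ ≤ n * K ^ (n - 1) * ‖A - B‖ := by
  induction n with
  | zero => simp
  | succ n ih =>
    have e : A ^ (n + 1) - B ^ (n + 1) = A ^ n * (A - B) + (A ^ n - B ^ n) * B := by ring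
    rw [e]
    refine (norm_add_le _ _).trans ?_
    rw [norm_mul, norm_mul, norm_pow]
    have h1 : ‖A‖ ^ n ≤ K ^ n := pow_le_pow_left₀ (norm_nonneg _) hA n
    have h2 : (n : ℝ) * K ^ (n - 1) * K = n * K ^ n := by
      rcases n with _ | n
      · simp
      · rw [Nat.add_sub_cancel, mul_assoc, pow_succ]
    calc _ ≤ K ^ n * ‖A - B‖ + (n * K ^ (n - 1) * ‖A - B‖) * K := by gcongr
      _ = K ^ n * ‖A - B‖ + (n * K ^ (n - 1) * K) * ‖A - B‖ := by ring
      _ = _ := by rw [h2, Nat.add_sub_cancel]; push_cast; ring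

open Polynomial in
lemma X_pow_dvd_of_bound {E : ℂ[X]} {p : ℕ} {C δ : ℝ} (hδ : 0 < δ)
    (h : ∀ s : ℝ, 0 < s → s ≤ δ → ‖E.eval (s : ℂ)‖ ≤ C * s ^ p) : X ^ p ∣ E := by
  suffices H : ∀ q ≤ p, X ^ q ∣ E from H p le_rfl
  intro q
  induction q with
  | zero => simp
  | succ q ih =>
    intro hq
    obtain ⟨E1, hE1⟩ := ih (by omega)
    rw [hE1, pow_succ]
    refine mul_dvd_mul_left _ ?_
    rw [X_dvd_iff, coeff_zero_eq_eval_zero]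
    have hlim : Tendsto (fun s : ℝ => ‖E1.eval (s : ℂ)‖) (nhdsWithin 0 (Ioi 0)) (nhds ‖E1.eval 0‖) := by
      have : Continuous (fun s : ℝ => ‖E1.eval (s : ℂ)‖) := by fun_prop
      have h := this.tendsto 0
      simp only [Complex.ofReal_zero] at h
      exact h.mono_left nhdsWithin_le_nhds
    have hlim2 : Tendsto (fun s : ℝ => C * s ^ (p - q)) (nhdsWithin 0 (Ioi 0)) (nhds 0) := by
      have : Continuous (fun s : ℝ => C * s ^ (p - q)) := by fun_prop
      have h := this.tendsto 0
      simp only [zero_pow (show p - q ≠ 0 by omega), mul_zero] at h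
      exact h.mono_left nhdsWithin_le_nhds
    have hle : ‖E1.eval 0‖ ≤ 0 := by
      refine le_of_tendsto_of_tendsto hlim hlim2 ?_
      filter_upwards [Ioo_mem_nhdsGT hδ] with s hs
      have h1 := h s hs.1 hs.2.le
      rw [hE1, eval_mul, eval_pow, eval_X, norm_mul, norm_pow, Complex.norm_real,
        Real.norm_of_nonneg hs.1.le] at h1
      have h2 : s ^ p = s ^ q * s ^ (p - q) := by rw [← pow_add]; congr 1; omega
      rw [h2] at h1
      have h3 : 0 < s ^ q := pow_pos hs.1 _
      have : s ^ q * ‖E1.eval (s : ℂ)‖ ≤ s ^ q * (C * s ^ (p - q)) := by linarith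
      exact le_of_mul_le_mul_left this h3
    exact norm_eq_zero.1 (le_antisymm hle (norm_nonneg _))

open Polynomial in
lemma eval_bound_of_coeff {E : ℂ[X]} {p : ℕ} (hE : X ^ p ∣ E) {K β a W : ℝ} (hK : 0 ≤ K)
    (hβ : 0 ≤ β) (hW : 0 ≤ W)
    (hc : ∀ k, p ≤ k → ‖E.coeff k‖ ≤ K * β ^ k * W) (hβa : β * a ≤ 1 / 4) {z : ℂ} (hz : ‖z‖ ≤ a) :
    ‖E.eval z‖ ≤ 2 * K * (1 / 4) ^ p * W := by
  have hx : 0 ≤ β * ‖z‖ := by positivity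
  have hx4 : β * ‖z‖ ≤ 1 / 4 := le_trans (by gcongr) hβa
  obtain ⟨E1, rfl⟩ := hE
  have hc1 : ∀ k, ‖E1.coeff k‖ ≤ K * β ^ (k + p) * W := by
    intro k
    have := hc (k + p) (by omega)
    rwa [mul_comm, coeff_mul_X_pow] at this
  rw [eval_mul, eval_pow, eval_X, norm_mul, norm_pow, eval_eq_sum_range]
  have h1 : ‖∑ i ∈ Finset.range (E1.natDegree + 1), E1.coeff i * z ^ i‖ ≤ K * β ^ p * W * 2 := by
    refine (norm_sum_le _ _).trans ?_
    calc _ ≤ ∑ i ∈ Finset.range (E1.natDegree + 1), K * β ^ p * W * (1 / 2) ^ i := by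
          refine Finset.sum_le_sum fun i _ => ?_
          rw [norm_mul, norm_pow]
          calc _ ≤ K * β ^ (i + p) * W * ‖z‖ ^ i := by gcongr; exact hc1 i
            _ = K * β ^ p * W * (β * ‖z‖) ^ i := by rw [mul_pow, pow_add]; ring
            _ ≤ K * β ^ p * W * (1 / 2) ^ i := by gcongr; linarith
      _ = K * β ^ p * W * ∑ i ∈ Finset.range (E1.natDegree + 1), (1 / 2 : ℝ) ^ i := by
          rw [Finset.mul_sum]
      _ ≤ _ := by gcongr; exact sum_geometric_two_le _
  calc _ ≤ ‖z‖ ^ p * (K * β ^ p * W * 2) := by gcongr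
    _ = 2 * K * (β * ‖z‖) ^ p * W := by rw [mul_pow]; ring
    _ ≤ _ := by gcongr

/-! ### Taylor polynomials on one scale -/

open Polynomial in
/-- scaled Taylor polynomial -/
def tpoly (c : ℕ → ℂ) (t : ℝ) (p : ℕ) : ℂ[X] := ∑ k ∈ Finset.range p, C (c k * (t : ℂ) ^ k) * X ^ k

lemma tpoly_coeff (c : ℕ → ℂ) (t : ℝ) (p k : ℕ) :
    (tpoly c t p).coeff k = if k < p then c k * (t : ℂ) ^ k else 0 := by
  unfold tpoly
  rw [Polynomial.finsetSum_coeff]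
  simp_rw [Polynomial.coeff_C_mul, Polynomial.coeff_X_pow]
  simp

lemma tpoly_eval (c : ℕ → ℂ) (t : ℝ) (p : ℕ) (z : ℂ) :
    (tpoly c t p).eval z = ∑ k ∈ Finset.range p, c k * (t * z) ^ k := by
  unfold tpoly
  rw [Polynomial.eval_finsetSum]
  refine Finset.sum_congr rfl fun k _ => ?_
  simp [mul_pow, mul_assoc]

lemma tpoly_natDegree (c : ℕ → ℂ) (t : ℝ) (p : ℕ) : (tpoly c t p).natDegree ≤ p := by
  rw [Polynomial.natDegree_le_iff_coeff_eq_zero]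
  intro k hk
  rw [tpoly_coeff, if_neg (by omega)]

/-- Taylor data at zero of a function of one real variable -/
def TD (M : ℕ → ℝ) (C0 b : ℝ) (F : ℝ → ℂ) (c : ℕ → ℂ) : Prop :=
  (∀ k, ‖c k‖ ≤ C0 * mseq M k) ∧
  ∀ p : ℕ, ∀ s : ℝ, |s| ≤ b →
    ‖F s - ∑ k ∈ Finset.range p, c k * (s : ℂ) ^ k‖ ≤ C0 * mseq M p * |s| ^ p

/-- the cut-off degree at scale `t` -/
def ppf (N : ℕ → ℝ) (C t : ℝ) : ℕ := GammaBar (mseq N) (C * t)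

/-- the regularization parameter at scale `t` -/
def rrf (j : ℕ) (N : ℕ → ℝ) (C t : ℝ) : ℝ :=
  ((1 / 4) ^ (ppf N C t) * hFun (mseq N) (C * t)) ^ (1 / ((j : ℝ) + 1))

section pair
variable {M N : ℕ → ℝ} {C : ℝ}

/-- regular pairs -/
def RPair (M N : ℕ → ℝ) (C : ℝ) : Prop :=
  IsWeightSeq M ∧ IsWeightSeq N ∧ RootTendsToInfty (mseq N) ∧ 1 ≤ C ∧
    ∀ t : ℝ, 0 < t → GammaBar (mseq N) (C * t) ≤ GammaLow (mseq M) t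

lemma RPair.cpos (h : RPair M N C) : 0 < C := by have := h.2.2.2.1; linarith

lemma RPair.mono (h : RPair M N C) {t : ℝ} (ht : 0 < t) :
    ∀ k < ppf N C t, mseq M (k + 1) * t ≤ mseq M k :=
  (pair_spec h.1 h.2.1 h.2.2.1 h.2.2.2.1 h.2.2.2.2 ht).1

lemma RPair.top_le (h : RPair M N C) {t : ℝ} (ht : 0 < t) :
    mseq M (ppf N C t) * t ^ ppf N C t ≤ hFun (mseq N) (C * t) :=
  (pair_spec h.1 h.2.1 h.2.2.1 h.2.2.2.1 h.2.2.2.2 ht).2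

lemma RPair.H_pos (h : RPair M N C) {t : ℝ} (ht : 0 < t) : 0 < hFun (mseq N) (C * t) :=
  hFun_pos (mseq_pos h.2.1) h.2.2.1 (mul_pos h.cpos ht)

lemma RPair.rr_pos (h : RPair M N C) (j : ℕ) {t : ℝ} (ht : 0 < t) : 0 < rrf j N C t := by
  have := h.H_pos ht
  unfold rrf; positivity

lemma RPair.rr_pow (h : RPair M N C) (j : ℕ) {t : ℝ} (ht : 0 < t) :
    rrf j N C t ^ (j + 1) = (1 / 4) ^ (ppf N C t) * hFun (mseq N) (C * t) := by
  have := h.H_pos ht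
  unfold rrf
  rw [← Real.rpow_natCast, ← Real.rpow_mul (by positivity)]
  push_cast
  rw [one_div_mul_cancel (by positivity), Real.rpow_one]

lemma RPair.rr_le_one (h : RPair M N C) (j : ℕ) {t : ℝ} (ht : 0 < t) : rrf j N C t ≤ 1 := by
  have h1 := h.H_pos ht
  have h2 := hFun_le_one h.2.1 (mul_pos h.cpos ht)
  unfold rrf
  refine Real.rpow_le_one (by positivity) ?_ (by positivity)
  exact mul_le_one₀ (pow_le_one₀ (by norm_num) (by norm_num)) h1.le h2

lemma RPair.pp_half (h : RPair M N C) {t : ℝ} (ht : 0 < t) : ppf N C t ≤ ppf N C (t / 2) := by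
  have := h.cpos
  exact gammaBar_anti (mseq_pos h.2.1) h.2.2.1 (by positivity) (by gcongr; linarith)

lemma RPair.rr_half (h : RPair M N C) (j : ℕ) {t : ℝ} (ht : 0 < t) :
    rrf j N C (t / 2) ≤ rrf j N C t := by
  have h0 := h.cpos
  have h1 := h.H_pos ht
  have h2 := h.H_pos (half_pos ht)
  unfold rrf
  refine Real.rpow_le_rpow (by positivity) ?_ (by positivity)
  refine mul_le_mul (pow_le_pow_of_le_one (by norm_num) (by norm_num) (h.pp_half ht)) ?_ h2.le
    (by positivity)
  exact hFun_mono (mseq_pos h.2.1) (by positivity) (by gcongr; linarith)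

variable {C0 b : ℝ} {F G : ℝ → ℂ} {fc gc : ℕ → ℂ}

lemma tpoly_coeff_bound (h : RPair M N C) {t : ℝ} (ht : 0 < t) (hC0 : 0 ≤ C0)
    (hc : ∀ k, ‖fc k‖ ≤ C0 * mseq M k) (k : ℕ) :
    ‖(tpoly fc t (ppf N C t)).coeff k‖ ≤ C0 * wtr (mseq M) t (ppf N C t) k := by
  rw [tpoly_coeff]
  split_ifs with hk
  · rw [norm_mul, norm_pow, Complex.norm_real, Real.norm_of_nonneg ht.le]
    unfold wtr
    rw [min_eq_left hk.le, ← mul_assoc]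
    have := hc k
    gcongr
  · have := wtr_pos h.1 ht (ppf N C t) k
    simp; positivity

lemma scale_remainder (h : RPair M N C) {t : ℝ} (ht : 0 < t) (htb : t ≤ b)
    (hF : TD M C0 b F fc) {s : ℝ} (hs : |s| ≤ 1) :
    ‖F (t * s) - (tpoly fc t (ppf N C t)).eval (s : ℂ)‖ ≤
      C0 * (mseq M (ppf N C t) * t ^ ppf N C t) * |s| ^ ppf N C t := by
  have h1 := hF.2 (ppf N C t) (t * s) (by
    rw [abs_mul, abs_of_pos ht]
    calc t * |s| ≤ t * 1 := by gcongr
      _ ≤ b := by linarith)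
  rw [tpoly_eval]
  push_cast at h1
  refine h1.trans (le_of_eq ?_)
  rw [abs_mul, abs_of_pos ht, mul_pow]; ring

lemma scale_remainder' (h : RPair M N C) (j : ℕ) {t : ℝ} (ht : 0 < t) (htb : t ≤ b) (hC0 : 0 ≤ C0)
    (hF : TD M C0 b F fc) {s : ℝ} (hs : |s| ≤ 1 / 4) :
    ‖F (t * s) - (tpoly fc t (ppf N C t)).eval (s : ℂ)‖ ≤ C0 * rrf j N C t ^ (j + 1) := by
  refine (scale_remainder h ht htb hF (by linarith)).trans ?_
  rw [h.rr_pow j ht, mul_assoc]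
  have h1 := h.top_le ht
  have h2 := h.H_pos ht
  have h3 : |s| ^ ppf N C t ≤ (1 / 4) ^ ppf N C t := by gcongr
  have h4 : 0 ≤ mseq M (ppf N C t) * t ^ ppf N C t := by have := mseq_pos h.1 (ppf N C t); positivity
  calc _ ≤ C0 * (hFun (mseq N) (C * t) * (1 / 4) ^ ppf N C t) := by gcongr
    _ = _ := by ring

lemma tpoly_eval_bound (h : RPair M N C) {t : ℝ} (ht : 0 < t) (hC0 : 0 ≤ C0)
    (hc : ∀ k, ‖fc k‖ ≤ C0 * mseq M k) {z : ℂ} (hz : ‖z‖ ≤ 1 / 4) :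
    ‖(tpoly fc t (ppf N C t)).eval z‖ ≤ 2 * C0 := by
  have := eval_bound_of_coeff (E := tpoly fc t (ppf N C t)) (p := 0) (by simp) (K := C0) (β := 1)
    (a := 1 / 4) (W := 1) hC0 zero_le_one zero_le_one (fun k _ => ?_) (by norm_num) hz
  · simpa using this
  · refine (tpoly_coeff_bound h ht hC0 hc k).trans ?_
    have := wtr_le_one h.1 ht (h.mono ht) k
    simp; nlinarith

lemma scale_diff (h : RPair M N C) {j : ℕ} (hj : 1 ≤ j) {t : ℝ} (ht : 0 < t) (htb : t ≤ b)
    (hC0 : 1 ≤ C0) (hF : TD M C0 b F fc) (hG : TD M C0 b G gc)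
    (hFG : ∀ s, F s ^ (j + 1) = G s ^ j) {z : ℂ} (hz : ‖z‖ ≤ (1 / 4) ^ (j + 2)) :
    ‖(tpoly fc t (ppf N C t)).eval z ^ (j + 1) - (tpoly gc t (ppf N C t)).eval z ^ j‖ ≤
      2 * (C0 ^ (j + 1) + C0 ^ j) * rrf j N C t ^ (j + 1) := by
  have hC0' : 0 ≤ C0 := by linarith
  set p := ppf N C t with hp
  set P := tpoly fc t p with hP
  set Q := tpoly gc t p with hQ
  set E := P ^ (j + 1) - Q ^ j with hE
  set w := wtr (mseq M) t p with hw
  have hw0 : ∀ k, 0 ≤ w k := fun k => (wtr_pos h.1 ht p k).le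
  have hw1 : w 0 = 1 := by simp [hw, wtr, mseq_zero h.1]
  have hww := wtr_mul h.1 ht (h.mono ht)
  have hwp : w p = mseq M p * t ^ p := by simp [hw, wtr]
  have hcE : ∀ k, ‖E.coeff k‖ ≤ (C0 ^ (j + 1) + C0 ^ j) * (4 ^ (j + 1)) ^ k * w k := by
    intro k
    rw [hE, Polynomial.coeff_sub]
    refine (norm_sub_le _ _).trans ?_
    have h1 := coeff_pow_bound hw0 hw1 hww hC0' (P := P) (fun k => tpoly_coeff_bound h ht hC0' hF.1 k) (j + 1) k
    have h2 := coeff_pow_bound hw0 hw1 hww hC0' (P := Q) (fun k => tpoly_coeff_bound h ht hC0' hG.1 k) j k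
    have h3 : C0 ^ j * (4 ^ j) ^ k * w k ≤ C0 ^ j * (4 ^ (j + 1)) ^ k * w k := by
      have := hw0 k
      gcongr
      · norm_num
      · omega
    linarith [h1, h2.trans h3]
  have hdvd : Polynomial.X ^ p ∣ E := by
    set D := C0 * (mseq M p * t ^ p) with hD
    have hD0 : 0 ≤ D := by have := mseq_pos h.1 p; positivity
    refine X_pow_dvd_of_bound (δ := 1 / 4) (C := (((j + 1 : ℕ) : ℝ) * (2 * C0 + D) ^ (j + 1 - 1) +
      (j : ℝ) * (2 * C0 + D) ^ (j - 1)) * D) (by norm_num) ?_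
    intro s hs0 hs
    have hs' : |s| ≤ 1 / 4 := by rwa [abs_of_pos hs0]
    have r1 := scale_remainder h ht htb hF (s := s) (by linarith)
    have r2 := scale_remainder h ht htb hG (s := s) (by linarith)
    have hzs : ‖(s : ℂ)‖ ≤ 1 / 4 := by rwa [Complex.norm_real]
    have b1 := tpoly_eval_bound h ht hC0' hF.1 hzs
    have b2 := tpoly_eval_bound h ht hC0' hG.1 hzs
    rw [← hp] at r1 r2 b1 b2
    rw [abs_of_pos hs0] at r1 r2
    have hsp : s ^ p ≤ 1 := pow_le_one₀ hs0.le (by linarith)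
    have hDs : D * s ^ p ≤ D := by nlinarith
    have b3 : ‖F (t * s)‖ ≤ 2 * C0 + D := by
      calc ‖F (t * s)‖ = ‖(P.eval (s : ℂ)) + (F (t * s) - P.eval (s : ℂ))‖ := by congr 1; ring
        _ ≤ _ := norm_add_le _ _
        _ ≤ _ := add_le_add b1 (r1.trans hDs)
    have b4 : ‖G (t * s)‖ ≤ 2 * C0 + D := by
      calc ‖G (t * s)‖ = ‖(Q.eval (s : ℂ)) + (G (t * s) - Q.eval (s : ℂ))‖ := by congr 1; ring
        _ ≤ _ := norm_add_le _ _
        _ ≤ _ := add_le_add b2 (r2.trans hDs)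
    have e1 := pow_sub_pow_bound (K := 2 * C0 + D) (by positivity) b3 (b1.trans (by linarith)) (j + 1)
    have e2 := pow_sub_pow_bound (K := 2 * C0 + D) (by positivity) b4 (b2.trans (by linarith)) j
    rw [hE, Polynomial.eval_sub, Polynomial.eval_pow, Polynomial.eval_pow]
    calc ‖P.eval (s : ℂ) ^ (j + 1) - Q.eval (s : ℂ) ^ j‖
        = ‖(G (t * s) ^ j - Q.eval (s : ℂ) ^ j) - (F (t * s) ^ (j + 1) - P.eval (s : ℂ) ^ (j + 1))‖ := by
          rw [hFG]; congr 1; ring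
      _ ≤ _ := norm_sub_le _ _
      _ ≤ (j : ℝ) * (2 * C0 + D) ^ (j - 1) * (D * s ^ p) +
          ((j + 1 : ℕ) : ℝ) * (2 * C0 + D) ^ (j + 1 - 1) * (D * s ^ p) := by
          refine add_le_add (e2.trans ?_) (e1.trans ?_) <;> gcongr
      _ = _ := by ring
  have := eval_bound_of_coeff hdvd (K := C0 ^ (j + 1) + C0 ^ j) (β := 4 ^ (j + 1))
    (a := (1 / 4) ^ (j + 2)) (W := w p) (by positivity) (by positivity) (hw0 p)
    (fun k hk => (hcE k).trans (by
      have := wtr_anti ht (h.mono ht) hk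
      gcongr)) (by
        rw [pow_succ _ (j + 1), ← mul_assoc, ← mul_pow]; norm_num) hz
  rw [hE, Polynomial.eval_sub, Polynomial.eval_pow, Polynomial.eval_pow] at this
  refine this.trans ?_
  rw [h.rr_pow j ht, mul_assoc (2 * (C0 ^ (j + 1) + C0 ^ j)), hwp]
  have := h.top_le ht
  gcongr

lemma scale_Q_bound (h : RPair M N C) {j : ℕ} (hj : 1 ≤ j) {t : ℝ} (ht : 0 < t) (htb : t ≤ b)
    (hC0 : 1 ≤ C0) (hF : TD M C0 b F fc) (hG : TD M C0 b G gc)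
    (hFG : ∀ s, F s ^ (j + 1) = G s ^ j) {z : ℂ} (hz : ‖z‖ ≤ (1 / 4) ^ (j + 2)) :
    ‖(tpoly gc t (ppf N C t)).eval z‖ ^ j ≤ (1 + 2 * (C0 ^ (j + 1) + C0 ^ j)) *
      (max ‖(tpoly fc t (ppf N C t)).eval z‖ (rrf j N C t)) ^ (j + 1) := by
  have h1 := scale_diff h hj ht htb hC0 hF hG hFG hz
  set p := (tpoly fc t (ppf N C t)).eval z
  set q := (tpoly gc t (ppf N C t)).eval z
  set r := rrf j N C t
  have hr : 0 < r := h.rr_pos j ht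
  have h2 : ‖q ^ j‖ ≤ ‖p ^ (j + 1)‖ + ‖p ^ (j + 1) - q ^ j‖ := by
    calc ‖q ^ j‖ = ‖p ^ (j + 1) - (p ^ (j + 1) - q ^ j)‖ := by congr 1; ring
      _ ≤ _ := norm_sub_le _ _
  rw [norm_pow, norm_pow] at h2
  have h3 : ‖p‖ ^ (j + 1) ≤ max ‖p‖ r ^ (j + 1) := by gcongr; exact le_max_left _ _
  have h4 : r ^ (j + 1) ≤ max ‖p‖ r ^ (j + 1) := by gcongr; exact le_max_right _ _
  have h5 : 0 ≤ 2 * (C0 ^ (j + 1) + C0 ^ j) := by positivity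
  nlinarith

lemma scale_half (h : RPair M N C) (j : ℕ) {t : ℝ} (ht : 0 < t) (hC0 : 0 ≤ C0)
    (hc : ∀ k, ‖fc k‖ ≤ C0 * mseq M k) {z : ℂ} (hz : ‖z‖ ≤ t / 2 * (1 / 4)) :
    ‖(tpoly fc t (ppf N C t)).eval (z / t) -
      (tpoly fc (t / 2) (ppf N C (t / 2))).eval (z / (t / 2 : ℝ))‖ ≤
      2 * C0 * rrf j N C t ^ (j + 1) := by
  have ht2 := half_pos ht
  have hpp := h.pp_half ht
  set p := ppf N C t with hp
  set p' := ppf N C (t / 2) with hp'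
  have e1 : (tpoly fc t p).eval (z / t) = (tpoly fc (t / 2) p).eval (z / (t / 2 : ℝ)) := by
    rw [tpoly_eval, tpoly_eval]
    refine Finset.sum_congr rfl fun k _ => ?_
    have a1 : (t : ℂ) ≠ 0 := by exact_mod_cast ht.ne'
    have a2 : ((t / 2 : ℝ) : ℂ) ≠ 0 := by exact_mod_cast ht2.ne'
    rw [mul_div_cancel₀ _ a1, mul_div_cancel₀ _ a2]
  rw [e1, norm_sub_rev]
  set z' := z / (t / 2 : ℝ) with hz'
  have hz'n : ‖z'‖ ≤ 1 / 4 := by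
    rw [hz', norm_div, Complex.norm_real, Real.norm_of_nonneg ht2.le, div_le_iff₀ ht2]
    linarith
  rw [← Polynomial.eval_sub]
  have hcoe : ∀ k, (tpoly fc (t / 2) p' - tpoly fc (t / 2) p).coeff k =
      if k < p then 0 else (tpoly fc (t / 2) p').coeff k := by
    intro k
    rw [Polynomial.coeff_sub, tpoly_coeff, tpoly_coeff]
    by_cases h1 : k < p
    · simp [h1, h1.trans_le hpp]
    · simp [h1]
  have hb := eval_bound_of_coeff (E := tpoly fc (t / 2) p' - tpoly fc (t / 2) p) (p := p)
    (K := C0) (β := 1) (a := 1 / 4) (W := mseq M p * t ^ p) ?_ hC0 zero_le_one ?_ ?_ (by norm_num) hz'n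
  · refine hb.trans ?_
    rw [h.rr_pow j ht, mul_assoc (2 * C0)]
    have := h.top_le ht
    gcongr
  · rw [Polynomial.X_pow_dvd_iff]
    intro k hk
    rw [hcoe, if_pos hk]
  · have := mseq_pos h.1 p; positivity
  · intro k hk
    rw [hcoe, if_neg (by omega), one_pow, mul_one]
    refine (tpoly_coeff_bound h ht2 hC0 hc k).trans ?_
    have h1 := wtr_anti ht2 (h.mono ht2) hk
    rw [← hp'] at h1 ⊢
    have h2 : wtr (mseq M) (t / 2) p' p = mseq M p * (t / 2) ^ p := by
      unfold wtr; rw [min_eq_left hpp]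
    have h3 : (t / 2) ^ p ≤ t ^ p := by gcongr; linarith
    have := mseq_pos h.1 p
    rw [h2] at h1
    calc _ ≤ C0 * (mseq M p * (t / 2) ^ p) := by gcongr
      _ ≤ _ := by gcongr

end pair

/-! ### Regularized quotients -/

/-- the regularized quotient -/
def UU (P Q : ℂ) (r : ℝ) : ℂ := Q * (starRingEnd ℂ) P / ((‖P‖ ^ 2 + r ^ 2 : ℝ) : ℂ)

lemma UU_norm (P Q : ℂ) (r : ℝ) : ‖UU P Q r‖ = ‖Q‖ * ‖P‖ / (‖P‖ ^ 2 + r ^ 2) := by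
  unfold UU
  rw [norm_div, norm_mul, RCLike.norm_conj, Complex.norm_real, Real.norm_of_nonneg (by positivity)]

lemma le_of_pow_le_pow' {x y : ℝ} {j : ℕ} (hj : 1 ≤ j) (hy : 0 ≤ y) (h : x ^ j ≤ y ^ j) : x ≤ y :=
  le_of_pow_le_pow_left₀ (by omega) hy h

lemma UU_small {j : ℕ} (hj : 1 ≤ j) {K r ν : ℝ} (hK : 1 ≤ K) (hr : 0 ≤ r) (hν : 0 ≤ ν) {P Q : ℂ}
    (hQ : ‖Q‖ ^ j ≤ K * (max ‖P‖ r) ^ (j + 1)) (hm : max ‖P‖ r ≤ ν ^ j) : ‖UU P Q r‖ ≤ K * ν := by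
  rw [UU_norm]
  rcases (norm_nonneg P).eq_or_lt with h0 | h0
  · rw [← h0]; simp; positivity
  set m := max ‖P‖ r with hmdef
  have hPm : ‖P‖ ≤ m := le_max_left _ _
  have hm0 : 0 < m := h0.trans_le hPm
  have h1 : m ^ 2 ≤ ‖P‖ ^ 2 + r ^ 2 := by
    rcases max_cases ‖P‖ r with h | h
    · rw [hmdef, h.1]; nlinarith
    · rw [hmdef, h.1]; nlinarith
  have h2 : ‖Q‖ * ‖P‖ / (‖P‖ ^ 2 + r ^ 2) ≤ ‖Q‖ / m := by
    rw [div_le_div_iff₀ (by positivity) hm0]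
    calc ‖Q‖ * ‖P‖ * m ≤ ‖Q‖ * m * m := by gcongr
      _ = ‖Q‖ * m ^ 2 := by ring
      _ ≤ _ := by gcongr
  refine h2.trans (le_of_pow_le_pow' hj (by positivity) ?_)
  rw [div_pow, div_le_iff₀ (by positivity), mul_pow]
  calc ‖Q‖ ^ j ≤ K * m ^ (j + 1) := hQ
    _ = K * m * m ^ j := by ring
    _ ≤ K ^ j * ν ^ j * m ^ j := by
      have : K ≤ K ^ j := le_self_pow₀ hK (by omega)
      gcongr

lemma UU_large {K r : ℝ} {P Q : ℂ} (hP : 0 < ‖P‖) (hQP : ‖Q‖ ≤ K * ‖P‖) (hr : r ≤ ‖P‖ ^ 2)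
    (hr0 : 0 ≤ r) (hK : 0 ≤ K) : ‖UU P Q r - Q / P‖ ≤ K * r := by
  have hP0 : P ≠ 0 := norm_pos_iff.1 hP
  have hS : 0 < ‖P‖ ^ 2 + r ^ 2 := by positivity
  have e : UU P Q r - Q / P = - (Q / P) * ((r ^ 2 / (‖P‖ ^ 2 + r ^ 2) : ℝ) : ℂ) := by
    unfold UU
    have h1 : ((‖P‖ ^ 2 + r ^ 2 : ℝ) : ℂ) ≠ 0 := by exact_mod_cast hS.ne'
    have h2 : P * (starRingEnd ℂ) P = ((‖P‖ ^ 2 : ℝ) : ℂ) := by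
      rw [Complex.mul_conj, Complex.normSq_eq_norm_sq]
    rw [Complex.ofReal_div]
    field_simp
    rw [mul_comm _ P, h2]; push_cast; ring
  rw [e, norm_mul, norm_neg, norm_div, Complex.norm_real, Real.norm_of_nonneg (by positivity)]
  have h3 : ‖Q‖ / ‖P‖ ≤ K := by rwa [div_le_iff₀ hP]
  have h4 : r ^ 2 / (‖P‖ ^ 2 + r ^ 2) ≤ r := by
    rw [div_le_iff₀ hS]
    nlinarith [pow_nonneg hr0 3]
  gcongr

set_option maxHeartbeats 1000000 in
lemma UU_comp {j : ℕ} (hj : 1 ≤ j) {K r r' ρ : ℝ} (hK : 1 ≤ K) (hρ : 0 < ρ) (hρ1 : ρ ≤ 1)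
    (hr : r = ρ ^ (2 * j)) (hr0 : 0 ≤ r') (hrr : r' ≤ r) {P Q P' Q' : ℂ}
    (hPK : ‖P‖ ≤ K) (hPP : ‖P - P'‖ ≤ K * r ^ (j + 1)) (hQQ : ‖Q - Q'‖ ≤ K * r ^ (j + 1))
    (hQ : ‖Q‖ ^ j ≤ K * (max ‖P‖ r) ^ (j + 1)) (hQ' : ‖Q'‖ ^ j ≤ K * (max ‖P'‖ r') ^ (j + 1)) :
    ‖UU P Q r - UU P' Q' r'‖ ≤ 10 * K ^ 2 * ρ := by
  set x := ρ ^ j with hx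
  have hx0 : 0 < x := by positivity
  have hx1 : x ≤ 1 := pow_le_one₀ hρ.le hρ1
  have hxρ : x ≤ ρ := pow_le_of_le_one hρ.le hρ1 (by omega)
  have hrx : r = x ^ 2 := by rw [hr, hx, ← pow_mul, mul_comm]
  have hr1 : r ≤ x := by rw [hrx]; nlinarith
  have hrpos : 0 < r := by rw [hrx]; positivity
  have hrj : r ^ (j + 1) ≤ r ^ 2 := pow_le_pow_of_le_one hrpos.le (by linarith) (by omega)
  have hr2 : r ^ 2 ≤ x ^ 2 := by gcongr
  have hPP2 : ‖P - P'‖ ≤ K * x ^ 2 := hPP.trans (by gcongr; linarith)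
  have hQQ2 : ‖Q - Q'‖ ≤ K * x ^ 2 := hQQ.trans (by gcongr; linarith)
  have hxx : K * x ^ 2 ≤ K * x := by gcongr; nlinarith
  have tri1 : ‖P'‖ ≤ ‖P‖ + ‖P - P'‖ := by
    calc ‖P'‖ = ‖P - (P - P')‖ := by congr 1; ring
      _ ≤ _ := norm_sub_le _ _
  have tri2 : ‖P‖ ≤ ‖P'‖ + ‖P - P'‖ := by
    calc ‖P‖ = ‖P' + (P - P')‖ := by congr 1; ring
      _ ≤ _ := norm_add_le _ _
  rcases lt_or_ge ‖P‖ (2 * K * x) with hcase | hcase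
  · have hν : 3 * K * x ≤ (3 * K * ρ) ^ j := by
      rw [mul_pow]
      have : 3 * K ≤ (3 * K) ^ j := le_self_pow₀ (by linarith) (by omega)
      gcongr
    have hKx : x ≤ K * x := by nlinarith
    have m1 : max ‖P‖ r ≤ (3 * K * ρ) ^ j := by
      refine le_trans (max_le ?_ ?_) hν <;> nlinarith
    have m2 : max ‖P'‖ r' ≤ (3 * K * ρ) ^ j := by
      refine le_trans (max_le ?_ ?_) hν <;> nlinarith
    have u1 := UU_small hj hK hrpos.le (by positivity) hQ m1
    have u2 := UU_small hj hK hr0 (by positivity) hQ' m2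
    calc _ ≤ _ := norm_sub_le _ _
      _ ≤ K * (3 * K * ρ) + K * (3 * K * ρ) := add_le_add u1 u2
      _ = 6 * K ^ 2 * ρ := by ring
      _ ≤ _ := by gcongr; norm_num
  · have hP'low : K * x ≤ ‖P'‖ := by nlinarith
    have hKx : 0 < K * x := by positivity
    have hxKx : x ≤ K * x := by nlinarith
    have hP'0 : 0 < ‖P'‖ := by linarith
    have hP0 : 0 < ‖P‖ := by linarith
    have hPne : P ≠ 0 := norm_pos_iff.1 hP0
    have hPne' : P' ≠ 0 := norm_pos_iff.1 hP'0
    have m1 : max ‖P‖ r = ‖P‖ := max_eq_left (by linarith)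
    have m2 : max ‖P'‖ r' = ‖P'‖ := max_eq_left (by linarith)
    rw [m1] at hQ
    rw [m2] at hQ'
    have hxx1 : x ^ 2 ≤ 1 := pow_le_one₀ hx0.le hx1
    have hP'K : ‖P'‖ ≤ 2 * K := by nlinarith
    have hK1 : K * ‖P‖ ≤ 2 * K ^ 2 := by nlinarith
    have hK2 : K * ‖P'‖ ≤ 2 * K ^ 2 := by nlinarith
    have hK3 : 2 * K ^ 2 ≤ (2 * K ^ 2) ^ j := le_self_pow₀ (by nlinarith) (by omega)
    have q1 : ‖Q‖ ≤ (2 * K ^ 2) * ‖P‖ := by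
      refine le_of_pow_le_pow' hj (by positivity) ?_
      rw [mul_pow]
      calc _ ≤ K * ‖P‖ * ‖P‖ ^ j := by rw [mul_assoc, ← pow_succ']; exact hQ
        _ ≤ (2 * K ^ 2) * ‖P‖ ^ j := by gcongr
        _ ≤ _ := by gcongr
    have q2 : ‖Q'‖ ≤ (2 * K ^ 2) * ‖P'‖ := by
      refine le_of_pow_le_pow' hj (by positivity) ?_
      rw [mul_pow]
      calc _ ≤ K * ‖P'‖ * ‖P'‖ ^ j := by rw [mul_assoc, ← pow_succ']; exact hQ'
        _ ≤ (2 * K ^ 2) * ‖P'‖ ^ j := by gcongr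
        _ ≤ _ := by gcongr
    have u1 := UU_large hP0 q1 (r := r) (by rw [hrx]; gcongr; linarith) hrpos.le (by positivity)
    have u2 := UU_large hP'0 q2 (r := r') (hrr.trans (by rw [hrx]; gcongr; linarith)) hr0 (by positivity)
    have u3 : ‖Q / P - Q' / P'‖ ≤ (2 * K ^ 2 + 1) * x := by
      have e : Q / P - Q' / P' = -(Q / P * ((P - P') / P')) + (Q - Q') / P' := by
        field_simp; ring
      rw [e]
      refine (norm_add_le _ _).trans ?_
      rw [norm_neg, norm_mul, norm_div, norm_div, norm_div]
      have a1 : ‖Q‖ / ‖P‖ ≤ 2 * K ^ 2 := by rwa [div_le_iff₀ hP0]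
      have a2 : ‖P - P'‖ / ‖P'‖ ≤ x := by
        rw [div_le_iff₀ hP'0]; nlinarith
      have a3 : ‖Q - Q'‖ / ‖P'‖ ≤ x := by
        rw [div_le_iff₀ hP'0]; nlinarith
      calc _ ≤ (2 * K ^ 2) * x + x := by gcongr
        _ = _ := by ring
    have e : UU P Q r - UU P' Q' r' = (UU P Q r - Q / P) + (Q / P - Q' / P') - (UU P' Q' r' - Q' / P') := by
      ring
    rw [e]
    have hrρ : r ≤ ρ := hr1.trans hxρ
    calc _ ≤ ‖(UU P Q r - Q / P) + (Q / P - Q' / P')‖ + _ := norm_sub_le _ _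
      _ ≤ (‖UU P Q r - Q / P‖ + ‖Q / P - Q' / P'‖) + _ := by gcongr; exact norm_add_le _ _
      _ ≤ (2 * K ^ 2 * r + (2 * K ^ 2 + 1) * x) + 2 * K ^ 2 * r' := by gcongr
      _ ≤ (2 * K ^ 2 * ρ + (2 * K ^ 2 + 1) * ρ) + 2 * K ^ 2 * ρ := by gcongr; linarith
      _ = (6 * K ^ 2 + 1) * ρ := by ring
      _ ≤ _ := by gcongr; nlinarith

lemma UU_self {j : ℕ} (hj : 1 ≤ j) (f : ℂ) : UU (f ^ j) (f ^ (j + 1)) 0 = f := by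
  unfold UU
  rcases eq_or_ne f 0 with rfl | hf
  · simp
  have h2 : f ^ j * (starRingEnd ℂ) (f ^ j) = ((‖f ^ j‖ ^ 2 + 0 ^ 2 : ℝ) : ℂ) := by
    rw [Complex.mul_conj, Complex.normSq_eq_norm_sq]; simp
  rw [← h2, pow_succ', mul_assoc, mul_div_assoc, div_self, mul_one]
  have : f ^ j ≠ 0 := pow_ne_zero _ hf
  exact mul_ne_zero this ((map_ne_zero _).2 this)

/-! ### The Cauchy-Pompeiu formula -/

/-- the Wirtinger derivative -/
def dbar (φ : ℂ → ℂ) (z : ℂ) : ℂ :=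
  (1 / 2) * (fderiv ℝ φ z 1 + Complex.I * fderiv ℝ φ z Complex.I)

lemma dbar_rot (L : ℂ →L[ℝ] ℂ) {c s : ℝ} (h : c ^ 2 + s ^ 2 = 1) :
    (L 1 + Complex.I * L Complex.I) =
      (L (c + s * Complex.I) + Complex.I * L (Complex.I * (c + s * Complex.I))) *
        (c + s * Complex.I) := by
  have e1 : (c + s * Complex.I : ℂ) = c • (1 : ℂ) + s • Complex.I := by simp
  have e2 : (Complex.I * (c + s * Complex.I) : ℂ) = c • Complex.I - s • (1 : ℂ) := by
    simp only [Complex.real_smul]; linear_combination s * Complex.I_sq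
  have h' : (c : ℂ) ^ 2 + (s : ℂ) ^ 2 = 1 := by exact_mod_cast h
  rw [e2, map_sub, L.map_smul, L.map_smul, e1, map_add, L.map_smul, L.map_smul]
  simp only [Complex.real_smul]
  have hI := Complex.I_sq
  linear_combination (-(L 1) - Complex.I * L Complex.I) * h' + (s * s * (L 1) -c * s * (L Complex.I)) * hI

lemma pompeiu {φ : ℂ → ℂ} (hφ : ContDiff ℝ 1 φ) (hs : HasCompactSupport φ) :
    ∫ ζ, dbar φ ζ / ζ = - (Real.pi * φ 0) := by
  have hD : Continuous (fderiv ℝ φ) := hφ.continuous_fderiv (by norm_num)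
  have hdiff : Differentiable ℝ φ := hφ.differentiable (by norm_num)
  obtain ⟨A, hA0, hA⟩ : ∃ A : ℝ, 0 < A ∧ ∀ z : ℂ, A ≤ ‖z‖ → φ z = 0 ∧ fderiv ℝ φ z = 0 := by
    obtain ⟨A, hA0, hA⟩ := hs.isCompact.isBounded.subset_ball_lt 0 0
    refine ⟨A, hA0, fun z hz => ?_⟩
    have hz' : z ∉ tsupport φ := fun h => by
      have := hA h; rw [Metric.mem_ball, dist_zero_right] at this; linarith
    exact ⟨image_eq_zero_of_notMem_tsupport hz',
      image_eq_zero_of_notMem_tsupport fun h => hz' (tsupport_fderiv_subset ℝ h)⟩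
  let e : ℝ → ℂ := fun θ => (Real.cos θ : ℂ) + Real.sin θ * Complex.I
  have he : Continuous e := by fun_prop
  have hen : ∀ θ, ‖e θ‖ = 1 := fun θ => by
    simp only [e]
    rw [Complex.ofReal_cos, Complex.ofReal_sin, ← Complex.exp_mul_I, Complex.norm_exp_ofReal_mul_I]
  have hed : ∀ θ, HasDerivAt e (Complex.I * e θ) θ := by
    intro θ
    have h1 := (Real.hasDerivAt_cos θ).ofReal_comp
    have h2 := (Real.hasDerivAt_sin θ).ofReal_comp
    have := h1.add (h2.mul_const Complex.I)
    refine HasDerivAt.congr_deriv this ?_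
    change _ = Complex.I * ((Real.cos θ : ℂ) + Real.sin θ * Complex.I)
    push_cast; linear_combination (-Complex.sin θ : ℂ) * Complex.I_sq
  let g1 : ℝ × ℝ → ℂ := fun p => fderiv ℝ φ (p.1 * e p.2) (e p.2)
  let g2 : ℝ × ℝ → ℂ := fun p => fderiv ℝ φ (p.1 * e p.2) (Complex.I * e p.2)
  have hc1 : Continuous g1 := by
    apply Continuous.clm_apply
    · exact hD.comp (by fun_prop)
    · fun_prop
  have hc2 : Continuous g2 := by
    apply Continuous.clm_apply
    · exact hD.comp (by fun_prop)
    · fun_prop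
  have hnorm : ∀ p : ℝ × ℝ, A < p.1 → A ≤ ‖(p.1 : ℂ) * e p.2‖ := by
    intro p hp
    rw [norm_mul, hen, mul_one, Complex.norm_real, Real.norm_of_nonneg (by linarith)]; exact hp.le
  have hIntg : ∀ g : ℝ × ℝ → ℂ, Continuous g → (∀ p : ℝ × ℝ, A < p.1 → g p = 0) →
      IntegrableOn g (Ioi 0 ×ˢ Ioo (-Real.pi) Real.pi) := by
    intro g hg hg0
    have : IntegrableOn g (Ioc 0 A ×ˢ Ioo (-Real.pi) Real.pi) := by
      refine (hg.continuousOn.integrableOn_compact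
        ((isCompact_Icc (a := (0 : ℝ)) (b := A)).prod
          (isCompact_Icc (a := -Real.pi) (b := Real.pi)))).mono_set ?_
      exact prod_mono Ioc_subset_Icc_self Ioo_subset_Icc_self
    refine this.of_forall_sdiff_eq_zero (measurableSet_Ioi.prod measurableSet_Ioo) ?_
    rintro ⟨x, y⟩ ⟨⟨h1, h2⟩, h3⟩
    apply hg0
    by_contra hle
    exact h3 ⟨⟨h1, not_lt.1 hle⟩, h2⟩
  have hi1 := hIntg g1 hc1 (fun p hp => by simp only [g1]; rw [(hA _ (hnorm p hp)).2]; simp)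
  have hi2 := hIntg g2 hc2 (fun p hp => by simp only [g2]; rw [(hA _ (hnorm p hp)).2]; simp)
  have hI1 : ∫ p in Ioi (0 : ℝ) ×ˢ Ioo (-Real.pi) Real.pi, g1 p = - (2 * Real.pi * φ 0) := by
    rw [Measure.volume_eq_prod, ← setIntegral_prod_swap, setIntegral_prod _ (by
      rw [Measure.volume_eq_prod] at hi1; exact hi1.swap)]
    have : ∀ θ : ℝ, ∫ ρ in Ioi (0 : ℝ), g1 (Prod.swap (θ, ρ)) = - φ 0 := by
      intro θ
      have h1 := integral_Ioi_of_hasDerivAt_of_tendsto' (f := fun ρ : ℝ => φ (ρ * e θ))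
        (f' := fun ρ => g1 (ρ, θ)) (a := 0) (m := 0) ?_ ?_ ?_
      · simpa using h1
      · intro ρ _
        have a1 : HasDerivAt (fun ρ : ℝ => (ρ : ℂ) * e θ) (e θ) ρ := by
          simpa using (Complex.ofRealCLM.hasDerivAt (x := ρ)).mul_const (e θ)
        exact (hdiff _).hasFDerivAt.comp_hasDerivAt ρ a1
      · have : IntegrableOn (fun ρ => g1 (ρ, θ)) (Ioc 0 A) := by
          refine (Continuous.continuousOn (by fun_prop)).integrableOn_compact isCompact_Icc |>.mono_set
            (Ioc_subset_Icc_self)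
        refine this.of_forall_sdiff_eq_zero measurableSet_Ioi ?_
        rintro ρ ⟨h1, h2⟩
        have : A < ρ := by
          by_contra hle; exact h2 ⟨h1, not_lt.1 hle⟩
        simp only [g1]; rw [(hA _ (hnorm (ρ, θ) this)).2]; simp
      · refine tendsto_const_nhds.congr' ?_
        filter_upwards [eventually_gt_atTop A] with ρ hρ
        exact ((hA _ (hnorm (ρ, θ) hρ)).1).symm
    simp_rw [this]
    rw [setIntegral_const]
    rw [Real.volume_real_Ioo_of_le (by linarith [Real.pi_pos]), Complex.real_smul]
    push_cast; ring
  have hI2 : ∫ p in Ioi (0 : ℝ) ×ˢ Ioo (-Real.pi) Real.pi, g2 p = 0 := by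
    rw [Measure.volume_eq_prod, setIntegral_prod _ (by rw [Measure.volume_eq_prod] at hi2; exact hi2)]
    rw [setIntegral_congr_fun (g := fun _ => 0) measurableSet_Ioi]
    · simp
    intro ρ hρ
    have hρ0 : (ρ : ℂ) ≠ 0 := by exact_mod_cast (ne_of_gt hρ)
    simp only
    rw [← integral_Ioc_eq_integral_Ioo, ← intervalIntegral.integral_of_le (by linarith [Real.pi_pos])]
    rw [intervalIntegral.integral_eq_sub_of_hasDerivAt (f := fun θ => (1 / (ρ : ℂ)) * φ (ρ * e θ))]
    · simp [e]
    · intro θ _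
      have a1 : HasDerivAt (fun θ : ℝ => (ρ : ℂ) * e θ) (ρ * (Complex.I * e θ)) θ :=
        (hed θ).const_mul _
      have a2 := ((hdiff _).hasFDerivAt.comp_hasDerivAt θ a1).const_mul (1 / (ρ : ℂ))
      refine HasDerivAt.congr_deriv a2 ?_
      change _ = (fderiv ℝ φ (ρ * e θ)) (Complex.I * e θ)
      rw [← Complex.real_smul, ← Complex.real_smul, ContinuousLinearMap.map_smul, Complex.real_smul]
      field_simp
    · exact (Continuous.intervalIntegrable (by fun_prop) _ _)
  rw [← Complex.integral_comp_polarCoord_symm, polarCoord_target]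
  rw [setIntegral_congr_fun (g := fun p => (1 / 2 : ℂ) * g1 p + (1 / 2 * Complex.I) * g2 p)
    (measurableSet_Ioi.prod measurableSet_Ioo)]
  · rw [integral_add (hi1.const_mul _) (hi2.const_mul _), integral_const_mul, integral_const_mul,
      hI1, hI2]
    ring
  · rintro ⟨ρ, θ⟩ ⟨hρ, -⟩
    have hρ0 : (ρ : ℂ) ≠ 0 := by exact_mod_cast (ne_of_gt hρ)
    have he0 : e θ ≠ 0 := by
      intro h; have := hen θ; rw [h] at this; simp at this
    simp only [Complex.polarCoord_symm_apply, dbar]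
    have := dbar_rot (fderiv ℝ φ (ρ * e θ)) (c := Real.cos θ) (s := Real.sin θ) (by
      rw [add_comm]; exact Real.sin_sq_add_cos_sq θ)
    change ρ • (1 / 2 * (fderiv ℝ φ (ρ * e θ) 1 + Complex.I * fderiv ℝ φ (ρ * e θ) Complex.I) /
      (ρ * e θ)) = _
    rw [this]
    change ρ • (1 / 2 * ((g1 (ρ, θ) + Complex.I * g2 (ρ, θ)) * e θ) / (ρ * e θ)) = _
    rw [Complex.real_smul]
    field_simp

lemma integrable_div_sub {g : ℂ → ℂ} (hg : Continuous g) (hs : HasCompactSupport g) (z : ℂ) :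
    Integrable (fun ζ => g ζ / (ζ - z)) := by
  have key : ∀ g : ℂ → ℂ, Continuous g → HasCompactSupport g → Integrable (fun ζ => g ζ / ζ) := by
    intro g hg hs
    obtain ⟨A, hA0, hA⟩ := hs.isCompact.isBounded.subset_ball_lt 0 0
    obtain ⟨B, hB⟩ := hg.bounded_above_of_compact_support hs
    have h1 : IntegrableOn (fun ζ => g ζ / ζ) (Metric.ball 0 A) := by
      refine integrableOn_ball_of_norm_le_rpow (C := B) (α := 1) (by simp)
        (by simp) ?_ ?_
      · refine Eventually.of_forall fun ζ => ?_
        rw [norm_div, Real.rpow_neg_one, div_eq_mul_inv]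
        gcongr
        exact hB ζ
      · exact (hg.measurable.div measurable_id).aestronglyMeasurable
    rw [← integrableOn_univ]
    refine h1.of_forall_sdiff_eq_zero MeasurableSet.univ ?_
    rintro x ⟨-, hx⟩
    rw [image_eq_zero_of_notMem_tsupport (fun h => hx (hA h)), zero_div]
  have h2 := key (fun ζ => g (ζ + z)) (by fun_prop) (hs.comp_homeomorph (Homeomorph.addRight z))
  have h3 := h2.comp_sub_right z
  simpa using h3

lemma dbar_mul {f g : ℂ → ℂ} {z : ℂ} (hf : DifferentiableAt ℝ f z) (hg : DifferentiableAt ℝ g z) :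
    dbar (fun z => f z * g z) z = f z * dbar g z + g z * dbar f z := by
  unfold dbar
  rw [fderiv_fun_mul hf hg]
  simp only [add_apply, smul_apply, smul_eq_mul]
  ring

lemma dbar_continuous {f : ℂ → ℂ} (hf : ContDiff ℝ 1 f) : Continuous (dbar f) := by
  have := hf.continuous_fderiv (by norm_num)
  unfold dbar
  fun_prop

lemma dbar_zero_of_eventuallyEq_const {f : ℂ → ℂ} {z c : ℂ} (h : f =ᶠ[nhds z] fun _ => c) :
    dbar f z = 0 := by
  unfold dbar
  rw [h.fderiv_eq]
  simp

lemma pompeiu_split {u : ℂ → ℂ} (hu : ContDiff ℝ 1 u) {a : ℝ} (ha : 0 < a) :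
    ∃ χ : ℂ → ℝ, (∀ z, 0 ≤ χ z) ∧ (∀ z, χ z ≤ 1) ∧ (∀ z, a ≤ ‖z‖ → χ z = 0) ∧
      ∃ R : ℂ → ℂ, DifferentiableOn ℂ R (Metric.ball 0 (a / 2)) ∧
        ∀ z ∈ Metric.ball (0 : ℂ) (a / 2),
          R z - u z = (1 / Real.pi : ℂ) * ∫ ζ, (χ ζ * dbar u ζ) / (ζ - z) := by
  let χ : ContDiffBump (0 : ℂ) := ⟨3 * a / 4, a, by positivity, by linarith⟩
  have hχs : ∀ z : ℂ, a ≤ ‖z‖ → χ z = 0 := by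
    intro z hz
    apply χ.zero_of_le_dist
    simpa [χ] using hz
  refine ⟨χ, fun z => χ.nonneg, fun z => χ.le_one, hχs, ?_⟩
  let X : ℂ → ℂ := fun z => (χ z : ℂ)
  have hX : ContDiff ℝ 1 X := Complex.ofRealCLM.contDiff.comp χ.contDiff
  have hXc : HasCompactSupport X := χ.hasCompactSupport.comp_left (g := fun x : ℝ => (x : ℂ)) (by simp)
  have hXd : Differentiable ℝ X := hX.differentiable (by norm_num)
  have hud : Differentiable ℝ u := hu.differentiable (by norm_num)
  have hX1 : ∀ z : ℂ, ‖z‖ < 3 * a / 4 → dbar X z = 0 := by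
    intro z hz
    refine dbar_zero_of_eventuallyEq_const (c := 1) ?_
    have : Metric.ball (0 : ℂ) (3 * a / 4) ∈ nhds z := Metric.isOpen_ball.mem_nhds (by simpa using hz)
    filter_upwards [this] with y hy
    simp only [X]
    rw [χ.one_of_mem_closedBall (Metric.ball_subset_closedBall hy)]; simp
  have hdX : HasCompactSupport (dbar X) := by
    refine HasCompactSupport.of_support_subset_isCompact hXc.isCompact ?_
    intro z hz
    by_contra h
    apply hz
    have : fderiv ℝ X z = 0 := image_eq_zero_of_notMem_tsupport fun h' => h (tsupport_fderiv_subset ℝ h')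
    simp [dbar, this]
  let g : ℂ → ℂ := fun ζ => u ζ * dbar X ζ
  have hg : Continuous g := hu.continuous.mul (dbar_continuous hX)
  have hgs : HasCompactSupport g := hdX.mul_left
  have hg0 : ∀ z : ℂ, ‖z‖ < 3 * a / 4 → g z = 0 := fun z hz => by simp [g, hX1 z hz]
  have hw : Continuous (fun ζ => X ζ * dbar u ζ) := hX.continuous.mul (dbar_continuous hu)
  have hws : HasCompactSupport (fun ζ => X ζ * dbar u ζ) := hXc.mul_right
  refine ⟨fun z => - (1 / Real.pi : ℂ) * ∫ ζ, g ζ / (ζ - z), ?_, ?_⟩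
  · intro z0 hz0
    apply DifferentiableAt.differentiableWithinAt
    apply DifferentiableAt.const_mul
    have hsep : ∀ ζ : ℂ, g ζ ≠ 0 → ∀ z ∈ Metric.ball (0 : ℂ) (a / 2), a / 4 ≤ ‖ζ - z‖ := by
      intro ζ hζ z hz
      have h1 : 3 * a / 4 ≤ ‖ζ‖ := by
        by_contra h; exact hζ (hg0 ζ (not_le.1 h))
      have h2 : ‖z‖ < a / 2 := by simpa using hz
      have := norm_sub_norm_le ζ z
      linarith
    have := hasDerivAt_integral_of_dominated_loc_of_deriv_le (μ := volume) (𝕜 := ℂ)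
      (bound := fun ζ => ‖g ζ‖ * (4 / a) ^ 2) (F := fun z ζ => g ζ / (ζ - z)) (x₀ := z0)
      (s := Metric.ball 0 (a / 2)) (F' := fun z ζ => g ζ / (ζ - z) ^ 2)
      (Metric.isOpen_ball.mem_nhds hz0) ?_ ?_ ?_ ?_ ?_ ?_
    · exact this.2.differentiableAt
    · refine Eventually.of_forall fun z => (integrable_div_sub hg hgs z).aestronglyMeasurable
    · exact integrable_div_sub hg hgs z0
    · exact (hg.measurable.div (by fun_prop)).aestronglyMeasurable
    · refine Eventually.of_forall fun ζ z hz => ?_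
      by_cases h0 : g ζ = 0
      · simp [h0]
      · have := hsep ζ h0 z hz
        rw [norm_div, norm_pow, div_eq_mul_inv, ← inv_pow]
        gcongr
        rw [inv_le_comm₀ (by linarith) (by positivity), inv_div]; exact this
    · exact (hg.integrable_of_hasCompactSupport hgs).norm.mul_const _
    · refine Eventually.of_forall fun ζ z hz => ?_
      by_cases h0 : g ζ = 0
      · simp only [h0, zero_div]; exact hasDerivAt_const _ _
      · have h1 := hsep ζ h0 z hz
        have h2 : ζ - z ≠ 0 := by
          intro h; rw [h, norm_zero] at h1; linarith
        have h3 : HasDerivAt (fun z => ζ - z) (-1) z := by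
          simpa using (hasDerivAt_id z).const_sub ζ
        have h4 := (hasDerivAt_const z (g ζ)).div h3 h2
        refine h4.congr_deriv ?_
        simp
  · intro z hz
    have hz' : ‖z‖ < a / 2 := by simpa using hz
    let φ : ℂ → ℂ := fun ζ => X (z + ζ) * u (z + ζ)
    have hφ : ContDiff ℝ 1 φ := by
      have h1 : ContDiff ℝ 1 (fun ζ : ℂ => z + ζ) := by fun_prop
      exact (hX.comp h1).mul (hu.comp h1)
    have hφs : HasCompactSupport φ :=
      (hXc.comp_homeomorph (Homeomorph.addLeft z)).mul_right
    have h1 := pompeiu hφ hφs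
    have h2 : ∀ ζ, dbar φ ζ = X (z + ζ) * dbar u (z + ζ) + g (z + ζ) := by
      intro ζ
      have e : dbar φ ζ = dbar (fun ζ => X ζ * u ζ) (z + ζ) := by
        unfold dbar
        have := fderiv_comp_add_left (𝕜 := ℝ) (f := fun ζ => X ζ * u ζ) (x := ζ) z
        simp only [φ]
        rw [this]
      rw [e, dbar_mul (hXd _) (hud _)]
    have h3 : φ 0 = u z := by
      simp only [φ, add_zero, X]
      rw [χ.one_of_mem_closedBall (by simp [χ]; linarith)]; simp
    have h4 : ∫ ζ, dbar φ ζ / ζ = ∫ ζ, (X ζ * dbar u ζ + g ζ) / (ζ - z) := by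
      rw [← integral_add_left_eq_self (fun ζ => (X ζ * dbar u ζ + g ζ) / (ζ - z)) z]
      congr 1; ext ζ; rw [h2]; simp
    rw [h4, h3] at h1
    simp_rw [add_div] at h1
    rw [integral_add (integrable_div_sub hw hws z) (integrable_div_sub hg hgs z)] at h1
    have hpi : (Real.pi : ℂ) ≠ 0 := by exact_mod_cast Real.pi_ne_zero
    change - (1 / Real.pi : ℂ) * (∫ ζ, g ζ / (ζ - z)) - u z = (1 / Real.pi : ℂ) * ∫ ζ, (X ζ * dbar u ζ) / (ζ - z)
    have h5 : ∫ ζ, g ζ / (ζ - z) = - (Real.pi * u z) - ∫ ζ, (X ζ * dbar u ζ) / (ζ - z) := by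
      rw [← h1]; simp
    rw [h5]
    field_simp
    simp

/-- planar weakly singular integrals -/
lemma area_bound {κ : ℝ} (hκ : 0 < κ) (hκ1 : κ < 1) : ∃ J : ℝ, 0 ≤ J ∧ ∀ (S : Multiset ℂ) (A : ℝ) (w : ℂ → ℂ) (z : ℂ),
    0 ≤ A → (∀ ζ, 1 ≤ ‖ζ‖ → w ζ = 0) →
    (∀ ζ, ‖ζ‖ < 1 → ζ ∉ S → ‖w ζ‖ ≤ A * (S.map fun α => ‖ζ - α‖ ^ (κ - 1)).sum) →
    ‖∫ ζ, w ζ / (ζ - z)‖ ≤ A * Multiset.card S * J := by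
  let k : ℂ → ℝ := (Metric.ball (0 : ℂ) 1).indicator fun ζ => ‖ζ‖ ^ (κ - 2)
  let o : ℂ → ℝ := (Metric.ball (0 : ℂ) 1).indicator fun _ => 1
  have hk : Integrable k := by
    refine (integrableOn_ball_of_norm_le_rpow (C := 1) (α := 2 - κ) (by simp) (by simp; linarith) ?_ ?_).integrable_indicator
      measurableSet_ball
    · refine Eventually.of_forall fun ζ => ?_
      rw [Real.norm_of_nonneg (by positivity)]; simp
    · exact (measurable_norm.pow_const _).aestronglyMeasurable
  have ho : Integrable o :=
    (integrableOn_const (by simp)).integrable_indicator measurableSet_ball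
  have hk0 : ∀ ζ, 0 ≤ k ζ := fun ζ => indicator_nonneg (fun _ _ => by positivity) ζ
  have ho0 : ∀ ζ, 0 ≤ o ζ := fun ζ => indicator_nonneg (fun _ _ => by positivity) ζ
  let J0 := (∫ ζ, o ζ) + ∫ ζ, k ζ
  have hJ0 : 0 ≤ J0 := add_nonneg (integral_nonneg ho0) (integral_nonneg hk0)
  refine ⟨2 * J0, by positivity, ?_⟩
  intro S A w z hA hw0 hw
  let b : ℂ → ℂ → ℝ := fun α ζ => o ζ + k (ζ - α)
  have hb : ∀ α, Integrable (b α) := fun α => ho.add (hk.comp_sub_right α)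
  have hbi : ∀ α, ∫ ζ, b α ζ = J0 := by
    intro α
    simp only [b]
    rw [integral_add ho (hk.comp_sub_right α), integral_sub_right_eq_self]
  have hbb : ∀ α ζ, ‖ζ‖ < 1 → ‖ζ - α‖ ^ (κ - 2) ≤ b α ζ := by
    intro α ζ hζ
    have h1 : o ζ = 1 := indicator_of_mem (by simpa using hζ) _
    simp only [b]
    rw [h1]
    by_cases h : ‖ζ - α‖ < 1
    · have : k (ζ - α) = ‖ζ - α‖ ^ (κ - 2) := indicator_of_mem (by simpa using h) _
      rw [this]; linarith
    · have : ‖ζ - α‖ ^ (κ - 2) ≤ 1 := Real.rpow_le_one_of_one_le_of_nonpos (not_lt.1 h) (by linarith)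
      have := hk0 (ζ - α)
      linarith
  have hbnn : ∀ α ζ, 0 ≤ b α ζ := fun α ζ => add_nonneg (ho0 _) (hk0 _)
  have hkey : ∀ x y : ℝ, 0 < x → 0 < y → x ^ (κ - 1) * y⁻¹ ≤ x ^ (κ - 2) + y ^ (κ - 2) := by
    intro x y hx hy
    have e : ∀ v : ℝ, 0 < v → v ^ (κ - 2) = v ^ (κ - 1) * v⁻¹ := by
      intro v hv
      rw [← Real.rpow_neg_one v, ← Real.rpow_add hv]; ring_nf
    have p1 : 0 < x ^ (κ - 2) := by positivity
    have p2 : 0 < y ^ (κ - 2) := by positivity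
    rcases le_total x y with h | h
    · have : x ^ (κ - 1) * y⁻¹ ≤ x ^ (κ - 1) * x⁻¹ := by gcongr
      rw [← e x hx] at this; linarith
    · have : x ^ (κ - 1) * y⁻¹ ≤ y ^ (κ - 1) * y⁻¹ := by
        gcongr ?_ * _
        exact Real.rpow_le_rpow_of_nonpos hy h (by linarith)
      rw [← e y hy] at this; linarith
  let B : ℂ → ℝ := fun ζ => A * (S.map fun α => b α ζ + b z ζ).sum
  have hBint : Integrable B ∧ ∫ ζ, B ζ = A * Multiset.card S * (2 * J0) := by
    have : ∀ S : Multiset ℂ, Integrable (fun ζ => (S.map fun α => b α ζ + b z ζ).sum) ∧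
        ∫ ζ, (S.map fun α => b α ζ + b z ζ).sum = Multiset.card S * (2 * J0) := by
      intro S
      induction S using Multiset.induction_on with
      | empty => simp
      | cons α S ih =>
        simp only [Multiset.map_cons, Multiset.sum_cons, Multiset.card_cons]
        have h1 : Integrable (fun ζ => b α ζ + b z ζ) := (hb α).add (hb z)
        refine ⟨h1.add ih.1, ?_⟩
        rw [integral_add h1 ih.1, ih.2, integral_add (hb α) (hb z), hbi, hbi]
        push_cast; ring
    refine ⟨(this S).1.const_mul A, ?_⟩
    simp only [B]
    rw [integral_const_mul, (this S).2]; ring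
  rw [← hBint.2]
  refine norm_integral_le_of_norm_le hBint.1 ?_
  have hnull : ∀ᵐ ζ : ℂ, ζ ∉ ((S.toFinset ∪ {z} : Finset ℂ) : Set ℂ) :=
    measure_eq_zero_iff_ae_notMem.1 ((S.toFinset ∪ {z} : Finset ℂ).finite_toSet.measure_zero volume)
  have hsumnn : ∀ ζ, 0 ≤ (S.map fun α => b α ζ + b z ζ).sum := by
    intro ζ
    apply Multiset.sum_nonneg
    intro x hx
    obtain ⟨α, -, rfl⟩ := Multiset.mem_map.1 hx
    exact add_nonneg (hbnn _ _) (hbnn _ _)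
  filter_upwards [hnull] with ζ hζ
  simp only [Finset.coe_union, Finset.coe_singleton, union_singleton, mem_insert_iff, Finset.mem_coe,
    Multiset.mem_toFinset, not_or] at hζ
  rcases le_or_gt 1 ‖ζ‖ with h1 | h1
  · rw [hw0 ζ h1]; simp; exact mul_nonneg hA (hsumnn ζ)
  have hzz : 0 < ‖ζ - z‖ := norm_pos_iff.2 (sub_ne_zero.2 hζ.1)
  rw [norm_div, div_eq_mul_inv]
  calc ‖w ζ‖ * ‖ζ - z‖⁻¹ ≤ (A * (S.map fun α => ‖ζ - α‖ ^ (κ - 1)).sum) * ‖ζ - z‖⁻¹ := by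
        have := hw ζ h1 hζ.2; gcongr
    _ = A * (S.map fun α => ‖ζ - α‖ ^ (κ - 1) * ‖ζ - z‖⁻¹).sum := by
        rw [mul_assoc, Multiset.sum_map_mul_right]
    _ ≤ B ζ := by
        simp only [B]
        refine mul_le_mul_of_nonneg_left ?_ hA
        refine Multiset.sum_map_le_sum_map _ _ ?_
        intro α hα
        have hαα : 0 < ‖ζ - α‖ := norm_pos_iff.2 (sub_ne_zero.2 (fun h => hζ.2 (h ▸ hα)))
        exact (hkey _ _ hαα hzz).trans (add_le_add (hbb α ζ h1) (hbb z ζ h1))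

lemma dbar_add {f g : ℂ → ℂ} {z : ℂ} (hf : DifferentiableAt ℝ f z) (hg : DifferentiableAt ℝ g z) :
    dbar (fun z => f z + g z) z = dbar f z + dbar g z := by
  unfold dbar
  rw [fderiv_fun_add hf hg]
  simp only [add_apply]
  ring

lemma dbar_holo {f : ℂ → ℂ} {z c : ℂ} (hf : HasDerivAt f c z) : dbar f z = 0 := by
  have h := hf.hasFDerivAt.restrictScalars ℝ
  unfold dbar
  rw [h.fderiv]
  simp
  linear_combination c * Complex.I_mul_I

lemma dbar_conj {f : ℂ → ℂ} {z c : ℂ} (hf : HasDerivAt f c z) :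
    dbar (fun z => (starRingEnd ℂ) (f z)) z = (starRingEnd ℂ) c := by
  have h := hf.hasFDerivAt.restrictScalars ℝ
  have h2 : HasFDerivAt (fun z => (starRingEnd ℂ) (f z)) _ z :=
    Complex.conjCLE.toContinuousLinearMap.hasFDerivAt.comp z h
  unfold dbar
  rw [h2.fderiv]
  simp
  linear_combination (- (1 / 2) * (starRingEnd ℂ) c) * Complex.I_mul_I

open Polynomial in
lemma UU_contDiff (P Q : ℂ[X]) {r : ℝ} (hr : 0 < r) :
    ContDiff ℝ 1 (fun z => UU (P.eval z) (Q.eval z) r) := by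
  have hP : ContDiff ℝ 1 (fun z : ℂ => P.eval z) := by
    have := (P.contDiff_aeval (𝕜 := ℂ) (R := ℂ) 1).restrict_scalars ℝ
    simpa using this
  have hQ : ContDiff ℝ 1 (fun z : ℂ => Q.eval z) := by
    have := (Q.contDiff_aeval (𝕜 := ℂ) (R := ℂ) 1).restrict_scalars ℝ
    simpa using this
  have hc : ContDiff ℝ 1 (fun z : ℂ => (starRingEnd ℂ) (P.eval z)) :=
    Complex.conjCLE.toContinuousLinearMap.contDiff.comp hP
  unfold UU
  simp_rw [div_eq_mul_inv]
  refine (hQ.mul hc).mul (ContDiff.inv ?_ ?_)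
  · exact Complex.ofRealCLM.contDiff.comp (((contDiff_norm_sq ℝ).comp hP).add contDiff_const)
  · intro z
    have : 0 < ‖P.eval z‖ ^ 2 + r ^ 2 := by positivity
    exact_mod_cast this.ne'

open Polynomial in
lemma UU_dbar (P Q : ℂ[X]) {r : ℝ} (hr : 0 < r) (z : ℂ) :
    ‖dbar (fun z => UU (P.eval z) (Q.eval z) r) z‖ =
      ‖Q.eval z‖ * ‖P.derivative.eval z‖ * r ^ 2 / (‖P.eval z‖ ^ 2 + r ^ 2) ^ 2 := by
  set u : ℂ → ℂ := fun z => UU (P.eval z) (Q.eval z) r with hu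
  have hud : DifferentiableAt ℝ u z := (UU_contDiff P Q hr).differentiable (by norm_num) z
  have hP := P.hasDerivAt z
  have hQ := Q.hasDerivAt z
  have hPd : DifferentiableAt ℝ (fun z : ℂ => P.eval z) z := hP.differentiableAt.restrictScalars ℝ
  have hQd : DifferentiableAt ℝ (fun z : ℂ => Q.eval z) z := hQ.differentiableAt.restrictScalars ℝ
  have hcd : DifferentiableAt ℝ (fun z : ℂ => (starRingEnd ℂ) (P.eval z)) z :=
    Complex.conjCLE.toContinuousLinearMap.differentiableAt.comp z hPd
  let S : ℂ → ℂ := fun z => P.eval z * (starRingEnd ℂ) (P.eval z) + (r : ℂ) ^ 2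
  have hSd : DifferentiableAt ℝ S z := (hPd.mul hcd).add (differentiableAt_const _)
  have hS : ∀ z, S z = ((‖P.eval z‖ ^ 2 + r ^ 2 : ℝ) : ℂ) := by
    intro z; simp only [S]; rw [Complex.mul_conj']; push_cast; rfl
  have hS0 : S z ≠ 0 := by
    rw [hS]
    have : 0 < ‖P.eval z‖ ^ 2 + r ^ 2 := by positivity
    exact_mod_cast this.ne'
  have hdS : dbar S z = P.eval z * (starRingEnd ℂ) (P.derivative.eval z) := by
    simp only [S]
    rw [dbar_add (hPd.fun_mul hcd) (differentiableAt_const _), dbar_mul hPd hcd, dbar_conj hP, dbar_holo hP,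
      dbar_holo (hasDerivAt_const z _)]
    ring
  have h1 : (fun z => u z * S z) = fun z => Q.eval z * (starRingEnd ℂ) (P.eval z) := by
    ext w
    have : S w ≠ 0 := by
      rw [hS]
      have : 0 < ‖P.eval w‖ ^ 2 + r ^ 2 := by positivity
      exact_mod_cast this.ne'
    simp only [hu, UU]
    rw [← hS]
    field_simp
  have h2 := dbar_mul hud hSd
  rw [h1, dbar_mul hQd hcd, dbar_conj hP, dbar_holo hQ, hdS] at h2
  have h3 : u z * S z = Q.eval z * (starRingEnd ℂ) (P.eval z) := congrFun h1 z
  have h4 : dbar u z * S z ^ 2 = Q.eval z * (starRingEnd ℂ) (P.derivative.eval z) * (r : ℂ) ^ 2 := by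
    have h5 : S z = P.eval z * (starRingEnd ℂ) (P.eval z) + (r : ℂ) ^ 2 := rfl
    linear_combination (-S z) * h2 - (P.eval z * (starRingEnd ℂ) (P.derivative.eval z)) * h3 + (Q.eval z * (starRingEnd ℂ) (P.derivative.eval z)) * h5
  have h6 : ‖S z‖ = ‖P.eval z‖ ^ 2 + r ^ 2 := by
    rw [hS, Complex.norm_real, Real.norm_of_nonneg (by positivity)]
  rw [eq_div_iff (by positivity), ← h6, ← norm_pow, ← norm_mul, h4]
  simp

open Polynomial in
lemma poly_root_bound {P : ℂ[X]} {C0 : ℝ} (hC0 : 0 ≤ C0) (hP : ∀ k, ‖P.coeff k‖ ≤ C0) {ζ α : ℂ}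
    (hα : P.eval α = 0) (hζ : ‖ζ‖ ≤ 1 / 64) : ‖P.eval ζ‖ ≤ (32 * C0) * ‖ζ - α‖ := by
  have hb : ∀ z : ℂ, ‖z‖ ≤ 1 / 4 → ‖P.eval z‖ ≤ 2 * C0 := by
    intro z hz
    have := eval_bound_of_coeff (E := P) (p := 0) (by simp) (K := C0) (β := 1) (a := 1 / 4) (W := 1) hC0
      zero_le_one zero_le_one (by simpa using hP) (by norm_num) hz
    simpa using this
  by_cases h : ‖α‖ ≤ 1 / 8
  · have hd : ∀ z ∈ Metric.closedBall (0 : ℂ) (1 / 8), ‖deriv (fun z => P.eval z) z‖ ≤ 16 * C0 := by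
      intro z hz
      have hz' : ‖z‖ ≤ 1 / 8 := by simpa using hz
      have := Complex.norm_deriv_le_of_forall_mem_sphere_norm_le (c := z) (R := 1 / 8) (C := 2 * C0)
        (f := fun z => P.eval z) (by norm_num) (P.differentiable.diffContOnCl) ?_
      · linarith
      · intro w hw
        apply hb
        have h1 : ‖w - z‖ = 1 / 8 := by simpa [dist_eq_norm] using hw
        have := norm_add_le (w - z) z
        rw [sub_add_cancel] at this
        linarith
    have := Convex.norm_image_sub_le_of_norm_deriv_le (𝕜 := ℂ) (f := fun z => P.eval z) (C := 16 * C0)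
      (s := Metric.closedBall (0 : ℂ) (1 / 8)) (x := α) (y := ζ) (fun z _ => P.differentiable z) hd
      (convex_closedBall _ _) (by simpa using h) (by simp; linarith)
    simp only [hα, sub_zero] at this
    refine this.trans ?_
    gcongr; norm_num
  · push Not at h
    have h1 := norm_sub_norm_le α ζ
    rw [norm_sub_rev] at h1
    have h2 := hb ζ (by linarith)
    have : (1 : ℝ) / 16 ≤ ‖ζ - α‖ := by linarith
    nlinarith

open Polynomial in
lemma UU_dbar_bound {j : ℕ} (hj : 1 ≤ j) {P Q : ℂ[X]} {C0 C1 r : ℝ} (hC0 : 1 ≤ C0) (hC1 : 1 ≤ C1)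
    (hP : ∀ k, ‖P.coeff k‖ ≤ C0) (hr : 0 < r) {ζ : ℂ} (hζ : ‖ζ‖ ≤ 1 / 64)
    (hQ : ‖Q.eval ζ‖ ^ j ≤ C1 * (max ‖P.eval ζ‖ r) ^ (j + 1)) (hP0 : P.eval ζ ≠ 0) :
    ‖dbar (fun z => UU (P.eval z) (Q.eval z) r) ζ‖ ≤
      C1 * (32 * C0) * r ^ (1 / (2 * j : ℝ)) *
        (P.roots.map fun α => ‖ζ - α‖ ^ (1 / (2 * j : ℝ) - 1)).sum := by
  set κ : ℝ := 1 / (2 * j : ℝ) with hκ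
  have hj' : (1 : ℝ) ≤ j := by exact_mod_cast hj
  have hκ0 : 0 < κ := by positivity
  have hκ1 : κ ≤ 1 / 2 := by
    rw [hκ, div_le_div_iff₀ (by positivity) (by norm_num)]; linarith
  have hPn : 0 < ‖P.eval ζ‖ := norm_pos_iff.2 hP0
  set T := max ‖P.eval ζ‖ r with hT
  have hT0 : 0 < T := lt_max_of_lt_right hr
  have hPT : ‖P.eval ζ‖ ≤ T := le_max_left _ _
  have hrT : r ≤ T := le_max_right _ _
  have hPz : P ≠ 0 := by rintro rfl; simp at hP0
  have hQ' : ‖Q.eval ζ‖ ≤ C1 * T ^ (1 + 2 * κ) := by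
    refine le_of_pow_le_pow' hj (by positivity) (hQ.trans ?_)
    rw [mul_pow, ← Real.rpow_natCast (T ^ (1 + 2 * κ)), ← Real.rpow_mul hT0.le]
    have e : (1 + 2 * κ) * (j : ℝ) = ((j + 1 : ℕ) : ℝ) := by
      rw [hκ]; push_cast; field_simp
    rw [e, Real.rpow_natCast]
    gcongr
    exact le_self_pow₀ hC1 (by omega)
  have hder : ‖P.derivative.eval ζ‖ ≤ (32 * C0) * T ^ (1 - κ) *
      (P.roots.map fun α => ‖ζ - α‖ ^ (κ - 1)).sum := by
    have h1 := (IsAlgClosed.splits P).eval_derivative_div_eval_of_ne_zero hP0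
    rw [div_eq_iff hP0] at h1
    rw [h1, norm_mul]
    have h2 : ‖(P.roots.map fun α => 1 / (ζ - α)).sum‖ ≤ (P.roots.map fun α => ‖1 / (ζ - α)‖).sum := by
      have := norm_multiset_sum_le (P.roots.map fun α => 1 / (ζ - α))
      rwa [Multiset.map_map] at this
    refine (mul_le_mul_of_nonneg_right h2 (norm_nonneg _)).trans ?_
    rw [← Multiset.sum_map_mul_right, ← Multiset.sum_map_mul_left]
    refine Multiset.sum_map_le_sum_map _ _ fun α hα => ?_
    have hα' : P.eval α = 0 := (mem_roots hPz).1 hα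
    have hb := poly_root_bound (by linarith) hP hα' hζ
    have hd : 0 < ‖ζ - α‖ := by
      rw [norm_pos_iff, sub_ne_zero]; rintro rfl; exact hP0 hα'
    rw [norm_div, norm_one]
    set δ := ‖ζ - α‖
    set q := ‖P.eval ζ‖
    have e1 : q = q ^ (1 - κ) * q ^ κ := by rw [← Real.rpow_add hPn]; simp
    have e2 : 1 / δ = δ ^ (κ - 1) * δ ^ (-κ) := by
      rw [← Real.rpow_add hd, one_div, ← Real.rpow_neg_one]; congr 1; ring
    have e3 : q ^ κ ≤ (32 * C0) * δ ^ κ := by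
      calc q ^ κ ≤ (32 * C0 * δ) ^ κ := Real.rpow_le_rpow hPn.le hb hκ0.le
        _ = (32 * C0) ^ κ * δ ^ κ := Real.mul_rpow (by positivity) hd.le
        _ ≤ _ := by
          gcongr
          calc (32 * C0) ^ κ ≤ (32 * C0) ^ (1 : ℝ) := Real.rpow_le_rpow_of_exponent_le (by linarith) (by linarith)
            _ = _ := Real.rpow_one _
    have e4 : q ^ (1 - κ) ≤ T ^ (1 - κ) := Real.rpow_le_rpow hPn.le hPT (by linarith)
    have e5 : δ ^ (-κ) * δ ^ κ = 1 := by rw [← Real.rpow_add hd]; simp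
    calc 1 / δ * q = δ ^ (κ - 1) * δ ^ (-κ) * (q ^ (1 - κ) * q ^ κ) := by rw [← e1, ← e2]
      _ ≤ δ ^ (κ - 1) * δ ^ (-κ) * (T ^ (1 - κ) * ((32 * C0) * δ ^ κ)) := by gcongr
      _ = (32 * C0) * T ^ (1 - κ) * δ ^ (κ - 1) * (δ ^ (-κ) * δ ^ κ) := by ring
      _ = _ := by rw [e5, mul_one]
  rw [UU_dbar P Q hr]
  set Sg := (P.roots.map fun α => ‖ζ - α‖ ^ (κ - 1)).sum with hSg
  have hSg0 : 0 ≤ Sg := Multiset.sum_nonneg fun x hx => by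
    obtain ⟨α, -, rfl⟩ := Multiset.mem_map.1 hx; positivity
  have hden : T ^ 4 ≤ (‖P.eval ζ‖ ^ 2 + r ^ 2) ^ 2 := by
    have : T ^ 2 ≤ ‖P.eval ζ‖ ^ 2 + r ^ 2 := by
      rcases max_choice ‖P.eval ζ‖ r with h | h <;> rw [hT, h] <;> nlinarith [sq_nonneg r, sq_nonneg ‖P.eval ζ‖]
    calc T ^ 4 = (T ^ 2) ^ 2 := by ring
      _ ≤ _ := by gcongr
  have hTr : T ^ (1 + 2 * κ) * T ^ (1 - κ) * r ^ 2 / T ^ 4 ≤ r ^ κ := by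
    rw [div_le_iff₀ (by positivity)]
    have e : T ^ (1 + 2 * κ) * T ^ (1 - κ) = T ^ κ * T ^ 2 := by
      rw [← Real.rpow_natCast T 2, ← Real.rpow_add hT0, ← Real.rpow_add hT0]; congr 1; push_cast; ring
    have e2 : T ^ κ * r ^ (2 - κ) ≤ T ^ κ * T ^ (2 - κ) := by
      gcongr; linarith
    have e3 : r ^ (2:ℕ) = r ^ κ * r ^ (2 - κ) := by
      rw [← Real.rpow_natCast r 2, ← Real.rpow_add hr]; congr 1; push_cast; ring
    have e4 : T ^ κ * T ^ (2 - κ) = T ^ 2 := by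
      rw [← Real.rpow_natCast T 2, ← Real.rpow_add hT0]; congr 1; push_cast; ring
    rw [e4] at e2
    have : 0 < r ^ κ := by positivity
    calc _ = T ^ 2 * r ^ κ * (T ^ κ * r ^ (2 - κ)) := by rw [e, e3]; ring
      _ ≤ T ^ 2 * r ^ κ * T ^ 2 := by gcongr
      _ = _ := by ring
  calc _ ≤ (C1 * T ^ (1 + 2 * κ)) * ((32 * C0) * T ^ (1 - κ) * Sg) * r ^ 2 / T ^ 4 := by gcongr
    _ = C1 * (32 * C0) * (T ^ (1 + 2 * κ) * T ^ (1 - κ) * r ^ 2 / T ^ 4) * Sg := by ring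
    _ ≤ _ := by gcongr

open Polynomial in
lemma core {j : ℕ} (hj : 1 ≤ j) {C0 C1 : ℝ} (hC0 : 1 ≤ C0) (hC1 : 1 ≤ C1) :
    ∃ A : ℝ, 0 ≤ A ∧ ∀ (p : ℕ) (P Q : ℂ[X]) (r : ℝ), P.natDegree ≤ p → (∀ k, ‖P.coeff k‖ ≤ C0) → 0 < r →
      (∀ z : ℂ, ‖z‖ ≤ (1 / 4) ^ (j + 2) → ‖Q.eval z‖ ^ j ≤ C1 * (max ‖P.eval z‖ r) ^ (j + 1)) →
      ∃ R : ℂ → ℂ, DifferentiableOn ℂ R (Metric.ball 0 ((1 / 4) ^ (j + 2) / 2)) ∧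
        ∀ z ∈ Metric.ball (0 : ℂ) ((1 / 4) ^ (j + 2) / 2),
          ‖R z - UU (P.eval z) (Q.eval z) r‖ ≤ A * p * r ^ (1 / (2 * j : ℝ)) := by
  have hj' : (1 : ℝ) ≤ j := by exact_mod_cast hj
  have hκ0 : 0 < 1 / (2 * j : ℝ) := by positivity
  have hκ1 : 1 / (2 * j : ℝ) < 1 := by
    rw [div_lt_one (by positivity)]; linarith
  obtain ⟨J, hJ, hA⟩ := area_bound hκ0 hκ1
  have ha64 : ((1 : ℝ) / 4) ^ (j + 2) ≤ 1 / 64 := by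
    calc ((1 : ℝ) / 4) ^ (j + 2) ≤ (1 / 4) ^ 3 := pow_le_pow_of_le_one (by norm_num) (by norm_num) (by omega)
      _ = _ := by norm_num
  refine ⟨C1 * (32 * C0) * J, by positivity, ?_⟩
  intro p P Q r hp hP hr hQ
  by_cases hPz : P = 0
  · refine ⟨fun _ => 0, differentiableOn_const _, ?_⟩
    intro z hz
    subst hPz
    simp [UU]; positivity
  obtain ⟨χ, hχ0, hχ1, hχa, R, hR, hRe⟩ := pompeiu_split (UU_contDiff P Q hr) (a := (1 / 4) ^ (j + 2)) (by positivity)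
  refine ⟨R, hR, ?_⟩
  intro z hz
  rw [hRe z hz]
  have h1 := hA P.roots (C1 * (32 * C0) * r ^ (1 / (2 * j : ℝ)))
    (fun ζ => χ ζ * dbar (fun z => UU (P.eval z) (Q.eval z) r) ζ) z (by positivity)
    (fun ζ hζ => by
      show (χ ζ : ℂ) * _ = 0
      rw [hχa ζ (by linarith)]; simp) ?_
  · rw [norm_mul]
    have h2 : ‖(1 / Real.pi : ℂ)‖ ≤ 1 := by
      rw [norm_div, norm_one, Complex.norm_real, Real.norm_of_nonneg Real.pi_pos.le, div_le_one Real.pi_pos]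
      linarith [Real.pi_gt_three]
    have h3 : (Multiset.card P.roots : ℝ) ≤ p := by exact_mod_cast (card_roots' P).trans hp
    calc _ ≤ 1 * _ := mul_le_mul h2 h1 (norm_nonneg _) zero_le_one
      _ ≤ C1 * (32 * C0) * r ^ (1 / (2 * j : ℝ)) * p * J := by rw [one_mul]; gcongr
      _ = _ := by ring
  · intro ζ _ hζS
    show ‖(χ ζ : ℂ) * _‖ ≤ _
    rw [norm_mul, Complex.norm_real, Real.norm_of_nonneg (hχ0 ζ)]
    by_cases h : ‖ζ‖ ≤ (1 / 4) ^ (j + 2)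
    · have h0 : P.eval ζ ≠ 0 := fun h' => hζS ((mem_roots hPz).2 h')
      refine (mul_le_of_le_one_left (norm_nonneg _) (hχ1 ζ)).trans ?_
      exact UU_dbar_bound hj hC0 hC1 hP hr (h.trans ha64) (hQ ζ h) h0
    · rw [hχa ζ (not_le.1 h).le, zero_mul]
      have : 0 ≤ (P.roots.map fun α => ‖ζ - α‖ ^ (1 / (2 * j : ℝ) - 1)).sum := Multiset.sum_nonneg fun x hx => by
        obtain ⟨α, -, rfl⟩ := Multiset.mem_map.1 hx; positivity
      positivity

lemma lin_geom {x : ℝ} (hx : 0 < x) (hx1 : x < 1) : ∃ B : ℝ, 0 < B ∧ ∀ p : ℕ, ((p : ℝ) + 1) * x ^ p ≤ B := by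
  have hδ : 0 < 1 / x - 1 := by rw [sub_pos, lt_div_iff₀ hx]; linarith
  refine ⟨1 / (1 / x - 1) + 1, by positivity, fun p => ?_⟩
  set δ := 1 / x - 1 with hd
  have hb := one_add_mul_le_pow (a := δ) (by linarith) p
  have e : (1 + δ) = x⁻¹ := by rw [hd, one_div]; ring
  rw [e, inv_pow] at hb
  have hxp : 0 < x ^ p := by positivity
  have h1 : x ^ p * (1 + p * δ) ≤ 1 := by
    calc x ^ p * (1 + p * δ) ≤ x ^ p * (x ^ p)⁻¹ := by gcongr
      _ = 1 := mul_inv_cancel₀ hxp.ne'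
  have hx1' : x ^ p ≤ 1 := pow_le_one₀ hx.le hx1.le
  have h2 : p * x ^ p ≤ 1 / δ := by
    rw [le_div_iff₀ hδ]; nlinarith
  nlinarith

section pair
variable {M N : ℕ → ℝ} {C : ℝ}

lemma scale_E (h : RPair M N C) {j : ℕ} (hj : 1 ≤ j) : ∃ B : ℝ, 0 < B ∧ ∀ t : ℝ, 0 < t →
    ((ppf N C t : ℝ) + 1) * rrf j N C t ^ (1 / (2 * j : ℝ)) ≤
      B * hFun (mseq N) (C * t) ^ (1 / ((j : ℝ) + 1) * (1 / (2 * j : ℝ))) := by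
  set θ : ℝ := 1 / ((j : ℝ) + 1) * (1 / (2 * j : ℝ)) with hθ
  have hj' : (1 : ℝ) ≤ j := by exact_mod_cast hj
  have hθ0 : 0 < θ := by positivity
  obtain ⟨B, hB, hb⟩ := lin_geom (x := (1 / 4 : ℝ) ^ θ) (by positivity)
    (Real.rpow_lt_one (by norm_num) (by norm_num) hθ0)
  refine ⟨B, hB, fun t ht => ?_⟩
  have hH := h.H_pos ht
  unfold rrf
  rw [← Real.rpow_mul (by positivity), ← hθ, Real.mul_rpow (by positivity) hH.le, ← mul_assoc]
  have e : ((1 / 4 : ℝ) ^ ppf N C t) ^ θ = ((1 / 4 : ℝ) ^ θ) ^ ppf N C t := by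
    rw [← Real.rpow_natCast, ← Real.rpow_natCast, ← Real.rpow_mul (by norm_num), ← Real.rpow_mul (by norm_num),
      mul_comm]
  rw [e]
  have := hb (ppf N C t)
  gcongr

end pair

lemma UU_bound {j : ℕ} (hj : 1 ≤ j) {K T0 r : ℝ} (hK : 1 ≤ K) (hT0 : 1 ≤ T0) (hr : 0 < r) {P Q : ℂ}
    (hT : max ‖P‖ r ≤ T0) (hQ : ‖Q‖ ^ j ≤ K * (max ‖P‖ r) ^ (j + 1)) : ‖UU P Q r‖ ≤ 2 * (K * T0) := by
  set T := max ‖P‖ r with hTd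
  have hTp : 0 < T := lt_max_of_lt_right hr
  have hKT : 1 ≤ K * T0 := one_le_mul_of_one_le_of_one_le hK hT0
  have hQ' : ‖Q‖ ≤ K * T0 * T := by
    refine le_of_pow_le_pow' hj (by positivity) (hQ.trans ?_)
    rw [mul_pow]
    calc K * T ^ (j + 1) = (K * T) * T ^ j := by ring
      _ ≤ (K * T0) * T ^ j := by gcongr
      _ ≤ (K * T0) ^ j * T ^ j := by
        gcongr
        exact le_self_pow₀ hKT (by omega)
  have hT1 : T ≤ ‖P‖ + r := max_le (by linarith) (by linarith [norm_nonneg P])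
  rw [UU_norm, div_le_iff₀ (by positivity)]
  have h1 : T * ‖P‖ ≤ 2 * (‖P‖ ^ 2 + r ^ 2) := by
    have : T * ‖P‖ ≤ (‖P‖ + r) * ‖P‖ := by gcongr
    nlinarith [sq_nonneg (‖P‖ - r), sq_nonneg ‖P‖, sq_nonneg r]
  calc ‖Q‖ * ‖P‖ ≤ K * T0 * T * ‖P‖ := by gcongr
    _ = K * T0 * (T * ‖P‖) := by ring
    _ ≤ K * T0 * (2 * (‖P‖ ^ 2 + r ^ 2)) := by gcongr
    _ = _ := by ring

lemma scales {W : Set (ℕ → ℝ)} (hW : IsWeightMatrix W) (hreg : RRegular W) (hmg : RModerateGrowth W)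
    {M : ℕ → ℝ} (hM : M ∈ W) {j : ℕ} (hj : 1 ≤ j) {C0 : ℝ} (hC0 : 1 ≤ C0) :
    ∃ L ∈ W, ∃ B D ρ : ℝ, 0 < B ∧ 0 < D ∧ 0 < ρ ∧ ρ ≤ 1 ∧ ∀ (b : ℝ) (φ : ℝ → ℂ) (fc gc : ℕ → ℂ),
      TD M C0 b (fun s => φ s ^ j) fc → TD M C0 b (fun s => φ s ^ (j + 1)) gc →
      ∃ R : ℝ → ℂ → ℂ, ∀ t : ℝ, 0 < t → t ≤ b →
        DifferentiableOn ℂ (R t) (Metric.ball 0 (ρ * t)) ∧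
        (∀ z : ℂ, ‖z‖ < ρ * t → ‖R t z‖ ≤ B) ∧
        (∀ s : ℝ, |s| < ρ * t → ‖φ s - R t s‖ ≤ B * hFun (mseq L) (D * t)) ∧
        (∀ z : ℂ, ‖z‖ < ρ * (t / 2) → ‖R t z - R (t / 2) z‖ ≤ B * hFun (mseq L) (D * t)) := by
  obtain ⟨N, hN, C, hC, hG⟩ := hreg.2.2 M hM
  have h : RPair M N C := ⟨hW.2.1 M hM, hW.2.1 N hN, hreg.1 N hN, hC, hG⟩
  have hj' : (1 : ℝ) ≤ j := by exact_mod_cast hj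
  obtain ⟨B0, hB0, hE⟩ := scale_E h hj
  obtain ⟨L, hL, C2, hC2, hrp⟩ := hFun_rpow hW hmg
    (θ := 1 / ((j : ℝ) + 1) * (1 / (2 * j : ℝ))) (by positivity) hN
  set K : ℝ := 1 + 2 * (C0 ^ (j + 1) + C0 ^ j) with hK
  have hC0j : C0 ≤ C0 ^ j := le_self_pow₀ hC0 (by omega)
  have hC0j1 : C0 ≤ C0 ^ (j + 1) := le_self_pow₀ hC0 (by omega)
  have hK1 : 1 ≤ K := by linarith
  have hK2 : 2 * C0 ≤ K := by linarith
  obtain ⟨A, hA0, hcore⟩ := core hj hC0 hK1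
  set a : ℝ := (1 / 4) ^ (j + 2) with ha
  have ha0 : 0 < a := by positivity
  have ha64 : a ≤ 1 / 64 := by
    calc ((1 : ℝ) / 4) ^ (j + 2) ≤ (1 / 4) ^ 3 := pow_le_pow_of_le_one (by norm_num) (by norm_num) (by omega)
      _ = _ := by norm_num
  have hLpos := mseq_pos (hW.2.1 L hL)
  have hD : 0 < C2 * C := mul_pos hC2 h.cpos
  set ee : ℝ → ℝ := fun t => ((ppf N C t : ℝ) + 1) * rrf j N C t ^ (1 / (2 * j : ℝ)) with hee
  have hee1 : ∀ t, 0 < t → ee t ≤ B0 * hFun (mseq L) (C2 * C * t) := by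
    intro t ht
    refine (hE t ht).trans ?_
    have := hrp (C * t) (mul_pos h.cpos ht)
    rw [← mul_assoc] at this
    gcongr
  have hee2 : ∀ t, 0 < t → ee (t / 2) ≤ B0 * hFun (mseq L) (C2 * C * t) := by
    intro t ht
    refine (hee1 (t / 2) (half_pos ht)).trans ?_
    have := hFun_mono hLpos (S := C2 * C * (t / 2)) (T := C2 * C * t) (by positivity) (by gcongr; linarith)
    gcongr
  have hLh : ∀ t, 0 < t → 0 ≤ hFun (mseq L) (C2 * C * t) := fun t ht =>
    (hFun_pos hLpos (hreg.1 L hL) (mul_pos hD ht)).le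
  refine ⟨L, hL, (A + 10 * K ^ 2 + A) * B0 + 2 * (K * (2 * C0 + 1)), C2 * C, a / 2, by positivity, hD, by positivity,
    by linarith, ?_⟩
  intro b φ fc gc hF hG
  have hFG : ∀ s, (fun s => φ s ^ j) s ^ (j + 1) = (fun s => φ s ^ (j + 1)) s ^ j := by
    intro s; simp only; ring
  have hQb := fun t (ht : 0 < t) (htb : t ≤ b) z hz => scale_Q_bound h hj ht htb hC0 hF hG hFG (z := z) hz
  have hex : ∀ t, 0 < t → t ≤ b → ∃ R : ℂ → ℂ, DifferentiableOn ℂ R (Metric.ball 0 (a / 2)) ∧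
        ∀ z ∈ Metric.ball (0 : ℂ) (a / 2),
          ‖R z - UU ((tpoly fc t (ppf N C t)).eval z) ((tpoly gc t (ppf N C t)).eval z) (rrf j N C t)‖ ≤ A * ee t := by
    intro t ht htb
    obtain ⟨R, hR, hRb⟩ := hcore (ppf N C t) (tpoly fc t (ppf N C t)) (tpoly gc t (ppf N C t)) (rrf j N C t)
      (tpoly_natDegree _ _ _) (fun k => by
        refine (tpoly_coeff_bound h ht (by linarith) hF.1 k).trans ?_
        have := wtr_le_one h.1 ht (h.mono ht) k
        nlinarith) (h.rr_pos j ht) (hQb t ht htb)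
    refine ⟨R, hR, fun z hz => (hRb z hz).trans ?_⟩
    have : 0 < rrf j N C t ^ (1 / (2 * j : ℝ)) := by have := h.rr_pos j ht; positivity
    simp only [hee]
    rw [mul_assoc]
    gcongr
    linarith
  have hex' : ∀ t, ∃ R : ℂ → ℂ, 0 < t → t ≤ b → DifferentiableOn ℂ R (Metric.ball 0 (a / 2)) ∧
        ∀ z ∈ Metric.ball (0 : ℂ) (a / 2),
          ‖R z - UU ((tpoly fc t (ppf N C t)).eval z) ((tpoly gc t (ppf N C t)).eval z) (rrf j N C t)‖ ≤ A * ee t := by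
    intro t
    by_cases ht : 0 < t ∧ t ≤ b
    · obtain ⟨R, hR⟩ := hex t ht.1 ht.2
      exact ⟨R, fun _ _ => hR⟩
    · exact ⟨0, fun h1 h2 => absurd ⟨h1, h2⟩ ht⟩
  choose R hR using hex'
  have hcomp : ∀ t, 0 < t → t ≤ b → ∀ (P' Q' : ℂ) (r' : ℝ) (z : ℂ), ‖z‖ < a / 2 → 0 ≤ r' → r' ≤ rrf j N C t →
      ‖(tpoly fc t (ppf N C t)).eval z - P'‖ ≤ 2 * C0 * rrf j N C t ^ (j + 1) →
      ‖(tpoly gc t (ppf N C t)).eval z - Q'‖ ≤ 2 * C0 * rrf j N C t ^ (j + 1) →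
      ‖Q'‖ ^ j ≤ K * (max ‖P'‖ r') ^ (j + 1) →
      ‖UU ((tpoly fc t (ppf N C t)).eval z) ((tpoly gc t (ppf N C t)).eval z) (rrf j N C t) - UU P' Q' r'‖ ≤
        10 * K ^ 2 * ee t := by
    intro t ht htb P' Q' r' z hz hr0 hrr hP hQ hQ'
    have hr := h.rr_pos j ht
    have hr1 := h.rr_le_one j ht
    have := UU_comp hj (K := K) (r := rrf j N C t) (r' := r') (ρ := rrf j N C t ^ (1 / (2 * j : ℝ))) hK1 (by positivity)
      (Real.rpow_le_one hr.le hr1 (by positivity)) (by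
        rw [← Real.rpow_natCast, ← Real.rpow_mul hr.le]
        push_cast
        rw [one_div_mul_cancel (by positivity), Real.rpow_one]) hr0 hrr
      ((tpoly_eval_bound h ht (by linarith) hF.1 (z := z) (by linarith)).trans hK2)
      (hP.trans (by gcongr)) (hQ.trans (by gcongr)) (hQb t ht htb z (by linarith)) hQ'
    refine this.trans ?_
    have : 0 < rrf j N C t ^ (1 / (2 * j : ℝ)) := by positivity
    simp only [hee]
    gcongr
    nlinarith [(Nat.cast_nonneg (ppf N C t) : (0 : ℝ) ≤ _)]
  refine ⟨fun t z => R t (z / t), fun t ht htb => ⟨?_, ?_, ?_, ?_⟩⟩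
  · refine (hR t ht htb).1.comp (by fun_prop) ?_
    intro z hz
    have hz' : ‖z‖ < a / 2 * t := by simpa using hz
    simp only [Metric.mem_ball, dist_zero_right, norm_div, Complex.norm_real, Real.norm_of_nonneg ht.le]
    rwa [div_lt_iff₀ ht]
  · intro z hz
    have hz1 : ‖z / (t : ℂ)‖ < a / 2 := by
      rw [norm_div, Complex.norm_real, Real.norm_of_nonneg ht.le, div_lt_iff₀ ht]; exact hz
    have h1 := (hR t ht htb).2 (z / (t : ℂ)) (by rw [mem_ball_zero_iff]; exact hz1)
    have hb1 := tpoly_eval_bound h ht (by linarith) hF.1 (z := z / t) (by linarith)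
    have h2 := UU_bound hj hK1 (T0 := 2 * C0 + 1) (by linarith) (h.rr_pos j ht)
      (max_le (hb1.trans (by linarith)) ((h.rr_le_one j ht).trans (by linarith))) (hQb t ht htb (z / t) (by linarith))
    have h4 := hee1 t ht
    have h5 := hFun_le_one (hW.2.1 L hL) (mul_pos hD ht)
    have h6 : ee t ≤ B0 := h4.trans (mul_le_of_le_one_right hB0.le h5)
    have h3 := norm_sub_norm_le (R t (z / t)) (UU ((tpoly fc t (ppf N C t)).eval (z / t)) ((tpoly gc t (ppf N C t)).eval (z / t)) (rrf j N C t))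
    have h7 : A * ee t ≤ A * B0 := by gcongr
    have h8 : 0 ≤ 10 * K ^ 2 * B0 + A * B0 := by positivity
    show ‖R t (z / t)‖ ≤ _
    linarith
  · intro s hs
    have hs' : |s / t| < a / 2 := by
      rw [abs_div, abs_of_pos ht]; rwa [div_lt_iff₀ ht]
    have hsn : ‖((s / t : ℝ) : ℂ)‖ < a / 2 := by rw [Complex.norm_real]; exact hs'
    have e : t * (s / t) = s := by field_simp
    have h1 := (hR t ht htb).2 ((s / t : ℝ) : ℂ) (by simpa using hsn)
    have hr := h.rr_pos j ht
    have hQ0 : ‖φ s ^ (j + 1)‖ ^ j ≤ K * (max ‖φ s ^ j‖ 0) ^ (j + 1) := by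
      rw [max_eq_left (norm_nonneg _), norm_pow, norm_pow, ← pow_mul, ← pow_mul, mul_comm (j + 1)]
      have : 0 ≤ ‖φ s‖ ^ (j * (j + 1)) := by positivity
      nlinarith
    have hPd := scale_remainder' h j ht htb (by linarith) hF (s := s / t) (by linarith)
    have hQd := scale_remainder' h j ht htb (by linarith) hG (s := s / t) (by linarith)
    simp only [e] at hPd hQd
    rw [norm_sub_rev] at hPd hQd
    have hpp : 0 < rrf j N C t ^ (j + 1) := by positivity
    have h2 := hcomp t ht htb (φ s ^ j) (φ s ^ (j + 1)) 0 ((s / t : ℝ) : ℂ) hsn le_rfl hr.le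
      (hPd.trans (by nlinarith)) (hQd.trans (by nlinarith)) hQ0
    rw [UU_self hj] at h2
    have h3 := norm_sub_le_norm_sub_add_norm_sub (φ s) (UU ((tpoly fc t (ppf N C t)).eval ((s / t : ℝ) : ℂ)) ((tpoly gc t (ppf N C t)).eval ((s / t : ℝ) : ℂ)) (rrf j N C t)) (R t ((s / t : ℝ) : ℂ))
    rw [norm_sub_rev _ (φ s)] at h2
    rw [norm_sub_rev] at h1
    have h4 := hee1 t ht
    push_cast at h1 h2 h3 ⊢
    calc _ ≤ _ := h3
      _ ≤ 10 * K ^ 2 * ee t + A * ee t := add_le_add h2 h1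
      _ = (A + 10 * K ^ 2 + 0) * ee t := by ring
      _ ≤ (A + 10 * K ^ 2 + A) * ee t := by
        have : 0 ≤ ee t := by simp only [hee]; positivity
        gcongr
      _ ≤ (A + 10 * K ^ 2 + A) * (B0 * hFun (mseq L) (C2 * C * t)) := by gcongr
      _ = ((A + 10 * K ^ 2 + A) * B0 + 0) * hFun (mseq L) (C2 * C * t) := by ring
      _ ≤ _ := by
        have := hLh t ht
        gcongr; positivity
  · intro z hz
    have ht2 := half_pos ht
    have hz1 : ‖z / (t : ℂ)‖ < a / 2 := by
      rw [norm_div, Complex.norm_real, Real.norm_of_nonneg ht.le, div_lt_iff₀ ht]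
      nlinarith
    have hz2 : ‖z / ((t / 2 : ℝ) : ℂ)‖ < a / 2 := by
      rw [norm_div, Complex.norm_real, Real.norm_of_nonneg ht2.le, div_lt_iff₀ ht2]
      exact hz
    have hz3 : ‖z‖ ≤ t / 2 * (1 / 4) := by nlinarith
    have h1 := (hR t ht htb).2 (z / (t : ℂ)) (by rw [mem_ball_zero_iff]; exact hz1)
    have h1' := (hR (t / 2) ht2 (by linarith)).2 (z / ((t / 2 : ℝ) : ℂ)) (by rw [mem_ball_zero_iff]; exact hz2)
    have h2 := hcomp t ht htb _ _ (rrf j N C (t / 2)) (z / t) hz1 (h.rr_pos j ht2).le (h.rr_half j ht)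
      (scale_half h j ht (by linarith) hF.1 hz3) (scale_half h j ht (by linarith) hG.1 hz3)
      (hQb (t / 2) ht2 (by linarith) _ (by linarith))
    have h4 := hee1 t ht
    have h5 := hee2 t ht
    rw [norm_sub_rev] at h1'
    set u1 := UU ((tpoly fc t (ppf N C t)).eval (z / t)) ((tpoly gc t (ppf N C t)).eval (z / t)) (rrf j N C t)
    set u2 := UU ((tpoly fc (t / 2) (ppf N C (t / 2))).eval (z / ((t / 2 : ℝ) : ℂ)))
      ((tpoly gc (t / 2) (ppf N C (t / 2))).eval (z / ((t / 2 : ℝ) : ℂ))) (rrf j N C (t / 2))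
    calc ‖R t (z / t) - R (t / 2) (z / ((t / 2 : ℝ) : ℂ))‖
        = ‖(R t (z / t) - u1) + (u1 - u2) + (u2 - R (t / 2) (z / ((t / 2 : ℝ) : ℂ)))‖ := by congr 1; ring
      _ ≤ ‖R t (z / t) - u1‖ + ‖u1 - u2‖ + ‖u2 - R (t / 2) (z / ((t / 2 : ℝ) : ℂ))‖ := norm_add₃_le
      _ ≤ A * ee t + 10 * K ^ 2 * ee t + A * ee (t / 2) := by gcongr
      _ ≤ A * (B0 * hFun (mseq L) (C2 * C * t)) + 10 * K ^ 2 * (B0 * hFun (mseq L) (C2 * C * t)) +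
          A * (B0 * hFun (mseq L) (C2 * C * t)) := by gcongr
      _ = ((A + 10 * K ^ 2 + A) * B0 + 0) * hFun (mseq L) (C2 * C * t) := by ring
      _ ≤ _ := by
        have := hLh t ht
        gcongr; positivity

lemma holo_taylor {r : ℝ} (hr : 0 < r) (K : ℕ) : ∀ (τ : ℝ) (g : ℂ → ℂ),
    DifferentiableOn ℂ g (Metric.ball 0 r) → (∀ z, ‖z‖ < r → ‖g z‖ ≤ τ) →
    ∃ c : ℕ → ℂ, ∀ z, ‖z‖ < r → ‖g z - ∑ i ∈ Finset.range K, c i * z ^ i‖ ≤ τ * (2 * ‖z‖ / r) ^ K := by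
  induction K with
  | zero => intro τ g _ hb; exact ⟨0, fun z hz => by simpa using hb z hz⟩
  | succ K ih =>
    intro τ g hg hb
    have hτ : ‖g 0‖ ≤ τ := hb 0 (by simpa using hr)
    obtain ⟨c, hc⟩ := ih (2 * τ / r) (dslope g 0)
      ((Complex.differentiableOn_dslope (Metric.isOpen_ball.mem_nhds (Metric.mem_ball_self hr))).2 hg) (by
        intro z hz
        refine Complex.norm_dslope_le_div_of_mapsTo_ball hg ?_ (by simpa using hz)
        intro w hw
        have := hb w (by simpa using hw)
        rw [Metric.mem_closedBall, dist_eq_norm]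
        linarith [norm_sub_le (g w) (g 0)])
    refine ⟨fun i => if i = 0 then g 0 else c (i - 1), fun z hz => ?_⟩
    rw [Finset.sum_range_succ']
    have e : g z = g 0 + z * dslope g 0 z := by
      have := sub_smul_dslope g 0 z
      simp only [sub_zero, smul_eq_mul] at this
      rw [this]; ring
    have e2 : g z - (∑ i ∈ Finset.range K, (if i + 1 = 0 then g 0 else c (i + 1 - 1)) * z ^ (i + 1) +
        (if 0 = 0 then g 0 else c (0 - 1)) * z ^ 0) = z * (dslope g 0 z - ∑ i ∈ Finset.range K, c i * z ^ i) := by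
      rw [e, mul_sub, Finset.mul_sum]
      simp only [Nat.add_sub_cancel, if_true, pow_zero, Nat.succ_ne_zero, if_false]
      have : ∀ i ∈ Finset.range K, c i * z ^ (i + 1) = z * (c i * z ^ i) := fun i _ => by ring
      rw [Finset.sum_congr rfl this]; ring
    rw [e2, norm_mul]
    calc _ ≤ ‖z‖ * (2 * τ / r * (2 * ‖z‖ / r) ^ K) := by gcongr; exact hc z hz
      _ = _ := by ring

/-- finite differences of a sequence -/
def dd (K : ℕ) (v : ℕ → ℂ) : ℂ := ∑ k ∈ Finset.range (K + 1), ((-1) ^ (K - k) * (K.choose k : ℂ)) * v k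

lemma dd_add (K : ℕ) (v w : ℕ → ℂ) : dd K (fun k => v k + w k) = dd K v + dd K w := by
  simp only [dd, mul_add, Finset.sum_add_distrib]

lemma dd_sub (K : ℕ) (v w : ℕ → ℂ) : dd K (fun k => v k - w k) = dd K v - dd K w := by
  simp only [dd, mul_sub, Finset.sum_sub_distrib]

lemma dd_smul (K : ℕ) (a : ℂ) (v : ℕ → ℂ) : dd K (fun k => a * v k) = a * dd K v := by
  simp only [dd, Finset.mul_sum]
  exact Finset.sum_congr rfl fun k _ => by ring

lemma dd_sum {ι : Type*} (s : Finset ι) (K : ℕ) (v : ι → ℕ → ℂ) :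
    dd K (fun k => ∑ i ∈ s, v i k) = ∑ i ∈ s, dd K (v i) := by
  simp only [dd, Finset.mul_sum]
  exact Finset.sum_comm

lemma dd_bound {K : ℕ} {v : ℕ → ℂ} {B : ℝ} (h : ∀ k ≤ K, ‖v k‖ ≤ B) : ‖dd K v‖ ≤ 2 ^ K * B := by
  have h2 : ((2 : ℝ) ^ K) = ∑ k ∈ Finset.range (K + 1), (K.choose k : ℝ) := by
    exact_mod_cast (Nat.sum_range_choose K).symm
  rw [h2, Finset.sum_mul]
  refine norm_sum_le_of_le _ fun k hk => ?_
  rw [norm_mul, norm_mul, norm_pow, norm_neg, norm_one, one_pow, one_mul, RCLike.norm_natCast]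
  have := h k (by simpa [Nat.lt_succ_iff] using hk)
  gcongr

lemma dd_eq_fwd (K : ℕ) (g : ℂ → ℂ) : dd K (fun k => g k) = (fwdDiff 1)^[K] g 0 := by
  rw [fwdDiff_iter_eq_sum_shift]
  refine Finset.sum_congr rfl fun k _ => ?_
  simp

lemma dd_pow {K i : ℕ} (h : i < K) : dd K (fun k => (k : ℂ) ^ i) = 0 := by
  rw [dd_eq_fwd K (fun z => z ^ i), fwdDiff_iter_pow_eq_zero_of_lt h]; rfl

lemma dd_pow_self (K : ℕ) : dd K (fun k => (k : ℂ) ^ K) = K.factorial := by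
  rw [dd_eq_fwd K (fun z => z ^ K), fwdDiff_iter_eq_factorial]; simp

lemma dd_poly (K : ℕ) (c : ℕ → ℂ) (s : ℂ) :
    dd K (fun k => ∑ i ∈ Finset.range K, c i * ((k : ℂ) * s) ^ i) = 0 := by
  rw [dd_sum]
  refine Finset.sum_eq_zero fun i hi => ?_
  have : (fun k : ℕ => c i * ((k : ℂ) * s) ^ i) = fun k : ℕ => (c i * s ^ i) * (k : ℂ) ^ i := by
    ext k; rw [mul_pow]; ring
  rw [this, dd_smul, dd_pow (Finset.mem_range.1 hi), mul_zero]

lemma dd_holo {r : ℝ} (hr : 0 < r) (K : ℕ) {τ : ℝ} {g : ℂ → ℂ} (hτ : 0 ≤ τ)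
    (hg : DifferentiableOn ℂ g (Metric.ball 0 r)) (hb : ∀ z, ‖z‖ < r → ‖g z‖ ≤ τ) {s : ℝ} (hs : 0 < s)
    (hsr : K * s < r) : ‖dd K (fun k => g ((k : ℂ) * s))‖ ≤ τ * (4 * K * s / r) ^ K := by
  obtain ⟨c, hc⟩ := holo_taylor hr K τ g hg hb
  have h1 : dd K (fun k => g ((k : ℂ) * s)) =
      dd K (fun k => g ((k : ℂ) * s) - ∑ i ∈ Finset.range K, c i * ((k : ℂ) * s) ^ i) := by
    rw [dd_sub, dd_poly, sub_zero]
  rw [h1]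
  have h2 : τ * (4 * K * s / r) ^ K = 2 ^ K * (τ * (2 * (K * s) / r) ^ K) := by
    rw [mul_left_comm, ← mul_pow]; congr 2; ring
  rw [h2]
  refine dd_bound fun k hk => ?_
  have hn : ‖(k : ℂ) * s‖ = k * s := by
    rw [norm_mul, RCLike.norm_natCast, Complex.norm_real, Real.norm_of_nonneg hs.le]
  have hk' : (k : ℝ) * s ≤ K * s := by gcongr
  refine (hc _ (by rw [hn]; linarith)).trans ?_
  rw [hn]
  gcongr

lemma pow_self_le (K : ℕ) : (K : ℝ) ^ K ≤ Real.exp 1 ^ K * K.factorial := by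
  have := Real.pow_div_factorial_le_exp (x := (K : ℝ)) (Nat.cast_nonneg K) K
  rw [div_le_iff₀ (by positivity)] at this
  rwa [← Real.exp_nat_mul, mul_one]

lemma fd_bound {W : Set (ℕ → ℝ)} (hW : IsWeightMatrix W) (hreg : RRegular W) (hmg : RModerateGrowth W)
    {M : ℕ → ℝ} (hM : M ∈ W) {j : ℕ} (hj : 1 ≤ j) {C0 b : ℝ} (hC0 : 1 ≤ C0) (hb : 0 < b) :
    ∃ L ∈ W, ∃ A σ : ℝ, 0 < A ∧ 0 < σ ∧ ∀ K : ℕ, 1 ≤ K → ∃ E sK : ℝ, 0 ≤ E ∧ 0 < sK ∧ K * sK ≤ b ∧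
      ∀ (φ : ℝ → ℂ) (fc gc : ℕ → ℂ),
      TD M C0 b (fun s => φ s ^ j) fc → TD M C0 b (fun s => φ s ^ (j + 1)) gc →
      ∀ s : ℝ, 0 < s → s < sK → ‖dd K (fun k => φ (k * s))‖ ≤ s ^ K * (A * σ ^ K * L K + E * s) := by
  obtain ⟨L, hL, B, D, ρ, hB, hD, hρ, hρ1, hsc⟩ := scales hW hreg hmg hM hj hC0
  obtain ⟨L', hL', C, hC, hdc⟩ := hreg.2.1 L hL
  have hLp := (hW.2.1 L hL).2.1
  have hLp' := (hW.2.1 L' hL').2.1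
  have hmp := mseq_pos (hW.2.1 L hL)
  have hmp' := mseq_pos (hW.2.1 L' hL')
  set η := hFun (mseq L') 1 with hη
  have hη0 : 0 < η := hFun_pos hmp' (hreg.1 L' hL') one_pos
  have hfac : ∀ K : ℕ, (K.factorial : ℝ) ≤ L' K / η := by
    intro K
    have := hFun_le hmp' one_pos K
    rw [one_pow, mul_one, ← hη, mseq, le_div_iff₀ (by positivity)] at this
    rw [le_div_iff₀ hη0]; linarith
  set e1 := Real.exp 1 with he1
  have he : 0 < e1 := Real.exp_pos 1
  set σ1 : ℝ := 8 * D / ρ * e1 * C with hσ1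
  set σ2 : ℝ := 4 / (ρ * b) * e1 with hσ2
  have hs1 : 0 < σ1 := by have : 0 < C := by linarith
                          positivity
  have hs2 : 0 < σ2 := by positivity
  have hCp : 0 < C := by linarith
  refine ⟨L', hL', 2 * b * B * D * C + B / η, max σ1 σ2, by positivity, lt_max_of_lt_left hs1, ?_⟩
  intro K hK
  have hKr : (1 : ℝ) ≤ K := by exact_mod_cast hK
  have hKp : (0 : ℝ) < K := by linarith
  refine ⟨2 ^ K * (B * mseq L (K + 1) * (2 * D * K / ρ) ^ (K + 1)), ρ * b / K, ?_, by positivity, ?_, ?_⟩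
  · have := hmp (K + 1); positivity
  · rw [mul_div_cancel₀ _ hKp.ne']; nlinarith
  intro φ fc gc hF hG s hs hsK
  obtain ⟨R, hR⟩ := hsc b φ fc gc hF hG
  rw [lt_div_iff₀ hKp] at hsK
  set T : ℕ → ℝ := fun i => b / 2 ^ i with hT
  have hT0 : ∀ i, 0 < T i := fun i => by simp only [hT]; positivity
  have hTb : ∀ i, T i ≤ b := fun i => div_le_self hb.le (one_le_pow₀ (by norm_num))
  have hTs : ∀ i, T (i + 1) = T i / 2 := fun i => by simp only [hT, pow_succ]; field_simp
  have hTmono : ∀ l i, l ≤ i → T i ≤ T l := by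
    intro l i h; simp only [hT]; gcongr; norm_num
  have hex : ∃ i : ℕ, ρ * T (i + 1) ≤ K * s := by
    obtain ⟨n, hn⟩ := exists_pow_lt_of_lt_one (show 0 < K * s / (ρ * b) by positivity) (by norm_num : (1 / 2 : ℝ) < 1)
    refine ⟨n, ?_⟩
    rw [lt_div_iff₀ (by positivity)] at hn
    have : ρ * T n = (1 / 2) ^ n * (ρ * b) := by simp only [hT]; rw [one_div, inv_pow]; ring
    rw [hTs]; have := hT0 n; nlinarith
  classical
  set i := Nat.find hex with hi
  have hi1 : ρ * T (i + 1) ≤ K * s := Nat.find_spec hex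
  have hi2 : K * s < ρ * T i := by
    rcases Nat.eq_zero_or_pos i with h | h
    · rw [h]; simp only [hT, pow_zero, div_one]; linarith
    · have := Nat.find_min hex (m := i - 1) (by omega)
      rw [not_le, Nat.sub_add_cancel h] at this
      exact this
  have hTi : T i ≤ 2 * K * s / ρ := by
    rw [le_div_iff₀ hρ]; rw [hTs] at hi1; linarith
  have hw : ∀ l, B * hFun (mseq L) (D * T l) ≤ B * mseq L (K + 1) * (D * T l) ^ (K + 1) := by
    intro l
    have := hFun_le hmp (mul_pos hD (hT0 l)) (K + 1)
    rw [mul_assoc]; gcongr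
  have hks : ∀ k ≤ K, (k : ℝ) * s ≤ K * s := fun k hk => by gcongr
  have hdec : dd K (fun k => φ (k * s)) = dd K (fun k => φ (k * s) - R (T i) ((k : ℂ) * s)) +
      ((∑ l ∈ Finset.range i, dd K (fun k => R (T (l + 1)) ((k : ℂ) * s) - R (T l) ((k : ℂ) * s))) +
        dd K (fun k => R (T 0) ((k : ℂ) * s))) := by
    simp_rw [dd_sub]
    rw [Finset.sum_range_sub (fun l => dd K (fun k => R (T l) ((k : ℂ) * s)))]
    ring
  have b1 : ‖dd K (fun k => φ (k * s) - R (T i) ((k : ℂ) * s))‖ ≤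
      s ^ K * (2 ^ K * (B * mseq L (K + 1) * (2 * D * K / ρ) ^ (K + 1)) * s) := by
    have h0 := hmp (K + 1)
    have h1 : ‖dd K (fun k => φ (k * s) - R (T i) ((k : ℂ) * s))‖ ≤ 2 ^ K * (B * hFun (mseq L) (D * T i)) := by
      refine dd_bound fun k hk => ?_
      have := (hR (T i) (hT0 i) (hTb i)).2.2.1 (k * s) (by
        rw [abs_of_nonneg (by positivity)]; exact lt_of_le_of_lt (hks k hk) hi2)
      push_cast at this
      exact this
    refine h1.trans ?_
    have := hT0 i
    calc 2 ^ K * (B * hFun (mseq L) (D * T i)) ≤ 2 ^ K * (B * mseq L (K + 1) * (D * T i) ^ (K + 1)) := by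
          gcongr 2 ^ K * ?_; exact hw i
      _ ≤ 2 ^ K * (B * mseq L (K + 1) * (D * (2 * K * s / ρ)) ^ (K + 1)) := by gcongr
      _ = _ := by
        rw [show D * (2 * K * s / ρ) = (2 * D * K / ρ) * s by ring, mul_pow]; ring
  have b2 : ∀ l ∈ Finset.range i, ‖dd K (fun k => R (T (l + 1)) ((k : ℂ) * s) - R (T l) ((k : ℂ) * s))‖ ≤
      s ^ K * (B * D * C * σ1 ^ K * L' K) * T l := by
    intro l hl
    have hl' : l + 1 ≤ i := Finset.mem_range.1 hl
    have h0 := hmp (K + 1)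
    have hTl := hT0 l
    have hKsl : K * s < ρ * T (l + 1) := lt_of_lt_of_le hi2 (by have := hTmono _ _ hl'; gcongr)
    have hRl := hR (T l) (hT0 l) (hTb l)
    have hRl1 := hR (T (l + 1)) (hT0 _) (hTb _)
    have hτ : 0 ≤ B * hFun (mseq L) (D * T l) := by
      have := hFun_pos hmp (hreg.1 L hL) (mul_pos hD (hT0 l)); positivity
    have h1 := dd_holo (r := ρ * T (l + 1)) (by have := hT0 (l + 1); positivity) K
      (g := fun z => R (T (l + 1)) z - R (T l) z) hτ
      (hRl1.1.sub (hRl.1.mono (Metric.ball_subset_ball (by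
        have := hTmono l (l + 1) (by omega); gcongr)))) (by
        intro z hz
        rw [hTs] at hz
        have := hRl.2.2.2 z hz
        rw [norm_sub_rev, hTs]; exact this) hs hKsl
    refine h1.trans ?_
    have hc : mseq L (K + 1) * (K : ℝ) ^ K ≤ e1 ^ K * (C ^ (K + 1) * L' K) := by
      have a1 := pow_self_le K
      have a2 := hdc K
      have a3 : mseq L (K + 1) * (K.factorial : ℝ) ≤ L (K + 1) := by
        rw [mseq, Nat.factorial_succ, div_mul_eq_mul_div, div_le_iff₀ (by positivity)]
        push_cast
        have := hLp (K + 1)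
        have : 0 ≤ L (K + 1) * (K.factorial : ℝ) := by positivity
        nlinarith
      calc mseq L (K + 1) * (K : ℝ) ^ K ≤ mseq L (K + 1) * (e1 ^ K * K.factorial) := by gcongr
        _ = e1 ^ K * (mseq L (K + 1) * K.factorial) := by ring
        _ ≤ e1 ^ K * (C ^ (K + 1) * L' K) := by gcongr e1 ^ K * ?_; exact a3.trans a2
    calc B * hFun (mseq L) (D * T l) * (4 * K * s / (ρ * T (l + 1))) ^ K
        ≤ (B * mseq L (K + 1) * (D * T l) ^ (K + 1)) * (4 * K * s / (ρ * T (l + 1))) ^ K := by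
          have := hT0 (l + 1)
          gcongr ?_ * _
          exact hw l
      _ = s ^ K * (B * D * (8 * D / ρ) ^ K * (mseq L (K + 1) * (K : ℝ) ^ K)) * T l := by
          rw [hTs, show 4 * K * s / (ρ * (T l / 2)) = (8 / ρ) * K * s / T l by field_simp; ring,
            div_pow, mul_pow, mul_pow, mul_pow, pow_succ, pow_succ, show 8 * D / ρ = D * (8 / ρ) by ring, mul_pow]
          field_simp
      _ ≤ s ^ K * (B * D * (8 * D / ρ) ^ K * (e1 ^ K * (C ^ (K + 1) * L' K))) * T l := by gcongr
      _ = _ := by rw [hσ1, mul_pow, mul_pow, pow_succ]; ring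
  have b3 : ‖dd K (fun k => R (T 0) ((k : ℂ) * s))‖ ≤ s ^ K * (B / η * σ2 ^ K * L' K) := by
    have hT0b : T 0 = b := by simp [hT]
    have h1 := dd_holo (r := ρ * b) (by positivity) K (g := R (T 0)) hB.le
      (by have := (hR (T 0) (hT0 0) (hTb 0)).1; rwa [hT0b] at this ⊢) (by
        have := (hR (T 0) (hT0 0) (hTb 0)).2.1; rwa [hT0b] at this ⊢) hs (by linarith)
    refine h1.trans ?_
    calc B * (4 * K * s / (ρ * b)) ^ K = s ^ K * (B * (4 / (ρ * b)) ^ K * (K : ℝ) ^ K) := by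
          rw [show 4 * K * s / (ρ * b) = (4 / (ρ * b)) * K * s by ring, mul_pow, mul_pow]; ring
      _ ≤ s ^ K * (B * (4 / (ρ * b)) ^ K * (e1 ^ K * (L' K / η))) := by
          have a1 := pow_self_le K
          have a2 := hfac K
          gcongr
          exact a1.trans (by gcongr)
      _ = _ := by rw [hσ2, mul_pow]; ring
  have hsumT : ∑ l ∈ Finset.range i, T l ≤ 2 * b := by
    have : ∀ n, ∑ l ∈ Finset.range n, T l = 2 * b - 2 * T n := by
      intro n
      induction n with
      | zero => simp [hT]
      | succ n ih => rw [Finset.sum_range_succ, ih, hTs]; ring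
    rw [this]; linarith [hT0 i]
  rw [hdec]
  have hL'K := hLp' K
  calc _ ≤ ‖dd K (fun k => φ (k * s) - R (T i) ((k : ℂ) * s))‖ +
      (‖∑ l ∈ Finset.range i, dd K (fun k => R (T (l + 1)) ((k : ℂ) * s) - R (T l) ((k : ℂ) * s))‖ +
        ‖dd K (fun k => R (T 0) ((k : ℂ) * s))‖) := (norm_add_le _ _).trans (by gcongr; exact norm_add_le _ _)
    _ ≤ s ^ K * (2 ^ K * (B * mseq L (K + 1) * (2 * D * K / ρ) ^ (K + 1)) * s) +
      (s ^ K * (B * D * C * σ1 ^ K * L' K) * (2 * b) + s ^ K * (B / η * σ2 ^ K * L' K)) := by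
        gcongr
        refine (norm_sum_le_of_le _ b2).trans ?_
        rw [← Finset.mul_sum]
        gcongr
    _ ≤ s ^ K * (2 ^ K * (B * mseq L (K + 1) * (2 * D * K / ρ) ^ (K + 1)) * s) +
      (s ^ K * (B * D * C * (max σ1 σ2) ^ K * L' K) * (2 * b) + s ^ K * (B / η * (max σ1 σ2) ^ K * L' K)) := by
        gcongr
        · exact le_max_left _ _
        · exact le_max_right _ _
    _ = _ := by ring

lemma taylor_seq (p : ℕ) : ∀ (g : ℕ → ℝ → ℂ) (b B : ℝ),
    (∀ k, ∀ s ∈ Icc 0 b, HasDerivAt (g k) (g (k + 1) s) s) → (∀ s ∈ Icc 0 b, ‖g p s‖ ≤ B) →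
    ∀ s ∈ Icc 0 b, ‖g 0 s - ∑ k ∈ Finset.range p, g k 0 / (k.factorial : ℂ) * (s : ℂ) ^ k‖ ≤
      B * s ^ p / p.factorial := by
  induction p with
  | zero => intro g b B _ h s hs; simpa using h s hs
  | succ p ih =>
    intro g b B hd hB s hs
    have h1 := ih (fun k => g (k + 1)) b B (fun k => hd (k + 1)) hB
    let f : ℝ → ℂ := fun s => g 0 s - ∑ k ∈ Finset.range (p + 1), g k 0 / (k.factorial : ℂ) * (s : ℂ) ^ k
    let f' : ℝ → ℂ := fun s => g 1 s - ∑ k ∈ Finset.range p, g (k + 1) 0 / (k.factorial : ℂ) * (s : ℂ) ^ k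
    have hf : ∀ s ∈ Icc 0 b, HasDerivAt f (f' s) s := by
      intro s hs
      refine (hd 0 s hs).sub ?_
      have h2 : ∀ k ∈ Finset.range (p + 1), HasDerivAt (fun s : ℝ => g k 0 / (k.factorial : ℂ) * (s : ℂ) ^ k)
          (g k 0 / (k.factorial : ℂ) * (k * (s : ℂ) ^ (k - 1))) s := by
        intro k _
        have := ((hasDerivAt_id (s : ℂ)).comp_ofReal).pow k
        refine (this.const_mul (g k 0 / (k.factorial : ℂ))).congr_deriv ?_
        simp
      refine (HasDerivAt.fun_sum h2).congr_deriv ?_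
      rw [Finset.sum_range_succ']
      simp only [Nat.cast_zero, zero_mul, mul_zero, add_zero]
      refine Finset.sum_congr rfl fun k _ => ?_
      rw [Nat.factorial_succ]
      push_cast
      have : (k.factorial : ℂ) ≠ 0 := by exact_mod_cast k.factorial_ne_zero
      have : (k + 1 : ℂ) ≠ 0 := by exact_mod_cast k.succ_ne_zero
      field_simp
    refine image_norm_le_of_norm_deriv_right_le_deriv_boundary (f := f) (f' := f')
      (B := fun s => B * s ^ (p + 1) / (p + 1).factorial) (B' := fun s => B * s ^ p / p.factorial)
      (fun s hs => (hf s hs).continuousAt.continuousWithinAt)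
      (fun s hs => (hf s ⟨hs.1, hs.2.le⟩).hasDerivWithinAt) ?_ ?_ ?_ hs
    · simp only [f]
      rw [Finset.sum_range_succ']
      simp
    · intro s
      have := ((hasDerivAt_pow (p + 1) s).const_mul B).div_const ((p + 1).factorial : ℝ)
      refine this.congr_deriv ?_
      rw [Nat.factorial_succ]
      push_cast
      field_simp
    · intro s hs
      exact h1 s ⟨hs.1, hs.2.le⟩

lemma dd_taylor {g : ℕ → ℝ → ℂ} {b B : ℝ} (K : ℕ) (hB : 0 ≤ B)
    (hd : ∀ k, ∀ s ∈ Icc 0 b, HasDerivAt (g k) (g (k + 1) s) s) (hb : ∀ s ∈ Icc 0 b, ‖g (K + 1) s‖ ≤ B)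
    {s : ℝ} (hs : 0 < s) (hsb : K * s ≤ b) :
    ‖dd K (fun k => g 0 (k * s)) - (s : ℂ) ^ K * g K 0‖ ≤ s ^ K * ((2 ^ K * (B * K ^ (K + 1))) * s) := by
  have h1 : dd K (fun k => ∑ i ∈ Finset.range (K + 1), g i 0 / (i.factorial : ℂ) * ((k * s : ℝ) : ℂ) ^ i) =
      (s : ℂ) ^ K * g K 0 := by
    simp_rw [Finset.sum_range_succ]
    rw [dd_add]
    have e1 : dd K (fun k => ∑ i ∈ Finset.range K, g i 0 / (i.factorial : ℂ) * ((k * s : ℝ) : ℂ) ^ i) = 0 := by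
      push_cast
      exact dd_poly K _ _
    have e2 : (fun k : ℕ => g K 0 / (K.factorial : ℂ) * ((k * s : ℝ) : ℂ) ^ K) =
        fun k : ℕ => (g K 0 / (K.factorial : ℂ) * (s : ℂ) ^ K) * (k : ℂ) ^ K := by
      ext k; push_cast; rw [mul_pow]; ring
    rw [e1, e2, dd_smul, dd_pow_self]
    have : (K.factorial : ℂ) ≠ 0 := by exact_mod_cast K.factorial_ne_zero
    field_simp
    ring
  rw [← h1, ← dd_sub]
  have e : s ^ K * ((2 ^ K * (B * K ^ (K + 1))) * s) = 2 ^ K * (B * (K * s) ^ (K + 1)) := by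
    rw [mul_pow]; ring
  rw [e]
  refine dd_bound fun k hk => ?_
  have hks : (k : ℝ) * s ≤ K * s := by gcongr
  refine (taylor_seq (K + 1) g b B hd hb (k * s) ⟨by positivity, hks.trans hsb⟩).trans ?_
  refine (div_le_self (by positivity) (by exact_mod_cast (K + 1).factorial_pos)).trans ?_
  gcongr

section multi
variable {E : Type*} [NormedAddCommGroup E] [NormedSpace ℝ E]

lemma hasDerivAt_line {F : Type*} [NormedAddCommGroup F] [NormedSpace ℝ F] {h : E → F} {U : Set E} (hU : IsOpen U) (hh : ContDiffOn ℝ (⊤ : ℕ∞) h U) (x v : E) (k : ℕ) (s : ℝ)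
    (hs : x + s • v ∈ U) :
    HasDerivAt (fun s : ℝ => iteratedFDeriv ℝ k h (x + s • v) (fun _ => v))
      (iteratedFDeriv ℝ (k + 1) h (x + s • v) (fun _ => v)) s := by
  have h1 : ContDiffAt ℝ (⊤ : ℕ∞) h (x + s • v) := hh.contDiffAt (hU.mem_nhds hs)
  have h2 : DifferentiableAt ℝ (iteratedFDeriv ℝ k h) (x + s • v) :=
    h1.differentiableAt_iteratedFDeriv (by exact_mod_cast WithTop.coe_lt_top _)
  have h3 : HasDerivAt (fun s : ℝ => x + s • v) v s := by
    simpa using ((hasDerivAt_id s).smul_const v).const_add x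
  have h4 := h2.hasFDerivAt.comp_hasDerivAt s h3
  have h5 := (ContinuousMultilinearMap.apply ℝ (fun _ : Fin k => E) F (fun _ => v)).hasFDerivAt.comp_hasDerivAt s h4
  refine h5.congr_deriv ?_
  rw [iteratedFDeriv_succ_apply_left]
  rfl

lemma dir_bound {h : E → ℂ} {U : Set E} (hU : IsOpen U) (hh : ContDiffOn ℝ (⊤ : ℕ∞) h U) {x : E} (hx : x ∈ U) (v : E) (K : ℕ)
    {A E0 s0 : ℝ} (hs0 : 0 < s0)
    (hb : ∀ s : ℝ, 0 < s → s < s0 → ‖dd K (fun k => h (x + (k * s : ℝ) • v))‖ ≤ s ^ K * (A + E0 * s)) :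
    ‖iteratedFDeriv ℝ K h x (fun _ => v)‖ ≤ A := by
  let g : ℕ → ℝ → ℂ := fun k s => iteratedFDeriv ℝ k h (x + s • v) (fun _ => v)
  have hc : ContinuousAt (g (K + 1)) 0 := (hasDerivAt_line hU hh x v (K + 1) 0 (by simpa using hx)).continuousAt
  have hl : Continuous (fun s : ℝ => x + s • v) := by fun_prop
  have hmem : ∀ᶠ s in nhds (0 : ℝ), x + s • v ∈ U := hl.continuousAt.eventually_mem (by simpa using hU.mem_nhds hx)
  have hbd : ∀ᶠ s in nhds (0 : ℝ), ‖g (K + 1) s‖ < ‖g (K + 1) 0‖ + 1 :=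
    hc.norm.eventually_lt continuousAt_const (by simp)
  obtain ⟨δ, hδ, hball⟩ := Metric.eventually_nhds_iff.1 (hmem.and hbd)
  set B := ‖g (K + 1) 0‖ + 1 with hB
  have hB0 : 0 ≤ B := by positivity
  have hin : ∀ s ∈ Icc 0 (δ / 2), x + s • v ∈ U ∧ ‖g (K + 1) s‖ < B := fun s hs =>
    hball (by rw [Real.dist_eq, sub_zero, abs_of_nonneg hs.1]; linarith [hs.2])
  have key : ∀ s : ℝ, 0 < s → s < s0 → (K + 1) * s < δ / 2 →
      ‖g K 0‖ ≤ A + (E0 + 2 ^ K * (B * K ^ (K + 1))) * s := by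
    intro s hs hs0 hsδ
    have h1 := dd_taylor (g := g) (b := δ / 2) (B := B) K hB0
      (fun k s hs => hasDerivAt_line hU hh x v k s (hin s hs).1) (fun s hs => (hin s hs).2.le) hs (by nlinarith)
    have h2 := hb s hs hs0
    have h3 : (fun k : ℕ => g 0 (k * s)) = fun k : ℕ => h (x + (k * s : ℝ) • v) := by
      ext k; simp only [g, iteratedFDeriv_zero_apply]
    rw [h3] at h1
    have h4 := norm_sub_norm_le ((s : ℂ) ^ K * g K 0) (dd K (fun k => h (x + (k * s : ℝ) • v)))
    rw [norm_sub_rev] at h4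
    rw [norm_mul, norm_pow, Complex.norm_real, Real.norm_of_nonneg hs.le] at h4
    have hsK : 0 < s ^ K := by positivity
    have h5 : s ^ K * ‖g K 0‖ ≤ s ^ K * (A + (E0 + 2 ^ K * (B * K ^ (K + 1))) * s) := by
      linarith
    exact le_of_mul_le_mul_left h5 hsK
  have hlim : Tendsto (fun s : ℝ => A + (E0 + 2 ^ K * (B * K ^ (K + 1))) * s) (nhdsWithin 0 (Ioi 0)) (nhds A) := by
    have : Continuous (fun s : ℝ => A + (E0 + 2 ^ K * (B * K ^ (K + 1))) * s) := by fun_prop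
    simpa using (this.tendsto 0).mono_left nhdsWithin_le_nhds
  have hgK : ‖g K 0‖ ≤ A := by
    refine ge_of_tendsto hlim ?_
    have : Ioo (0 : ℝ) (min s0 (δ / 2 / (K + 1))) ∈ nhdsWithin (0 : ℝ) (Ioi 0) :=
      Ioo_mem_nhdsGT (by positivity)
    filter_upwards [this] with s hs
    refine key s hs.1 (hs.2.trans_le (min_le_left _ _)) ?_
    have := hs.2.trans_le (min_le_right _ _)
    rw [lt_div_iff₀ (by positivity)] at this
    linarith
  simpa [g] using hgK
end multi

section symm
variable {E : Type*} [NormedAddCommGroup E] [NormedSpace ℝ E]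
variable {F : Type*} [NormedAddCommGroup F] [NormedSpace ℝ F]

lemma itFD_swap {h : E → F} {U : Set E} (hU : IsOpen U) (hh : ContDiffOn ℝ (⊤ : ℕ∞) h U) (n : ℕ) :
    ∀ (i : Fin n) (v : Fin (n + 1) → E), ∀ x ∈ U,
      iteratedFDeriv ℝ (n + 1) h x (v ∘ Equiv.swap i.castSucc i.succ) = iteratedFDeriv ℝ (n + 1) h x v := by
  induction n with
  | zero => intro i; exact i.elim0
  | succ n ih =>
    intro i v x hx
    have hd : ∀ k, ∀ y ∈ U, DifferentiableAt ℝ (iteratedFDeriv ℝ k h) y := fun k y hy =>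
      (hh.contDiffAt (hU.mem_nhds hy)).differentiableAt_iteratedFDeriv (by exact_mod_cast WithTop.coe_lt_top _)
    have happ : ∀ k, ∀ y ∈ U, ∀ (w : Fin k → E) (a : E),
        fderiv ℝ (iteratedFDeriv ℝ k h) y a w = fderiv ℝ (fun z => iteratedFDeriv ℝ k h z w) y a := by
      intro k y hy w a
      have := ((ContinuousMultilinearMap.apply ℝ (fun _ : Fin k => E) F w).hasFDerivAt.comp y (hd k y hy).hasFDerivAt).fderiv
      have e : (fun z => iteratedFDeriv ℝ k h z w) =
        (ContinuousMultilinearMap.apply ℝ (fun _ : Fin k => E) F w) ∘ iteratedFDeriv ℝ k h := rfl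
      rw [e, this]; rfl
    refine Fin.cases ?_ (fun i => ?_) i
    · have key : ∀ w : Fin (n + 1 + 1) → E, iteratedFDeriv ℝ (n + 1 + 1) h x w =
          fderiv ℝ (fderiv ℝ (iteratedFDeriv ℝ n h)) x (w 0) (w 1) (Fin.tail (Fin.tail w)) := by
        intro w
        rw [iteratedFDeriv_succ_apply_left, happ _ x hx]
        have e : (fun z => iteratedFDeriv ℝ (n + 1) h z (Fin.tail w)) =
          fun z => fderiv ℝ (iteratedFDeriv ℝ n h) z (w 1) (Fin.tail (Fin.tail w)) := by
          ext z
          rw [iteratedFDeriv_succ_apply_left]; rfl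
        rw [e]
        have h2 : DifferentiableAt ℝ (fderiv ℝ (iteratedFDeriv ℝ n h)) x := by
          have h3 : ContDiffAt ℝ 2 (iteratedFDeriv ℝ n h) x :=
            (hh.contDiffAt (hU.mem_nhds hx)).iteratedFDeriv_right (m := 2) (i := n)
              (by have : ((2 + n : ℕ) : WithTop ℕ∞) ≤ ((⊤ : ℕ∞) : WithTop ℕ∞) := WithTop.coe_le_coe.2 le_top
                  exact_mod_cast this)
          exact (h3.fderiv_right (m := 1) (by norm_num)).differentiableAt (by norm_num)
        have := ((ContinuousMultilinearMap.apply ℝ (fun _ : Fin n => E) F (Fin.tail (Fin.tail w))).hasFDerivAt.comp x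
          (h2.hasFDerivAt.clm_apply (hasFDerivAt_const (w 1) x))).fderiv
        change fderiv ℝ ((ContinuousMultilinearMap.apply ℝ (fun _ : Fin n => E) F (Fin.tail (Fin.tail w))) ∘
          (fun y => fderiv ℝ (iteratedFDeriv ℝ n h) y (w 1))) x (w 0) = _
        rw [this]; simp
      have hs : IsSymmSndFDerivAt ℝ (iteratedFDeriv ℝ n h) x := by
        have h3 : ContDiffAt ℝ 2 (iteratedFDeriv ℝ n h) x :=
            (hh.contDiffAt (hU.mem_nhds hx)).iteratedFDeriv_right (m := 2) (i := n)
              (by have : ((2 + n : ℕ) : WithTop ℕ∞) ≤ ((⊤ : ℕ∞) : WithTop ℕ∞) := WithTop.coe_le_coe.2 le_top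
                  exact_mod_cast this)
        exact h3.isSymmSndFDerivAt (by simp)
      rw [key, key, hs.eq]
      congr 1
    · rw [iteratedFDeriv_succ_apply_left, iteratedFDeriv_succ_apply_left, happ _ x hx, happ _ x hx]
      have e0 : (v ∘ Equiv.swap i.succ.castSucc i.succ.succ) 0 = v 0 := by
        simp only [Function.comp]
        congr 1
      have e1 : Fin.tail (v ∘ Equiv.swap i.succ.castSucc i.succ.succ) =
          Fin.tail v ∘ Equiv.swap i.castSucc i.succ := by
        ext l
        simp only [Function.comp, Fin.tail]
        congr 1
        rw [← Fin.succ_castSucc]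
        simp only [Equiv.swap_apply_def, Fin.succ_inj]
        split_ifs <;> rfl
      rw [e0, e1]
      have : (fun z => iteratedFDeriv ℝ (n + 1) h z (Fin.tail v ∘ Equiv.swap i.castSucc i.succ)) =ᶠ[nhds x]
          fun z => iteratedFDeriv ℝ (n + 1) h z (Fin.tail v) := by
        filter_upwards [hU.mem_nhds hx] with z hz
        exact ih i _ z hz
      rw [this.fderiv_eq]

lemma itFD_perm {h : E → F} {U : Set E} (hU : IsOpen U) (hh : ContDiffOn ℝ (⊤ : ℕ∞) h U) {x : E} (hx : x ∈ U)
    (n : ℕ) (σ : Equiv.Perm (Fin n)) (v : Fin n → E) :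
      iteratedFDeriv ℝ n h x (v ∘ σ) = iteratedFDeriv ℝ n h x v := by
  cases n with
  | zero => congr 1; ext i; exact i.elim0
  | succ n =>
    have hσ : σ ∈ Submonoid.closure (Set.range fun i : Fin n => Equiv.swap i.castSucc i.succ) := by
      rw [Equiv.Perm.mclosure_swap_castSucc_succ]; trivial
    induction hσ using Submonoid.closure_induction generalizing v with
    | mem σ h =>
      obtain ⟨i, rfl⟩ := h
      exact itFD_swap hU hh n i v x hx
    | one => rfl
    | mul a b _ _ iha ihb =>
      have : v ∘ (a * b : Equiv.Perm (Fin (n + 1))) = (v ∘ a) ∘ b := rfl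
      rw [this, ihb, iha]
end symm

lemma polar_coeff {K : ℕ} (r : Fin K → Fin K) :
    ∑ ε : Fin K → Bool, (∏ i, (if ε i then (1 : ℝ) else -1)) * ∏ i, (if ε (r i) then (1 : ℝ) else 0) =
      if Function.Bijective r then 1 else 0 := by
  have h1 : ∀ ε : Fin K → Bool,
      (∏ i, (if ε i then (1 : ℝ) else -1)) * ∏ i, (if ε (r i) then (1 : ℝ) else 0) =
      ∏ i, ((if ε i then (1 : ℝ) else -1) * (if ε i then (1 : ℝ) else 0) ^ (Finset.univ.filter (fun l => r l = i)).card) := by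
    intro ε
    rw [Finset.prod_mul_distrib]
    congr 1
    rw [← Finset.prod_fiberwise' Finset.univ r (fun i => if ε i then (1 : ℝ) else 0)]
    simp only [Finset.prod_const]
  simp_rw [h1]
  have h2 := Finset.prod_univ_sum (fun _ : Fin K => (Finset.univ : Finset Bool))
    (fun i b => (if b then (1 : ℝ) else -1) * (if b then (1 : ℝ) else 0) ^ (Finset.univ.filter (fun l => r l = i)).card)
  rw [Fintype.piFinset_univ] at h2
  rw [← h2]
  simp only [Fintype.sum_bool]
  by_cases hr : Function.Bijective r
  · rw [if_pos hr]
    refine Finset.prod_eq_one fun i _ => ?_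
    obtain ⟨l, hl⟩ := hr.2 i
    have : (Finset.univ.filter (fun l => r l = i)).card ≠ 0 := by
      rw [Finset.card_ne_zero]; exact ⟨l, by simp [hl]⟩
    simp [this]
  · rw [if_neg hr]
    have : ¬ Function.Surjective r := fun h => hr (Finite.injective_iff_bijective.1 (Finite.injective_iff_surjective.2 h))
    simp only [Function.Surjective, not_forall, not_exists] at this
    obtain ⟨i, hi⟩ := this
    refine Finset.prod_eq_zero (Finset.mem_univ i) ?_
    have : (Finset.univ.filter (fun l => r l = i)) = ∅ := by
      ext l; simp [hi l]
    simp [this]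

section polar
variable {E : Type*} [NormedAddCommGroup E] [NormedSpace ℝ E]

lemma polar_bound_unit {K : ℕ} (T : ContinuousMultilinearMap ℝ (fun _ : Fin K => E) ℂ)
    (hT : ∀ (σ : Equiv.Perm (Fin K)) v, T (v ∘ σ) = T v) {A : ℝ} (hA : 0 ≤ A)
    (hb : ∀ w, ‖T (fun _ => w)‖ ≤ A * ‖w‖ ^ K) (m : Fin K → E) (hm : ∀ i, ‖m i‖ ≤ 1) :
    ‖T m‖ ≤ (2 * Real.exp 1) ^ K * A := by
  have h1 : ∑ ε : Fin K → Bool, (∏ i, (if ε i then (1 : ℝ) else -1)) •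
      T (fun _ => ∑ i, (if ε i then (1 : ℝ) else 0) • m i) =
      ((Finset.univ.filter (fun r : Fin K → Fin K => Function.Bijective r)).card : ℝ) • T m := by
    have e1 : ∀ ε : Fin K → Bool, T (fun _ => ∑ i, (if ε i then (1 : ℝ) else 0) • m i) =
        ∑ r : Fin K → Fin K, (∏ i, (if ε (r i) then (1 : ℝ) else 0)) • T (m ∘ r) := by
      intro ε
      rw [T.map_sum (fun (_ : Fin K) (i : Fin K) => (if ε i then (1 : ℝ) else 0) • m i)]
      refine Finset.sum_congr rfl fun r _ => ?_
      exact T.map_smul_univ (fun i => if ε (r i) then (1 : ℝ) else 0) (m ∘ r)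
    simp_rw [e1, Finset.smul_sum, smul_smul]
    rw [Finset.sum_comm]
    simp_rw [← Finset.sum_smul, polar_coeff]
    have e2 : ∀ r : Fin K → Fin K, (if Function.Bijective r then (1 : ℝ) else 0) • T (m ∘ r) =
        (if Function.Bijective r then (1 : ℝ) else 0) • T m := by
      intro r
      split_ifs with hr
      · have := hT (Equiv.ofBijective r hr) m
        rw [Equiv.coe_ofBijective] at this
        rw [this]
      · simp
    simp_rw [e2]
    rw [← Finset.sum_smul]
    simp
  have hcard : K.factorial ≤ (Finset.univ.filter (fun r : Fin K → Fin K => Function.Bijective r)).card := by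
    have : K.factorial = (Finset.univ : Finset (Equiv.Perm (Fin K))).card := by
      rw [Finset.card_univ, Fintype.card_perm, Fintype.card_fin]
    rw [this]
    refine Finset.card_le_card_of_injOn (fun σ => (σ : Fin K → Fin K)) ?_ ?_
    · intro σ _; exact Finset.mem_coe.2 (Finset.mem_filter.2 ⟨Finset.mem_univ _, σ.bijective⟩)
    · intro a _ b _ h; exact DFunLike.coe_injective h
  have h2 : ‖∑ ε : Fin K → Bool, (∏ i, (if ε i then (1 : ℝ) else -1)) •
      T (fun _ => ∑ i, (if ε i then (1 : ℝ) else 0) • m i)‖ ≤ 2 ^ K * (A * (K : ℝ) ^ K) := by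
    have : ∀ ε ∈ (Finset.univ : Finset (Fin K → Bool)), ‖(∏ i, (if ε i then (1 : ℝ) else -1)) •
      T (fun _ => ∑ i, (if ε i then (1 : ℝ) else 0) • m i)‖ ≤ A * (K : ℝ) ^ K := by
      intro ε _
      rw [norm_smul, norm_prod]
      have e3 : ∏ i, ‖(if ε i then (1 : ℝ) else -1)‖ = 1 := by
        refine Finset.prod_eq_one fun i _ => ?_
        split_ifs <;> simp
      rw [e3, one_mul]
      refine (hb _).trans ?_
      gcongr
      refine (norm_sum_le _ _).trans ?_
      have : ∀ i ∈ (Finset.univ : Finset (Fin K)), ‖(if ε i then (1 : ℝ) else 0) • m i‖ ≤ 1 := by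
        intro i _
        split_ifs <;> simp [hm i]
      simpa using Finset.sum_le_card_nsmul _ _ _ this
    refine (norm_sum_le _ _).trans ((Finset.sum_le_card_nsmul _ _ _ this).trans ?_)
    simp
  rw [h1, norm_smul, Real.norm_of_nonneg (by positivity)] at h2
  have h3 : (K.factorial : ℝ) * ‖T m‖ ≤ 2 ^ K * (A * (Real.exp 1 ^ K * K.factorial)) := by
    calc (K.factorial : ℝ) * ‖T m‖ ≤ ((Finset.univ.filter (fun r : Fin K → Fin K => Function.Bijective r)).card : ℝ) * ‖T m‖ := by
          gcongr
      _ ≤ 2 ^ K * (A * (K : ℝ) ^ K) := h2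
      _ ≤ _ := by gcongr; exact pow_self_le K
  have hpos : (0 : ℝ) < K.factorial := by exact_mod_cast K.factorial_pos
  refine le_of_mul_le_mul_left (h3.trans (le_of_eq ?_)) hpos
  rw [mul_pow]; ring

lemma polar_bound {K : ℕ} (T : ContinuousMultilinearMap ℝ (fun _ : Fin K => E) ℂ)
    (hT : ∀ (σ : Equiv.Perm (Fin K)) v, T (v ∘ σ) = T v) {A : ℝ} (hA : 0 ≤ A)
    (hb : ∀ w, ‖T (fun _ => w)‖ ≤ A * ‖w‖ ^ K) :
    ‖T‖ ≤ (2 * Real.exp 1) ^ K * A := by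
  refine ContinuousMultilinearMap.opNorm_le_bound (by positivity) fun m => ?_
  have e : m = fun i => ‖m i‖ • (‖m i‖⁻¹ • m i) := by
    ext i
    by_cases h : m i = 0
    · simp [h]
    · rw [smul_smul, mul_inv_cancel₀ (norm_ne_zero_iff.2 h), one_smul]
  have h1 := T.map_smul_univ (fun i => ‖m i‖) (fun i => ‖m i‖⁻¹ • m i)
  rw [← e] at h1
  rw [h1, norm_smul, Real.norm_of_nonneg (Finset.prod_nonneg fun _ _ => norm_nonneg _), mul_comm]
  gcongr
  refine polar_bound_unit T hT hA hb _ fun i => ?_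
  rw [norm_smul, norm_inv, norm_norm]
  exact inv_mul_le_one

/-- Directional bounds for vectors of norm `κ` give bounds for the full derivative. -/
lemma itFD_bound {h : E → ℂ} {U : Set E} (hU : IsOpen U) (hh : ContDiffOn ℝ (⊤ : ℕ∞) h U) {x : E} (hx : x ∈ U)
    (K : ℕ) {A κ : ℝ} (hA : 0 ≤ A) (hκ : 0 < κ)
    (hb : ∀ v : E, ‖v‖ ≤ κ → ‖iteratedFDeriv ℝ K h x (fun _ => v)‖ ≤ A) :
    ‖iteratedFDeriv ℝ K h x‖ ≤ (2 * Real.exp 1 / κ) ^ K * A := by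
  have := polar_bound (iteratedFDeriv ℝ K h x) (itFD_perm hU hh hx K) (A := A / κ ^ K) (by positivity) (fun w => by
    by_cases hw : ‖w‖ = 0
    · have hw0 : w = 0 := norm_eq_zero.1 hw
      subst hw0
      cases K with
      | zero => simpa using hb 0 (by simpa using hκ.le)
      | succ K =>
        have : iteratedFDeriv ℝ (K + 1) h x (fun _ => (0 : E)) = 0 :=
          (iteratedFDeriv ℝ (K + 1) h x).map_coord_zero 0 rfl
        rw [this]; simp
    · have hw' : 0 < ‖w‖ := lt_of_le_of_ne (norm_nonneg _) (Ne.symm hw)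
      have e : w = (‖w‖ / κ) • ((κ / ‖w‖) • w) := by
        rw [smul_smul]
        have : ‖w‖ / κ * (κ / ‖w‖) = 1 := by field_simp
        rw [this, one_smul]
      have h1 := (iteratedFDeriv ℝ K h x).map_smul_univ (fun _ => ‖w‖ / κ) (fun _ => (κ / ‖w‖) • w)
      rw [← e] at h1
      rw [h1, norm_smul]
      have h2 := hb ((κ / ‖w‖) • w) (by
        rw [norm_smul, Real.norm_of_nonneg (by positivity)]
        apply le_of_eq; field_simp)
      simp only [Finset.prod_const, Finset.card_univ, Fintype.card_fin]
      rw [norm_pow, Real.norm_of_nonneg (by positivity)]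
      calc (‖w‖ / κ) ^ K * _ ≤ (‖w‖ / κ) ^ K * A := by gcongr
        _ = _ := by rw [div_pow]; ring)
  refine this.trans (le_of_eq ?_)
  rw [div_pow]; ring
end polar

section lemL
variable {E : Type} [NormedAddCommGroup E] [NormedSpace ℝ E]

lemma interp_bound {F : Type} [NormedAddCommGroup F] [NormedSpace ℝ F] {g₁ g₂ : E → F}
    (h₁ : ContDiff ℝ (⊤ : ℕ∞) g₁) (h₂ : ContDiff ℝ (⊤ : ℕ∞) g₂) {x : E} {B ε h : ℝ} (hh : 0 < h) (hB : 0 ≤ B)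
    (hε : 0 ≤ ε)
    (b₁ : ∀ y ∈ Metric.closedBall x h, ‖iteratedFDeriv ℝ 2 g₁ y‖ ≤ B)
    (b₂ : ∀ y ∈ Metric.closedBall x h, ‖iteratedFDeriv ℝ 2 g₂ y‖ ≤ B)
    (hd : ∀ y ∈ Metric.closedBall x h, dist (g₁ y) (g₂ y) ≤ ε) :
    dist (fderiv ℝ g₁ x) (fderiv ℝ g₂ x) ≤ 2 * ε / h + 2 * B * h := by
  have hx : x ∈ Metric.closedBall x h := Metric.mem_closedBall_self hh.le
  have lip : ∀ g : E → F, ContDiff ℝ (⊤ : ℕ∞) g → (∀ y ∈ Metric.closedBall x h, ‖iteratedFDeriv ℝ 2 g y‖ ≤ B) →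
      ∀ y ∈ Metric.closedBall x h, ‖g y - g x - fderiv ℝ g x (y - x)‖ ≤ B * h * ‖y - x‖ := by
    intro g hg hb y hy
    have hg1 : Differentiable ℝ g := hg.differentiable (by simp)
    have hg2 : Differentiable ℝ (fderiv ℝ g) :=
      (hg.fderiv_right (m := 1) (by
        have : ((1 + 1 : ℕ) : WithTop ℕ∞) ≤ ((⊤ : ℕ∞) : WithTop ℕ∞) := WithTop.coe_le_coe.2 le_top
        exact_mod_cast this)).differentiable (by norm_num)
    refine Convex.norm_image_sub_le_of_norm_fderiv_le' (s := Metric.closedBall x h) (fun z _ => hg1 z) ?_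
      (convex_closedBall x h) hx hy
    intro z hz
    have h3 := Convex.norm_image_sub_le_of_norm_fderiv_le (𝕜 := ℝ) (f := fderiv ℝ g) (C := B)
      (s := Metric.closedBall x h) (fun z _ => hg2 z) (fun z hz => by
        have := hb z hz
        rw [← norm_iteratedFDeriv_fderiv, ← norm_iteratedFDeriv_fderiv, norm_iteratedFDeriv_zero] at this
        exact this)
      (convex_closedBall x h) hx hz
    refine h3.trans ?_
    gcongr
    rw [← dist_eq_norm]; exact hz
  rw [dist_eq_norm]
  refine ContinuousLinearMap.opNorm_le_of_unit_norm (by positivity) fun w hw => ?_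
  have hy : x + h • w ∈ Metric.closedBall x h := by
    rw [Metric.mem_closedBall, dist_eq_norm, add_sub_cancel_left, norm_smul, hw, mul_one, Real.norm_of_nonneg hh.le]
  have hn : ‖h • w‖ = h := by rw [norm_smul, hw, mul_one, Real.norm_of_nonneg hh.le]
  have l1 := lip g₁ h₁ b₁ _ hy
  have l2 := lip g₂ h₂ b₂ _ hy
  rw [add_sub_cancel_left, hn] at l1 l2
  have d1 := hd _ hy
  have d2 := hd _ hx
  rw [dist_eq_norm] at d1 d2
  have e : h • ((fderiv ℝ g₁ x - fderiv ℝ g₂ x) w) =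
      (g₁ (x + h • w) - g₂ (x + h • w)) - (g₁ x - g₂ x) - (g₁ (x + h • w) - g₁ x - fderiv ℝ g₁ x (h • w)) +
        (g₂ (x + h • w) - g₂ x - fderiv ℝ g₂ x (h • w)) := by
    rw [sub_apply, smul_sub, map_smul, map_smul]; abel
  have h4 : h * ‖(fderiv ℝ g₁ x - fderiv ℝ g₂ x) w‖ ≤ ε + ε + B * h * h + B * h * h := by
    rw [← Real.norm_of_nonneg hh.le, ← norm_smul, Real.norm_of_nonneg hh.le, e]
    refine (norm_add_le _ _).trans (add_le_add ((norm_sub_le _ _).trans (add_le_add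
      ((norm_sub_le _ _).trans (add_le_add d1 d2)) l1)) l2)
  have e5 : 2 * ε / h + 2 * B * h = (ε + ε + B * h * h + B * h * h) / h := by field_simp; ring
  rw [e5, le_div_iff₀ hh]
  linarith

lemma lemL (m : ℕ) : ∀ (F : Type) [NormedAddCommGroup F] [NormedSpace ℝ F] [CompleteSpace F]
    (g : ℕ → E → F) (f : E → F) (U : Set E), IsOpen U → (∀ n, ContDiff ℝ (⊤ : ℕ∞) (g n)) →
    (∀ K : ℕ, ∃ B : ℝ, ∀ n, ∀ x ∈ U, ‖iteratedFDeriv ℝ K (g n) x‖ ≤ B) →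
    TendstoUniformlyOn g f atTop U → ContDiffOn ℝ m f U := by
  induction m with
  | zero =>
    intro F _ _ _ g f U hU hg hB hT
    rw [Nat.cast_zero, contDiffOn_zero]
    exact hT.continuousOn (Frequently.of_forall fun n => (hg n).continuous.continuousOn)
  | succ m ih =>
    intro F _ _ _ g f U hU hg hB hT
    suffices H : ∀ c ∈ U, ∃ V, IsOpen V ∧ c ∈ V ∧ ContDiffOn ℝ (m + 1 : ℕ) f V by
      intro c hc
      obtain ⟨V, hV, hcV, h⟩ := H c hc
      exact (h.contDiffAt (hV.mem_nhds hcV)).contDiffWithinAt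
    intro c hc
    obtain ⟨r, hr, hball⟩ := Metric.isOpen_iff.1 hU c hc
    let V := Metric.ball c (r / 2)
    have hsub : ∀ x ∈ V, ∀ h ≤ r / 2, Metric.closedBall x h ⊆ U := by
      intro x hx h hh y hy
      apply hball
      rw [Metric.mem_ball] at hx ⊢
      rw [Metric.mem_closedBall] at hy
      have := dist_triangle y x c
      linarith
    have hVU : V ⊆ U := fun x hx => hsub x hx 0 (by linarith) (Metric.mem_closedBall_self le_rfl)
    obtain ⟨B0, hB0⟩ := hB 2
    set B := max B0 0 with hBdef
    have hBb : ∀ n, ∀ x ∈ U, ‖iteratedFDeriv ℝ 2 (g n) x‖ ≤ B := fun n x hx => (hB0 n x hx).trans (le_max_left _ _)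
    have hBn : 0 ≤ B := le_max_right _ _
    have hC : UniformCauchySeqOn (fun n => fderiv ℝ (g n)) atTop V := by
      rw [Metric.uniformCauchySeqOn_iff]
      intro ε hε
      set h := min (r / 2) (ε / (4 * (B + 1))) with hh
      have hh0 : 0 < h := by positivity
      obtain ⟨N, hN⟩ := Metric.uniformCauchySeqOn_iff.1 hT.uniformCauchySeqOn (h * ε / 8) (by positivity)
      refine ⟨N, fun a ha b hb x hx => ?_⟩
      have hs := hsub x hx h (min_le_left _ _)
      have := interp_bound (hg a) (hg b) hh0 hBn (ε := h * ε / 8) (by positivity) (fun y hy => hBb a y (hs hy))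
        (fun y hy => hBb b y (hs hy)) (fun y hy => (hN a ha b hb y (hs hy)).le)
      refine this.trans_lt ?_
      have e1 : 2 * (h * ε / 8) / h = ε / 4 := by field_simp; ring
      have e2 : h * (4 * (B + 1)) ≤ ε := (le_div_iff₀ (by positivity)).1 (min_le_right _ _)
      rw [e1]
      nlinarith
    have hex : ∀ x, ∃ y, x ∈ V → Tendsto (fun n => fderiv ℝ (g n) x) atTop (nhds y) := by
      intro x
      by_cases hx : x ∈ V
      · obtain ⟨y, hy⟩ := cauchySeq_tendsto_of_complete (hC.cauchySeq hx)
        exact ⟨y, fun _ => hy⟩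
      · exact ⟨0, fun h => absurd h hx⟩
    choose f' hf' using hex
    have hT' : TendstoUniformlyOn (fun n => fderiv ℝ (g n)) f' atTop V :=
      hC.tendstoUniformlyOn_of_tendsto hf'
    have hder : ∀ x ∈ V, HasFDerivAt f (f' x) x := fun x hx =>
      hasFDerivAt_of_tendstoUniformlyOn Metric.isOpen_ball hT'
        (fun n x _ => ((hg n).differentiable (by simp) x).hasFDerivAt)
        (fun x hx => hT.tendsto_at (hVU hx)) hx
    have hI := ih (E →L[ℝ] F) (fun n => fderiv ℝ (g n)) f' V Metric.isOpen_ball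
      (fun n => (hg n).fderiv_right (by exact_mod_cast le_top)) (fun K => by
        obtain ⟨B, hB⟩ := hB (K + 1)
        exact ⟨B, fun n x hx => by rw [norm_iteratedFDeriv_fderiv]; exact hB n x (hVU hx)⟩) hT'
    refine ⟨V, Metric.isOpen_ball, Metric.mem_ball_self (by positivity), ?_⟩
    push_cast
    rw [contDiffOn_succ_iff_fderiv_of_isOpen Metric.isOpen_ball]
    refine ⟨fun x hx => (hder x hx).differentiableAt.differentiableWithinAt, by simp, ?_⟩
    exact hI.congr fun x hx => (hder x hx).fderiv
end lemL

lemma smooth_of_fd {d : ℕ} {f : EuclideanSpace ℝ (Fin d) → ℂ} (hc : Continuous f) (hcs : HasCompactSupport f)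
    {κ R : ℝ} (hκ : 0 < κ) (hR : 0 < R)
    (hfd : ∀ K : ℕ, ∃ A E0 s0 : ℝ, 0 ≤ A ∧ 0 < s0 ∧ ∀ x ∈ Metric.ball (0 : EuclideanSpace ℝ (Fin d)) R,
      ∀ v : EuclideanSpace ℝ (Fin d), ‖v‖ ≤ κ → ∀ s : ℝ, 0 < s → s < s0 →
        ‖dd K (fun k => f (x + (k * s : ℝ) • v))‖ ≤ s ^ K * (A + E0 * s)) (n : ℕ) :
    ContDiffOn ℝ n f (Metric.ball 0 (R / 2)) := by
  let φ : ℕ → ContDiffBump (0 : EuclideanSpace ℝ (Fin d)) := fun n =>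
    ⟨R / (4 * (n + 1)), R / (2 * (n + 1)), by positivity, by
      apply div_lt_div_of_pos_left hR (by positivity)
      have : (0 : ℝ) < n + 1 := by positivity
      linarith⟩
  have hφR : ∀ n, (φ n).rOut ≤ R / 2 := by
    intro n
    change R / (2 * (n + 1)) ≤ R / 2
    apply div_le_div_of_nonneg_left hR.le (by norm_num)
    have : (0 : ℝ) ≤ n := by positivity
    linarith
  let g : ℕ → EuclideanSpace ℝ (Fin d) → ℂ := fun n =>
    convolution ((φ n).normed volume) f (ContinuousLinearMap.lsmul ℝ ℝ) volume
  have hg : ∀ n, ContDiff ℝ (⊤ : ℕ∞) (g n) := fun n =>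
    (φ n).hasCompactSupport_normed.contDiff_convolution_left _ (φ n).contDiff_normed hc.locallyIntegrable
  have hgx : ∀ n x, g n x = ∫ t, (φ n).normed volume t • f (x - t) := fun n x => convolution_lsmul
  have hIntg : ∀ n x, Integrable (fun t => (φ n).normed volume t • f (x - t)) := by
    intro n x
    have : Continuous (fun t => (φ n).normed volume t • f (x - t)) :=
      (φ n).continuous_normed.smul (hc.comp (by fun_prop))
    exact this.integrable_of_hasCompactSupport ((φ n).hasCompactSupport_normed.smul_right)
  have hunif : TendstoUniformlyOn g f atTop (Metric.ball 0 (R / 2)) := by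
    have huc := hcs.uniformContinuous_of_continuous hc
    rw [Metric.tendstoUniformlyOn_iff]
    intro ε hε
    obtain ⟨δ, hδ, hd⟩ := Metric.uniformContinuous_iff.1 huc (ε / 2) (by positivity)
    have ht : Tendsto (fun n : ℕ => (φ n).rOut) atTop (nhds 0) := by
      have h := (tendsto_one_div_add_atTop_nhds_zero_nat (𝕜 := ℝ)).const_mul (R / 2)
      rw [mul_zero] at h
      refine h.congr fun n => ?_
      change R / 2 * (1 / (n + 1)) = R / (2 * (n + 1))
      field_simp
    filter_upwards [ht.eventually_lt_const hδ] with n hn x _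
    rw [dist_comm]
    refine lt_of_le_of_lt ?_ (half_lt_self hε)
    exact ContDiffBump.dist_normed_convolution_le hc.aestronglyMeasurable fun y hy =>
      (hd (lt_trans (Metric.mem_ball.1 hy) hn)).le
  refine lemL n ℂ g f _ Metric.isOpen_ball hg ?_ hunif
  intro K
  obtain ⟨A, E0, s0, hA, hs0, hb⟩ := hfd K
  refine ⟨(2 * Real.exp 1 / κ) ^ K * A, fun n x hx => ?_⟩
  refine itFD_bound isOpen_univ (hg n).contDiffOn (mem_univ x) K hA hκ fun v hv => ?_
  refine dir_bound isOpen_univ (hg n).contDiffOn (mem_univ x) v K (E0 := E0) hs0 fun s hs hss => ?_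
  have e : dd K (fun k => g n (x + (k * s : ℝ) • v)) =
      ∫ t, (φ n).normed volume t • dd K (fun k => f (x - t + (k * s : ℝ) • v)) := by
    simp only [dd, hgx, Finset.smul_sum]
    rw [integral_finsetSum]
    · refine Finset.sum_congr rfl fun k _ => ?_
      rw [← integral_const_mul]
      congr 1
      ext t
      rw [mul_smul_comm, sub_add_eq_add_sub]
    · intro k _
      have := (hIntg n (x + (k * s : ℝ) • v)).const_mul ((-1) ^ (K - k) * (K.choose k : ℂ))
      refine this.congr (ae_of_all _ fun t => ?_)
      change _ * ((φ n).normed volume t • _) = _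
      rw [mul_smul_comm, add_sub_right_comm]
  rw [e]
  have hI : Integrable (fun t => (φ n).normed volume t * (s ^ K * (A + E0 * s))) :=
    (φ n).integrable_normed.mul_const _
  refine (norm_integral_le_of_norm_le hI (ae_of_all _ fun t => ?_)).trans (le_of_eq ?_)
  · rw [norm_smul, Real.norm_of_nonneg ((φ n).nonneg_normed t)]
    by_cases ht : t ∈ Metric.ball (0 : EuclideanSpace ℝ (Fin d)) (φ n).rOut
    · refine mul_le_mul_of_nonneg_left (hb (x - t) ?_ v hv s hs hss) ((φ n).nonneg_normed t)
      rw [mem_ball_zero_iff] at ht hx ⊢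
      have := norm_sub_le x t
      linarith [hφR n]
    · rw [← (φ n).support_normed_eq (μ := volume), Function.notMem_support] at ht
      rw [ht]; simp
  · rw [integral_mul_const, (φ n).integral_normed, one_mul]

section tdof
variable {E : Type*} [NormedAddCommGroup E] [NormedSpace ℝ E]

lemma itFD_apply_le {F : E → ℂ} {C σ m : ℝ} (hC : 0 ≤ C) (hσ : 0 < σ) (hm : 0 ≤ m) {y v : E} (hv : ‖v‖ ≤ 1 / σ) (k : ℕ)
    (hb : ‖iteratedFDeriv ℝ k F y‖ ≤ C * σ ^ k * m) : ‖iteratedFDeriv ℝ k F y (fun _ => v)‖ ≤ C * m := by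
  refine ((iteratedFDeriv ℝ k F y).le_opNorm _).trans ?_
  simp only [Finset.prod_const, Finset.card_univ, Fintype.card_fin]
  calc ‖iteratedFDeriv ℝ k F y‖ * ‖v‖ ^ k ≤ (C * σ ^ k * m) * (1 / σ) ^ k := by gcongr
    _ = C * m * (σ * (1 / σ)) ^ k := by rw [mul_pow]; ring
    _ = C * m := by rw [mul_one_div_cancel hσ.ne', one_pow, mul_one]

lemma TD_of_bound {F : E → ℂ} {V : Set E} (hV : IsOpen V) (hF : ContDiffOn ℝ (⊤ : ℕ∞) F V) {M : ℕ → ℝ} {C σ b : ℝ}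
    (hM : ∀ k, 0 ≤ M k) (hC : 0 ≤ C) (hσ : 0 < σ) (hb0 : 0 ≤ b)
    (hb : ∀ y ∈ V, ∀ k, ‖iteratedFDeriv ℝ k F y‖ ≤ C * σ ^ k * M k) {x v : E} (hv : ‖v‖ ≤ 1 / σ)
    (hin : ∀ s : ℝ, |s| ≤ b → x + s • v ∈ V) :
    TD M C b (fun s => F (x + s • v)) (fun k => iteratedFDeriv ℝ k F x (fun _ => v) / (k.factorial : ℂ)) := by
  have hx : x ∈ V := by simpa using hin 0 (by simpa using hb0)
  have hpos : ∀ w : E, ‖w‖ ≤ 1 / σ → (∀ s : ℝ, |s| ≤ b → x + s • w ∈ V) → ∀ p, ∀ s ∈ Icc 0 b,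
      ‖F (x + s • w) - ∑ k ∈ Finset.range p, iteratedFDeriv ℝ k F x (fun _ => w) / (k.factorial : ℂ) * (s : ℂ) ^ k‖ ≤
      C * mseq M p * s ^ p := by
    intro w hw hin p s hs
    have := taylor_seq p (fun k s => iteratedFDeriv ℝ k F (x + s • w) (fun _ => w)) b (C * M p)
      (fun k s hs => hasDerivAt_line hV hF x w k s (hin s (by rw [abs_of_nonneg hs.1]; exact hs.2)))
      (fun s hs => itFD_apply_le hC hσ (hM p) hw p (hb _ (hin s (by rw [abs_of_nonneg hs.1]; exact hs.2)) p)) s hs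
    simp only [iteratedFDeriv_zero_apply, zero_smul, add_zero] at this
    refine this.trans (le_of_eq ?_)
    simp only [mseq]; ring
  constructor
  · intro k
    rw [norm_div, Complex.norm_natCast]
    have := itFD_apply_le hC hσ (hM k) hv k (hb x hx k)
    simp only [mseq]
    rw [← mul_div_assoc]
    gcongr
  · intro p s hs
    rcases le_total 0 s with h | h
    · have := hpos v hv hin p s ⟨h, by rwa [abs_of_nonneg h] at hs⟩
      rwa [abs_of_nonneg h]
    · have := hpos (-v) (by rwa [norm_neg]) (fun s hs => by
        have := hin (-s) (by rwa [abs_neg]); simpa using this) p (-s) ⟨by linarith, by rwa [abs_of_nonpos h] at hs⟩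
      rw [abs_of_nonpos h]
      refine le_trans (le_of_eq ?_) this
      congr 2
      · simp
      · refine Finset.sum_congr rfl fun k _ => ?_
        have e : (fun _ : Fin k => -v) = fun _ : Fin k => (-1 : ℝ) • v := by ext; simp
        rw [e, (iteratedFDeriv ℝ k F x).map_smul_univ (fun _ => (-1 : ℝ)) (fun _ => v)]
        simp only [Finset.prod_const, Finset.card_univ, Fintype.card_fin, Complex.real_smul]
        push_cast
        rw [neg_pow (s : ℂ) k]
        have : ((-1 : ℂ)) ^ k * (-1) ^ k = 1 := by rw [← mul_pow]; simp
        linear_combination (-(iteratedFDeriv ℝ k F x (fun _ => v)) / (k.factorial : ℂ) * (s : ℂ) ^ k) * this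
end tdof

lemma roumieu_local {d : ℕ} {W : Set (ℕ → ℝ)} (hW : IsWeightMatrix W) {F : EuclideanSpace ℝ (Fin d) → ℂ}
    {U : Set (EuclideanSpace ℝ (Fin d))} (hU : IsOpen U) (hF : MatrixRoumieuOn W F U) {r : ℝ} (hr : 0 < r)
    (hrU : Metric.ball 0 (2 * r) ⊆ U) :
    ContDiffOn ℝ (⊤ : ℕ∞) F (Metric.ball 0 r) ∧ ∃ M ∈ W, ∃ C σ : ℝ, 0 < C ∧ 0 < σ ∧
      ∀ y ∈ Metric.ball 0 r, ∀ k, ‖iteratedFDeriv ℝ k F y‖ ≤ C * σ ^ k * M k := by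
  have hcl : closure (Metric.ball (0 : EuclideanSpace ℝ (Fin d)) r) ⊆ Metric.closedBall 0 r := Metric.closure_ball_subset_closedBall
  have hclU : Metric.closedBall (0 : EuclideanSpace ℝ (Fin d)) r ⊆ U :=
    (Metric.closedBall_subset_ball (by linarith)).trans hrU
  have hbU : Metric.ball (0 : EuclideanSpace ℝ (Fin d)) r ⊆ U := Metric.ball_subset_closedBall.trans hclU
  refine ⟨hF.1.mono hbU, ?_⟩
  obtain ⟨M, hM, C, σ, hC, hσ, hb⟩ := hF.2 (Metric.ball 0 r) Metric.isOpen_ball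
    ((isCompact_closedBall 0 r).of_isClosed_subset isClosed_closure hcl) (hcl.trans hclU)
  refine ⟨M, hM, C, σ, hC, hσ, fun y hy k => ?_⟩
  rw [← iteratedFDerivWithin_of_isOpen k hU (hbU hy)]
  exact hb y hy k

lemma main_local {d : ℕ} {W : Set (ℕ → ℝ)} {f : EuclideanSpace ℝ (Fin d) → ℂ} {L : ℕ → ℝ} (hL : L ∈ W)
    (hL0 : L 0 = 1) (hLp : ∀ k, 0 < L k) {A σ κ r : ℝ} (hA : 0 < A) (hσ : 0 < σ) (hκ : 0 < κ) (hr : 0 < r)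
    (hfd : ∀ K : ℕ, 1 ≤ K → ∃ E sK : ℝ, 0 ≤ E ∧ 0 < sK ∧ ∀ x ∈ Metric.ball (0 : EuclideanSpace ℝ (Fin d)) r,
      ∀ v : EuclideanSpace ℝ (Fin d), ‖v‖ ≤ κ → ∀ s : ℝ, 0 < s → s < sK →
        ‖dd K (fun k => f (x + (k * s : ℝ) • v))‖ ≤ s ^ K * (A * σ ^ K * L K + E * s)) :
    ∃ U : Set (EuclideanSpace ℝ (Fin d)), IsOpen U ∧ 0 ∈ U ∧ MatrixRoumieuOn W f U := by
  have hcont : ContinuousOn f (Metric.ball 0 r) := by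
    obtain ⟨E0, s1, hE0, hs1, hb⟩ := hfd 1 le_rfl
    intro x hx
    refine ContinuousAt.continuousWithinAt ?_
    refine continuousAt_of_locally_lipschitz (r := κ * s1) (by positivity) ((A * σ ^ 1 * L 1 + E0 * s1) / κ) fun y hy => ?_
    by_cases hxy : y = x
    · subst hxy; simp
    have hn : 0 < ‖y - x‖ := norm_pos_iff.2 (sub_ne_zero.2 hxy)
    rw [dist_eq_norm] at hy
    rw [dist_eq_norm, dist_eq_norm]
    have h1 := hb x hx ((κ / ‖y - x‖) • (y - x)) (by
      rw [norm_smul, Real.norm_of_nonneg (by positivity)]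
      apply le_of_eq; field_simp) (‖y - x‖ / κ) (by positivity) (by rw [div_lt_iff₀ hκ]; linarith)
    have e : dd 1 (fun k => f (x + (k * (‖y - x‖ / κ) : ℝ) • (κ / ‖y - x‖) • (y - x))) = f y - f x := by
      simp only [dd, Finset.sum_range_succ, Finset.range_zero, Finset.sum_empty]
      have : (‖y - x‖ / κ) * (κ / ‖y - x‖) = 1 := by field_simp
      simp [smul_smul, this]
      ring
    rw [e] at h1
    refine h1.trans ?_
    have h2 : ‖y - x‖ / κ ≤ s1 := by rw [div_le_iff₀ hκ]; linarith
    calc (‖y - x‖ / κ) ^ 1 * (A * σ ^ 1 * L 1 + E0 * (‖y - x‖ / κ)) ≤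
        (‖y - x‖ / κ) ^ 1 * (A * σ ^ 1 * L 1 + E0 * s1) := by gcongr
      _ = _ := by ring
  let χ : ContDiffBump (0 : EuclideanSpace ℝ (Fin d)) := ⟨r / 2, 2 * r / 3, by positivity, by linarith⟩
  let ft : EuclideanSpace ℝ (Fin d) → ℂ := fun x => χ x • f x
  have hsupp : tsupport ft ⊆ Metric.closedBall 0 (2 * r / 3) := by
    have : tsupport ft ⊆ tsupport χ := tsupport_smul_subset_left _ _
    rwa [χ.tsupport_eq] at this
  have hft : Continuous ft := by
    refine ContinuousOn.continuous_of_tsupport_subset (s := Metric.ball 0 r) ?_ Metric.isOpen_ball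
      (hsupp.trans (Metric.closedBall_subset_ball (by linarith)))
    exact χ.continuous.continuousOn.smul hcont
  have hcs : HasCompactSupport ft := (isCompact_closedBall 0 _).of_isClosed_subset (isClosed_tsupport _) hsupp
  have heq : ∀ x ∈ Metric.ball (0 : EuclideanSpace ℝ (Fin d)) (r / 2), ft x = f x := by
    intro x hx
    have : χ x = 1 := χ.one_of_mem_closedBall (Metric.ball_subset_closedBall hx)
    simp [ft, this]
  obtain ⟨B, hB⟩ := hft.bounded_above_of_compact_support hcs
  have hB0 : 0 ≤ B := (norm_nonneg _).trans (hB 0)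
  have hsm : ∀ n : ℕ, ContDiffOn ℝ n ft (Metric.ball 0 (r / 4 / 2)) := by
    refine smooth_of_fd hft hcs hκ (by positivity) fun K => ?_
    rcases Nat.eq_zero_or_pos K with rfl | hK
    · refine ⟨B, 0, 1, hB0, one_pos, fun x _ v _ s _ _ => ?_⟩
      simpa [dd] using hB x
    · obtain ⟨E0, sK, hE0, hsK, hb⟩ := hfd K hK
      refine ⟨A * σ ^ K * L K, E0, min sK (r / (4 * κ * (K + 1))), ?_, by positivity, fun x hx v hv s hs hss => ?_⟩
      · have := (hLp K).le; positivity
      · have hx' : x ∈ Metric.ball (0 : EuclideanSpace ℝ (Fin d)) r := Metric.ball_subset_ball (by linarith) hx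
        have := hb x hx' v hv s hs (hss.trans_le (min_le_left _ _))
        refine le_trans (le_of_eq ?_) this
        congr 1
        simp only [dd]
        refine Finset.sum_congr rfl fun k hk => ?_
        rw [heq]
        rw [mem_ball_zero_iff] at hx ⊢
        have hk' : (k : ℝ) ≤ K := by exact_mod_cast Nat.lt_succ_iff.1 (Finset.mem_range.1 hk)
        have h1 : s * (4 * κ * (K + 1)) < r := (lt_div_iff₀ (by positivity)).1 (hss.trans_le (min_le_right _ _))
        have h2 : ‖(k * s : ℝ) • v‖ ≤ (K * s) * κ := by
          rw [norm_smul, Real.norm_of_nonneg (by positivity)]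
          gcongr
        have h3 := norm_add_le x ((k * s : ℝ) • v)
        have h4 : 0 < s * κ := by positivity
        nlinarith
  set U := Metric.ball (0 : EuclideanSpace ℝ (Fin d)) (r / 4 / 2) with hUdef
  have hUo : IsOpen U := Metric.isOpen_ball
  have hUsub : U ⊆ Metric.ball 0 (r / 2) := Metric.ball_subset_ball (by linarith)
  have hfs : ContDiffOn ℝ (⊤ : ℕ∞) f U :=
    contDiffOn_infty.2 fun n => (hsm n).congr fun x hx => (heq x (hUsub hx)).symm
  refine ⟨U, hUo, Metric.mem_ball_self (by positivity), hfs, fun V _ _ hVU => ?_⟩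
  refine ⟨L, hL, max A (B + 1), 2 * Real.exp 1 / κ * σ, by positivity, by positivity, fun x hxV K => ?_⟩
  have hx : x ∈ U := hVU (subset_closure hxV)
  rw [iteratedFDerivWithin_of_isOpen K hUo hx]
  rcases Nat.eq_zero_or_pos K with rfl | hK
  · rw [norm_iteratedFDeriv_zero, pow_zero, hL0, mul_one, mul_one, ← heq x (hUsub hx)]
    exact (hB x).trans (by linarith [le_max_right A (B + 1)])
  · obtain ⟨E0, sK, hE0, hsK, hb⟩ := hfd K hK
    have hLK := hLp K
    have hxr : x ∈ Metric.ball (0 : EuclideanSpace ℝ (Fin d)) r := Metric.ball_subset_ball (by linarith) (hUsub hx)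
    have := itFD_bound hUo hfs hx K (A := A * σ ^ K * L K) (by positivity) hκ fun v hv =>
      dir_bound hUo hfs hx v K hsK (E0 := E0) fun s hs hss => hb x hxr v hv s hs hss
    refine this.trans ?_
    rw [mul_pow]
    calc (2 * Real.exp 1 / κ) ^ K * (A * σ ^ K * L K) = A * ((2 * Real.exp 1 / κ) ^ K * σ ^ K) * L K := by ring
      _ ≤ _ := by gcongr; exact le_max_left _ _

/-- for an R-regular weight matrix `W` of R-moderate growth containing a
non-quasianalytic weight sequence, the ring of germs at `0 ∈ ℝ^d` of `E^{W}`-functions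
(Roumieu) has property (D). -/
theorem statement10 (d : ℕ) (hd : 1 ≤ d) (W : Set (ℕ → ℝ)) (hW : IsWeightMatrix W)
    (hreg : RRegular W) (hmg : RModerateGrowth W)
    (hnq : ∃ M ∈ W, NonQuasianalytic M)
    (f : EuclideanSpace ℝ (Fin d) → ℂ) (j : ℕ) (hj : 1 ≤ j)
    (h1 : ∃ U : Set (EuclideanSpace ℝ (Fin d)), IsOpen U ∧ 0 ∈ U ∧
      MatrixRoumieuOn W (f ^ j) U)
    (h2 : ∃ U : Set (EuclideanSpace ℝ (Fin d)), IsOpen U ∧ 0 ∈ U ∧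
      MatrixRoumieuOn W (f ^ (j + 1)) U) :
    ∃ U : Set (EuclideanSpace ℝ (Fin d)), IsOpen U ∧ 0 ∈ U ∧ MatrixRoumieuOn W f U := by

  obtain ⟨U1, hU1, h01, hF1⟩ := h1
  obtain ⟨U2, hU2, h02, hF2⟩ := h2
  obtain ⟨ρ, hρ, hρU⟩ := Metric.isOpen_iff.1 (hU1.inter hU2) 0 ⟨h01, h02⟩
  set r := ρ / 2 with hrdef
  have hr : 0 < r := by positivity
  have e2r : 2 * r = ρ := by rw [hrdef]; ring
  obtain ⟨c1, M1, hM1, C1, σ1, hC1, hσ1, hb1⟩ := roumieu_local hW hU1 hF1 hr (by rw [e2r]; exact fun x hx => (hρU hx).1)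
  obtain ⟨c2, M2, hM2, C2, σ2, hC2, hσ2, hb2⟩ := roumieu_local hW hU2 hF2 hr (by rw [e2r]; exact fun x hx => (hρU hx).2)
  obtain ⟨M, hM, hM1M, hM2M⟩ : ∃ M ∈ W, (∀ k, M1 k ≤ M k) ∧ (∀ k, M2 k ≤ M k) := by
    rcases hW.2.2 M1 hM1 M2 hM2 with h | h
    · exact ⟨M2, hM2, h, fun _ => le_rfl⟩
    · exact ⟨M1, hM1, fun _ => le_rfl, h⟩
  have p1 := (hW.2.1 M1 hM1).2.1
  have p2 := (hW.2.1 M2 hM2).2.1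
  have pM := (hW.2.1 M hM).2.1
  set C0 := max (max C1 C2) 1 with hC0def
  set σ := max σ1 σ2 with hσdef
  have hσ : 0 < σ := lt_max_of_lt_left hσ1
  have hC0 : 1 ≤ C0 := le_max_right _ _
  have hC1' : C1 ≤ C0 := (le_max_left _ _).trans (le_max_left _ _)
  have hC2' : C2 ≤ C0 := (le_max_right _ _).trans (le_max_left _ _)
  have B1 : ∀ y ∈ Metric.ball 0 r, ∀ k, ‖iteratedFDeriv ℝ k (f ^ j) y‖ ≤ C0 * σ ^ k * M k := by
    intro y hy k
    refine (hb1 y hy k).trans ?_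
    have := (p1 k).le
    gcongr
    · exact le_max_left _ _
    · exact hM1M k
  have B2 : ∀ y ∈ Metric.ball 0 r, ∀ k, ‖iteratedFDeriv ℝ k (f ^ (j + 1)) y‖ ≤ C0 * σ ^ k * M k := by
    intro y hy k
    refine (hb2 y hy k).trans ?_
    have := (p2 k).le
    gcongr
    · exact le_max_right _ _
    · exact hM2M k
  set b := r * σ / 2 with hbdef
  have hb : 0 < b := by positivity
  obtain ⟨L, hL, A, τ, hA, hτ, hfd⟩ := fd_bound hW hreg hmg hM hj hC0 hb
  have wL := hW.2.1 L hL
  refine main_local hL wL.1 wL.2.1 hA hτ (κ := 1 / σ) (r := r / 2) (by positivity) (by positivity) fun K hK => ?_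
  obtain ⟨E0, sK, hE0, hsK, -, H⟩ := hfd K hK
  refine ⟨E0, sK, hE0, hsK, fun x hx v hv s hs hss => ?_⟩
  have hin : ∀ s : ℝ, |s| ≤ b → x + s • v ∈ Metric.ball (0 : EuclideanSpace ℝ (Fin d)) r := by
    intro s hs
    rw [mem_ball_zero_iff] at hx ⊢
    have h3 := norm_add_le x (s • v)
    have h4 : ‖s • v‖ ≤ r / 2 := by
      rw [norm_smul, Real.norm_eq_abs]
      calc |s| * ‖v‖ ≤ b * (1 / σ) := by gcongr
        _ = r / 2 := by rw [hbdef]; field_simp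
    linarith
  exact H (fun s => f (x + s • v)) _ _
    (TD_of_bound Metric.isOpen_ball c1 (fun k => (pM k).le) (by linarith) hσ hb.le B1 hv hin)
    (TD_of_bound Metric.isOpen_ball c2 (fun k => (pM k).le) (by linarith) hσ hb.le B2 hv hin) s hs hss
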